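/- Let F ⊆ ℝ² be a non-empty bounded set. Then dim_A D_x(F) ≥ min{dim_A F, 1} for all x ∈ ℝ² outside a set of exceptions of Hausdorff dimension at most 1. Consequently, if dim_H F > 1, then there exists x ∈ F such that dim_A D_x(F) = 1. -/

import Mathlib

open Metric MeasureTheory Filter Set
open scoped ENNReal NNReal Pointwise Topology

noncomputable section

/-- The Assouad dimension of a subset of a (pseudo)metric space: the infimum of all
`α ≥ 0` for which there is `C > 0` such that for every `x ∈ E` and all scales `0 < r < R`,
the set `E ∩ B(x,R)` can be covered by at most `C (R/r)^α` sets of diameter at most `r`. -/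
def assouadDim {X : Type*} [PseudoMetricSpace X] (E : Set X) : ℝ :=
  sInf {α : ℝ | 0 ≤ α ∧ ∃ C : ℝ, 0 < C ∧ ∀ x ∈ E, ∀ r R : ℝ, 0 < r → r < R →
    ∃ 𝒰 : Finset (Set X), (E ∩ closedBall x R ⊆ ⋃ U ∈ 𝒰, U) ∧
      (∀ U ∈ 𝒰, EMetric.diam U ≤ ENNReal.ofReal r) ∧
      ((𝒰.card : ℝ) ≤ C * (R / r) ^ α)}

/-- Euclidean space `ℝⁿ`. -/
abbrev Euc (n : ℕ) := EuclideanSpace ℝ (Fin n)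

/-- The pinned distance set `D_x(F) = {|x - y| : y ∈ F}`. -/
def pinnedDistSet {n : ℕ} (x : Euc n) (F : Set (Euc n)) : Set ℝ :=
  {d : ℝ | ∃ y ∈ F, d = dist x y}

section FinitePartitions

open scoped Classical in
/-- The cell of `x` in the partition of `Ω` into level sets of `f`. -/
def cellOf {Ω β : Type*} [Fintype Ω] (f : Ω → β) (x : Ω) : Finset Ω :=
  Finset.univ.filter fun y => f y = f x

/-- The sum over all points of the logarithm of the cardinality of their cell. -/
def logMass {Ω β : Type*} [Fintype Ω] (f : Ω → β) : ℝ :=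
  ∑ x, Real.log (cellOf f x).card

/-- The partition given by `g` is finer than the one given by `f`. -/
def Refines {Ω β γ : Type*} (g : Ω → γ) (f : Ω → β) : Prop :=
  ∀ x y, g x = g y → f x = f y

variable {Ω β γ ι : Type*} [Fintype Ω]

theorem mem_cellOf {f : Ω → β} {x y : Ω} : y ∈ cellOf f x ↔ f y = f x := by
  simp [cellOf]

theorem self_mem_cellOf (f : Ω → β) (x : Ω) : x ∈ cellOf f x := mem_cellOf.2 rfl

theorem cellOf_card_pos (f : Ω → β) (x : Ω) : (0 : ℝ) < (cellOf f x).card :=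
  Nat.cast_pos.2 (Finset.card_pos.2 ⟨x, self_mem_cellOf f x⟩)

theorem one_le_cellOf_card (f : Ω → β) (x : Ω) : (1 : ℝ) ≤ (cellOf f x).card :=
  Nat.one_le_cast.2 (Finset.card_pos.2 ⟨x, self_mem_cellOf f x⟩)

theorem cellOf_congr {f : Ω → β} {x y : Ω} (h : f y = f x) : cellOf f y = cellOf f x := by
  ext z; simp [mem_cellOf, h]

theorem Refines.cellOf_subset {g : Ω → γ} {f : Ω → β} (h : Refines g f) (x : Ω) :
    cellOf g x ⊆ cellOf f x := fun _ hy => mem_cellOf.2 (h _ _ (mem_cellOf.1 hy))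

theorem logMass_nonneg (f : Ω → β) : 0 ≤ logMass f :=
  Finset.sum_nonneg fun x _ => Real.log_nonneg (one_le_cellOf_card f x)

theorem Refines.logMass_le {g : Ω → γ} {f : Ω → β} (h : Refines g f) :
    logMass g ≤ logMass f :=
  Finset.sum_le_sum fun x _ => Real.log_le_log (cellOf_card_pos g x)
    (by exact_mod_cast Finset.card_le_card (h.cellOf_subset x))

/-- Averaging a function over the cells of a partition preserves its total sum. -/
theorem sum_cell_average (f : Ω → β) (h : Ω → ℝ) :
    ∑ x, (∑ y ∈ cellOf f x, h y) / (cellOf f x).card = ∑ y, h y := by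
  classical
  have h1 : ∀ x, (∑ y ∈ cellOf f x, h y) / (cellOf f x).card
      = ∑ y, if f y = f x then h y / (cellOf f y).card else 0 := by
    intro x
    rw [Finset.sum_div, ← Finset.sum_filter]
    have : Finset.univ.filter (fun y => f y = f x) = cellOf f x := by
      ext; simp [mem_cellOf]
    rw [this]
    refine Finset.sum_congr rfl fun y hy => ?_
    rw [cellOf_congr (mem_cellOf.1 hy)]
  simp_rw [h1]
  rw [Finset.sum_comm]
  refine Finset.sum_congr rfl fun y _ => ?_
  rw [← Finset.sum_filter]
  have : Finset.univ.filter (fun x => f y = f x) = cellOf f y := by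
    ext; simp [mem_cellOf, eq_comm]
  rw [this, Finset.sum_const, nsmul_eq_mul]
  field_simp [(cellOf_card_pos f y).ne']

/-- Two sums with comparable averages over every cell compare. -/
theorem sum_le_sum_of_cells (f : Ω → β) (h k : Ω → ℝ)
    (H : ∀ x, ∑ y ∈ cellOf f x, h y ≤ ∑ y ∈ cellOf f x, k y) : ∑ y, h y ≤ ∑ y, k y := by
  rw [← sum_cell_average f h, ← sum_cell_average f k]
  exact Finset.sum_le_sum fun x _ =>
    div_le_div_of_nonneg_right (H x) (cellOf_card_pos f x).le

/-- Submodularity of the entropy of partitions. -/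
theorem logMass_submodular {α : Type*} {f : Ω → α} {g : Ω → β} {h : Ω → γ}
    (hf : Refines f h) (hg : Refines g h) :
    logMass f + logMass g ≤ logMass (fun x => (f x, g x)) + logMass h := by
  classical
  set k : Ω → α × β := fun x => (f x, g x) with hk
  set Q : Ω → ℝ := fun x => ((cellOf f x).card : ℝ) * (cellOf g x).card /
    ((cellOf k x).card * (cellOf h x).card) with hQ
  have hlog : ∀ x, Real.log (cellOf f x).card + Real.log (cellOf g x).card
      - Real.log (cellOf k x).card - Real.log (cellOf h x).card ≤ Q x - 1 := by
    intro x
    have a := cellOf_card_pos f x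
    have b := cellOf_card_pos g x
    have c := cellOf_card_pos k x
    have d := cellOf_card_pos h x
    have := Real.log_le_sub_one_of_pos (x := Q x) (by positivity)
    rw [hQ] at this
    simp only at this
    rw [Real.log_div (by positivity) (by positivity), Real.log_mul a.ne' b.ne',
      Real.log_mul c.ne' d.ne'] at this
    simp only [hQ]
    linarith
  have hsum : ∑ x, Q x ≤ ∑ _x : Ω, (1 : ℝ) := by
    have e1 : ∀ x, Q x = ∑ y, ∑ z, if f y = f x ∧ g z = g x then
        1 / ((cellOf k x).card * (cellOf h x).card : ℝ) else 0 := by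
      intro x
      have : ∀ y, (∑ z, if f y = f x ∧ g z = g x then
          1 / ((cellOf k x).card * (cellOf h x).card : ℝ) else 0)
          = if f y = f x then (cellOf g x).card *
            (1 / ((cellOf k x).card * (cellOf h x).card : ℝ)) else 0 := by
        intro y
        by_cases hy : f y = f x
        · simp only [hy, true_and, if_true]
          rw [← Finset.sum_filter, Finset.sum_const, nsmul_eq_mul]
          rfl
        · simp [hy]
      simp_rw [this]
      rw [← Finset.sum_filter, Finset.sum_const, nsmul_eq_mul]
      change _ = ((cellOf f x).card : ℝ) * _
      simp only [hQ]; ring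
    simp_rw [e1]
    rw [Finset.sum_comm]
    have e2 : ∀ y, ∑ x, ∑ z, (if f y = f x ∧ g z = g x then
        1 / ((cellOf k x).card * (cellOf h x).card : ℝ) else 0)
        ≤ 1 := by
      intro y
      rw [Finset.sum_comm]
      have e3 : ∀ z, ∑ x, (if f y = f x ∧ g z = g x then
        1 / ((cellOf k x).card * (cellOf h x).card : ℝ) else 0) ≤
          if h z = h y then 1 / ((cellOf h y).card : ℝ) else 0 := by
        intro z
        rw [← Finset.sum_filter]
        by_cases hne : ∃ x, f y = f x ∧ g z = g x
        · obtain ⟨x₀, h1, h2⟩ := hne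
          have hy := hf _ _ h1
          have hz := hg _ _ h2
          have hs : Finset.univ.filter (fun x => f y = f x ∧ g z = g x) = cellOf k x₀ := by
            ext x; simp [mem_cellOf, hk, h1, h2, eq_comm]
          rw [hs, if_pos (hz.trans hy.symm)]
          rw [Finset.sum_congr rfl (g := fun _ =>
            1 / ((cellOf k x₀).card * (cellOf h y).card : ℝ))]
          · rw [Finset.sum_const, nsmul_eq_mul]
            have := cellOf_card_pos k x₀
            have := cellOf_card_pos h y
            apply le_of_eq
            field_simp
          · intro x hx
            have hx' := mem_cellOf.1 hx
            rw [cellOf_congr hx']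
            have : h x = h y := by
              rw [hy]; exact hf _ _ (by simpa [hk] using congrArg Prod.fst hx')
            rw [cellOf_congr this]
        · have hs : Finset.univ.filter (fun x => f y = f x ∧ g z = g x) = ∅ := by
            rw [Finset.filter_eq_empty_iff]
            intro x _ hx
            exact hne ⟨x, hx⟩
          rw [hs, Finset.sum_empty]
          split_ifs <;> positivity
      refine (Finset.sum_le_sum fun z _ => e3 z).trans ?_
      rw [← Finset.sum_filter, Finset.sum_const, nsmul_eq_mul]
      change ((cellOf h y).card : ℝ) * _ ≤ 1
      have := cellOf_card_pos h y
      apply le_of_eq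
      field_simp
    exact Finset.sum_le_sum fun y _ => e2 y
  have := Finset.sum_le_sum fun x (_ : x ∈ (Finset.univ : Finset Ω)) => hlog x
  simp only [Finset.sum_sub_distrib, Finset.sum_add_distrib] at this
  simp only [logMass]
  linarith

/-- Gibbs' inequality on a finite set with weights `1 / (|cell| * K)`. -/
theorem sum_log_ratio_le (g : Ω → γ) (q : Finset Ω) (K : Ω → ℝ) (hK : ∀ x, 0 < K x)
    (hsum : ∑ x ∈ q, 1 / ((cellOf g x).card * K x) ≤ 1) :
    ∑ x ∈ q, Real.log (q.card / (cellOf g x).card) ≤ ∑ x ∈ q, Real.log (K x) := by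
  rcases q.eq_empty_or_nonempty with rfl | hq
  · simp
  have hqc : (0 : ℝ) < q.card := Nat.cast_pos.2 hq.card_pos
  have h1 : ∀ x ∈ q, Real.log (q.card / (cellOf g x).card) - Real.log (K x)
      ≤ q.card * (1 / ((cellOf g x).card * K x)) - 1 := by
    intro x _
    have a := cellOf_card_pos g x
    have b := hK x
    rw [← Real.log_div (by positivity) b.ne']
    have := Real.log_le_sub_one_of_pos (x := (q.card : ℝ) / (cellOf g x).card / K x)
      (by positivity)
    convert this using 2
    field_simp
  have h2 := Finset.sum_le_sum h1
  rw [Finset.sum_sub_distrib, Finset.sum_sub_distrib, ← Finset.mul_sum, Finset.sum_const,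
    nsmul_eq_mul, mul_one] at h2
  nlinarith

theorem sum_inv_cellOf_le [DecidableEq γ] (g : Ω → γ) (S : Finset Ω) :
    ∑ x ∈ S, 1 / ((cellOf g x).card : ℝ) ≤ (S.image g).card := by
  rw [← Finset.sum_fiberwise_of_maps_to (t := S.image g) (g := g)
    (fun x hx => Finset.mem_image_of_mem g hx)]
  have : ∀ c ∈ S.image g, ∑ x ∈ S.filter (fun x => g x = c),
      1 / ((cellOf g x).card : ℝ) ≤ 1 := by
    intro c hc
    obtain ⟨x₀, _, rfl⟩ := Finset.mem_image.1 hc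
    have hpos := cellOf_card_pos g x₀
    rw [Finset.sum_congr rfl (g := fun _ => 1 / ((cellOf g x₀).card : ℝ))]
    · rw [Finset.sum_const, nsmul_eq_mul, mul_one_div, div_le_one hpos]
      exact_mod_cast Finset.card_le_card fun x hx =>
        mem_cellOf.2 (Finset.mem_filter.1 hx).2
    · intro x hx
      rw [cellOf_congr (Finset.mem_filter.1 hx).2]
  refine (Finset.sum_le_sum this).trans ?_
  simp

theorem Refines.logMass_sub_eq {g : Ω → γ} {f : Ω → β} :
    logMass f - logMass g = ∑ x, Real.log ((cellOf f x).card / (cellOf g x).card) := by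
  simp only [logMass]
  rw [← Finset.sum_sub_distrib]
  refine Finset.sum_congr rfl fun x _ => ?_
  rw [Real.log_div (cellOf_card_pos f x).ne' (cellOf_card_pos g x).ne']

theorem sum_log_ratio_le_of_card_image [DecidableEq γ] (g : Ω → γ) (q : Finset Ω) (K : ℝ)
    (hK : 0 < K) (h : ((q.image g).card : ℝ) ≤ K) :
    ∑ x ∈ q, Real.log (q.card / (cellOf g x).card) ≤ q.card * Real.log K := by
  refine (sum_log_ratio_le g q (fun _ => K) (fun _ => hK) ?_).trans (by simp)
  have : ∀ x ∈ q, 1 / ((cellOf g x).card * K : ℝ) = (1 / K) * (1 / (cellOf g x).card) := by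
    intro x _; rw [one_div_mul_one_div, mul_comm]
  rw [Finset.sum_congr rfl this, ← Finset.mul_sum, one_div_mul_eq_div, div_le_one hK]
  exact (sum_inv_cellOf_le g q).trans h

theorem logMass_sub_le_of_card_image [DecidableEq γ] (f : Ω → β) (g : Ω → γ) (K : ℝ)
    (hK : 0 < K) (h : ∀ x, (((cellOf f x).image g).card : ℝ) ≤ K) :
    logMass f - logMass g ≤ Fintype.card Ω * Real.log K := by
  rw [Refines.logMass_sub_eq]
  have : (Fintype.card Ω : ℝ) * Real.log K = ∑ _x : Ω, Real.log K := by simp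
  rw [this]
  refine sum_le_sum_of_cells f _ _ fun x => ?_
  rw [Finset.sum_congr rfl (g := fun y => Real.log ((cellOf f x).card / (cellOf g y).card))]
  · refine (sum_log_ratio_le_of_card_image g _ K hK (h x)).trans (by simp)
  · intro y hy
    rw [cellOf_congr (mem_cellOf.1 hy)]

/-- The proportion of the cell of `x` which lies in `U`. -/
def ratio (f : Ω → β) (U : Set Ω) (x : Ω) : ℝ :=
  (∑ y ∈ cellOf f x, U.indicator (fun _ => (1 : ℝ)) y) / (cellOf f x).card

/-- The squared `L²` norm of `ratio f U`. -/
def energy (f : Ω → β) (U : Set Ω) : ℝ := ∑ x, ratio f U x ^ 2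

theorem ratio_congr {f : Ω → β} {U : Set Ω} {x y : Ω} (h : f y = f x) :
    ratio f U y = ratio f U x := by
  simp [ratio, cellOf_congr h]

theorem ratio_nonneg (f : Ω → β) (U : Set Ω) (x : Ω) : 0 ≤ ratio f U x :=
  div_nonneg (Finset.sum_nonneg fun _ _ => indicator_nonneg (fun _ _ => zero_le_one) _)
    (Nat.cast_nonneg _)

theorem ratio_le_one (f : Ω → β) (U : Set Ω) (x : Ω) : ratio f U x ≤ 1 := by
  rw [ratio, div_le_one (cellOf_card_pos f x)]
  refine (Finset.sum_le_sum (g := fun _ => (1 : ℝ)) fun y _ => ?_).trans (by simp)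
  exact indicator_le_self' (fun _ _ => zero_le_one) y

theorem energy_nonneg (f : Ω → β) (U : Set Ω) : 0 ≤ energy f U :=
  Finset.sum_nonneg fun _ _ => sq_nonneg _

theorem energy_le (f : Ω → β) (U : Set Ω) : energy f U ≤ Fintype.card Ω := by
  refine (Finset.sum_le_sum (g := fun _ => (1 : ℝ)) fun x _ => ?_).trans (by simp)
  exact pow_le_one₀ (ratio_nonneg f U x) (ratio_le_one f U x)

theorem sum_mul_ratio (f : Ω → β) (U : Set Ω) (φ : Ω → ℝ)
    (hφ : ∀ x y, f x = f y → φ x = φ y) :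
    ∑ x, φ x * ratio f U x = ∑ x, φ x * U.indicator (fun _ => (1 : ℝ)) x := by
  rw [← sum_cell_average f fun x => φ x * U.indicator (fun _ => (1 : ℝ)) x]
  refine Finset.sum_congr rfl fun x _ => ?_
  rw [ratio, ← mul_div_assoc, Finset.mul_sum]
  congr 1
  refine Finset.sum_congr rfl fun y hy => ?_
  rw [hφ y x (mem_cellOf.1 hy)]

theorem Refines.sum_sq_ratio_sub {g : Ω → γ} {f : Ω → β} (h : Refines g f) (U : Set Ω) :
    ∑ x, (ratio g U x - ratio f U x) ^ 2 = energy g U - energy f U := by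
  have h1 := sum_mul_ratio g U (ratio f U) fun x y hxy => ratio_congr (h _ _ hxy)
  have h2 := sum_mul_ratio f U (ratio f U) fun x y hxy => ratio_congr hxy
  have h3 : ∑ x, (ratio g U x - ratio f U x) ^ 2
      = energy g U - 2 * ∑ x, ratio f U x * ratio g U x + energy f U := by
    simp only [energy]
    rw [Finset.mul_sum, ← Finset.sum_sub_distrib, ← Finset.sum_add_distrib]
    exact Finset.sum_congr rfl fun x _ => by ring
  have h4 : energy f U = ∑ x, ratio f U x * ratio f U x := by
    simp only [energy, sq]
  linarith

/-- If the cells of `f` meet few cells of `g`, then few points of `G` lie in cells of the join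
which contain a small proportion of `G`. -/
theorem card_filter_small_join_le [DecidableEq γ] [DecidableEq Ω] (f : Ω → β) (g : Ω → γ)
    (G : Finset Ω) (K : ℕ)
    (σ : ℝ) (hσ : 0 ≤ σ) (hK : ∀ x, ((cellOf f x).image g).card ≤ K) (S : Finset Ω)
    (hSG : S ⊆ G)
    (hS : ∀ x ∈ S, ((cellOf (fun y => (f y, g y)) x ∩ G).card : ℝ) ≤ σ * (cellOf f x).card) :
    (S.card : ℝ) ≤ K * σ * Fintype.card Ω := by
  have e1 : (S.card : ℝ) = ∑ x, if x ∈ S then (1 : ℝ) else 0 := by simp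
  have e2 : K * σ * Fintype.card Ω = ∑ _x : Ω, (K * σ : ℝ) := by simp [mul_comm]
  rw [e1, e2]
  refine sum_le_sum_of_cells f _ _ fun x => ?_
  rw [← Finset.sum_filter, Finset.sum_const, Finset.sum_const, nsmul_eq_mul, nsmul_eq_mul,
    mul_one]
  set T := (cellOf f x).filter (· ∈ S)
  have hT : T.card ≤ ∑ c ∈ (cellOf f x).image g, (T.filter fun y => g y = c).card :=
    (Finset.card_eq_sum_card_fiberwise fun y hy =>
      Finset.mem_image_of_mem g (Finset.mem_filter.1 hy).1).le
  have hfib : ∀ c ∈ (cellOf f x).image g, ((T.filter fun y => g y = c).card : ℝ)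
      ≤ σ * (cellOf f x).card := by
    intro c _
    rcases (T.filter fun y => g y = c).eq_empty_or_nonempty with h0 | ⟨z, hz⟩
    · rw [h0]; simp; positivity
    · simp only [T, Finset.mem_filter] at hz
      obtain ⟨⟨hz1, hz2⟩, hz3⟩ := hz
      have := hS z hz2
      rw [cellOf_congr (mem_cellOf.1 hz1)] at this
      refine le_trans ?_ this
      norm_cast
      refine Finset.card_le_card fun y hy => ?_
      simp only [T, Finset.mem_filter] at hy
      refine Finset.mem_inter.2 ⟨mem_cellOf.2 ?_, hSG hy.1.2⟩
      rw [Prod.mk.injEq]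
      exact ⟨(mem_cellOf.1 hy.1.1).trans (mem_cellOf.1 hz1).symm, hy.2.trans hz3.symm⟩
  calc (T.card : ℝ) ≤ ∑ c ∈ (cellOf f x).image g, ((T.filter fun y => g y = c).card : ℝ) := by
        exact_mod_cast hT
    _ ≤ ∑ _c ∈ (cellOf f x).image g, σ * (cellOf f x).card := Finset.sum_le_sum hfib
    _ = ((cellOf f x).image g).card * (σ * (cellOf f x).card) := by simp
    _ ≤ K * (σ * (cellOf f x).card) := by
        have : (((cellOf f x).image g).card : ℝ) ≤ K := by exact_mod_cast hK x
        gcongr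
    _ = _ := by ring

/-- Markov's inequality for cell averages. -/
theorem card_filter_large_average_le (f : Ω → β) (D : Ω → ℝ) (hD : ∀ x, 0 ≤ D x) (η : ℝ)
    (S : Finset Ω) (hS : ∀ x ∈ S, η * (cellOf f x).card ≤ ∑ y ∈ cellOf f x, D y) :
    η * S.card ≤ ∑ x, D x := by
  rw [← sum_cell_average f D, mul_comm, ← nsmul_eq_mul, ← Finset.sum_const]
  calc ∑ _x ∈ S, η ≤ ∑ x ∈ S, (∑ y ∈ cellOf f x, D y) / (cellOf f x).card :=
        Finset.sum_le_sum fun x hx => (le_div_iff₀ (cellOf_card_pos f x)).2 (hS x hx)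
    _ ≤ _ := Finset.sum_le_sum_of_subset_of_nonneg (Finset.subset_univ _) fun x _ _ =>
        div_nonneg (Finset.sum_nonneg fun y _ => hD y) (Nat.cast_nonneg _)

end FinitePartitions

section LocalComparison

variable {Ω : Type*}

/-- The number of points of `Q` whose `A`-coordinate, on the grid of mesh `1 / B`, lies in
`[u₁, u₂)`. -/
def gridCount (B : ℕ) (A : Ω → ℝ) (Q : Finset Ω) (u₁ u₂ : ℤ) : ℝ :=
  ((Q.filter fun x => (u₁ : ℝ) ≤ B * A x ∧ B * A x < u₂).card : ℝ)

/-- Comparison data for two pairs of vertical cells seen from two directions. -/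
structure ShiftData (B : ℕ) (A c : Ω → ℝ) (Q₁ Q₂ Q₁' Q₂' : Finset Ω) (G' G : ℤ)
    (c₁ c₂ δ ε H : ℝ) : Prop where
  two_le : 2 ≤ B
  nonneg : 0 ≤ G'
  le_B : G ≤ B
  pos₁ : (0 : ℝ) < Q₁.card
  pos₂ : (0 : ℝ) < Q₂.card
  pos₂' : (0 : ℝ) < Q₂'.card
  close : ∀ u v : ℤ, |u| ≤ 4 * B → |v| ≤ 4 * B →
    gridCount B A Q₂ u v / Q₂.card ≤ gridCount B A Q₁ u v / Q₁.card + ε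
  close' : ∀ u v : ℤ, |u| ≤ 4 * B → |v| ≤ 4 * B →
    gridCount B (fun x => A x + c x) Q₁' u v / Q₁'.card
      ≤ gridCount B (fun x => A x + c x) Q₂' u v / Q₂'.card + ε
  mem₁' : ∀ x ∈ Q₁, (G' : ℝ) ≤ B * A x → B * A x < G → x ∈ Q₁'
  mem₂ : ∀ x ∈ Q₂', (G' : ℝ) - 8 * δ * B ≤ B * A x → B * A x ≤ G + 8 * δ * B → x ∈ Q₂
  shift₁ : ∀ x ∈ Q₁, |B * c x - B * c₁| ≤ 1
  shift₂ : ∀ x ∈ Q₂', |B * c x - B * c₂| ≤ 1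
  gap : ∀ x ∈ Q₂, (G : ℝ) ≤ B * A x → G + 8 * δ * B < B * A x
  gap' : ∀ x ∈ Q₂, B * A x < G' → B * A x < G' - 8 * δ * B
  abs_shift_le : |c₁| ≤ 1
  le_abs_sub : 6 ≤ |B * c₁ - B * c₂|
  abs_sub_le : |B * c₁ - B * c₂| ≤ δ * B
  four_le : 4 ≤ δ * B
  eps_nonneg : 0 ≤ ε
  compare : (Q₁'.card : ℝ) * Q₂.card ≤ Q₁.card * Q₂'.card
  card_le : (Q₁'.card : ℝ) ≤ H * Q₁.card

namespace ShiftData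

variable {B : ℕ} {A c : Ω → ℝ} {Q₁ Q₂ Q₁' Q₂' : Finset Ω} {G' G : ℤ} {c₁ c₂ δ ε H : ℝ}

theorem gridCount_le (h : ShiftData B A c Q₁ Q₂ Q₁' Q₂' G' G c₁ c₂ δ ε H) {u v : ℤ}
    (hu : G' ≤ u) (huv : u < v) (hv : v ≤ G) (R : ℝ)
    (hR : ((Q₂.filter fun x => (u : ℝ) + (B * c₁ - B * c₂) - 4 ≤ B * A x ∧
      B * A x < v + (B * c₁ - B * c₂) + 4).card : ℝ) ≤ R) :
    gridCount B A Q₂ u v / Q₂.card ≤ R / Q₂.card + ε * (1 + H) := by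
  have hB : (2 : ℝ) ≤ B := by exact_mod_cast h.two_le
  have hu' : (G' : ℝ) ≤ u := by exact_mod_cast hu
  have hv' : (v : ℝ) ≤ G := by exact_mod_cast hv
  have h0 := h.nonneg
  have hGB := h.le_B
  have hB2 : (2 : ℤ) ≤ B := by exact_mod_cast h.two_le
  set k₁ : ℤ := ⌊B * c₁⌋ with hk₁
  have hf1 : (k₁ : ℝ) ≤ B * c₁ := Int.floor_le _
  have hf2 : B * c₁ < k₁ + 1 := Int.lt_floor_add_one _
  have hc := abs_le.1 h.abs_shift_le
  have hk₁l : -(B : ℤ) ≤ k₁ := by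
    rw [hk₁, Int.le_floor]; push_cast; nlinarith [hc.1]
  have hk₁u : k₁ ≤ B := by
    have : (k₁ : ℝ) ≤ (B : ℤ) := by push_cast; nlinarith [hc.2]
    exact_mod_cast this
  set u' : ℤ := u - 1 + k₁
  set v' : ℤ := v + 2 + k₁
  have s1 : gridCount B A Q₁ u v ≤ gridCount B (fun x => A x + c x) Q₁' u' v' := by
    unfold gridCount
    norm_cast
    refine Finset.card_le_card fun x hx => ?_
    obtain ⟨hxQ, hx1, hx2⟩ := Finset.mem_filter.1 hx
    have hs := abs_le.1 (h.shift₁ x hxQ)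
    refine Finset.mem_filter.2 ⟨h.mem₁' x hxQ (hu'.trans hx1) (hx2.trans_le hv'), ?_, ?_⟩
    · simp only [u']; push_cast; rw [mul_add]; linarith
    · simp only [v']; push_cast; rw [mul_add]; linarith
  have s2 : gridCount B (fun x => A x + c x) Q₂' u' v' ≤ R := by
    refine le_trans ?_ hR
    unfold gridCount
    norm_cast
    refine Finset.card_le_card fun x hx => ?_
    obtain ⟨hxQ, hx1, hx2⟩ := Finset.mem_filter.1 hx
    have hs := abs_le.1 (h.shift₂ x hxQ)
    simp only [u', v'] at hx1 hx2
    push_cast at hx1 hx2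
    rw [mul_add] at hx1 hx2
    have hz := abs_le.1 h.abs_sub_le
    have h4 := h.four_le
    refine Finset.mem_filter.2 ⟨h.mem₂ x hxQ ?_ ?_, ?_, ?_⟩ <;> linarith
  have s3 := h.close u v (by rw [abs_le]; constructor <;> omega)
    (by rw [abs_le]; constructor <;> omega)
  have s4 := h.close' u' v' (by rw [abs_le]; constructor <;> omega)
    (by rw [abs_le]; constructor <;> omega)
  have p1 := h.pos₁
  have p2 := h.pos₂
  have p2' := h.pos₂'
  have hR0 : 0 ≤ R := le_trans (Nat.cast_nonneg _) hR
  have hε := h.eps_nonneg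
  have s5 : gridCount B A Q₁ u v ≤ Q₁'.card * (R / Q₂'.card + ε) := by
    refine s1.trans ?_
    rcases Nat.eq_zero_or_pos Q₁'.card with hz | hz
    · have : gridCount B (fun x => A x + c x) Q₁' u' v' = 0 := by
        unfold gridCount; rw [Finset.card_eq_zero.1 hz]; simp
      rw [this, hz]; simp
    · have hz' : (0 : ℝ) < Q₁'.card := Nat.cast_pos.2 hz
      rw [div_le_iff₀ hz'] at s4
      refine s4.trans ?_
      rw [mul_comm]
      gcongr
  have s6 : (Q₁'.card : ℝ) * (R / Q₂'.card) ≤ Q₁.card * (R / Q₂.card) := by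
    rw [← mul_div_assoc, ← mul_div_assoc, div_le_div_iff₀ p2' p2]
    nlinarith [h.compare]
  have s7 : gridCount B A Q₁ u v / Q₁.card ≤ R / Q₂.card + ε * H := by
    rw [div_le_iff₀ p1]
    nlinarith [h.card_le]
  linarith

theorem gridCount_le_mul (h : ShiftData B A c Q₁ Q₂ Q₁' Q₂' G' G c₁ c₂ δ ε H)
    (hH : 0 ≤ H) :
    gridCount B A Q₂ G' G / Q₂.card ≤ B * (ε * (1 + H)) := by
  have hε := h.eps_nonneg
  have h0 := h.nonneg
  have hGB := h.le_B
  have hz := abs_le.1 h.abs_sub_le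
  have h4 := h.four_le
  have p2 := h.pos₂
  have hE : 0 ≤ ε * (1 + H) := by positivity
  have hnn : ∀ u v : ℤ, v ≤ u → gridCount B A Q₂ u v = 0 := by
    intro u v huv
    unfold gridCount
    rw [Nat.cast_eq_zero, Finset.card_eq_zero, Finset.filter_eq_empty_iff]
    rintro x _ ⟨h1, h2⟩
    have : (v : ℝ) ≤ u := by exact_mod_cast huv
    linarith
  suffices hk : ∀ k : ℕ, (k : ℤ) ≤ G - G' →
      gridCount B A Q₂ (G - k) G / Q₂.card ≤ k * (ε * (1 + H)) ∨
      gridCount B A Q₂ G' (G' + k) / Q₂.card ≤ k * (ε * (1 + H)) by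
    rcases le_or_gt G G' with hG | hG
    · rw [hnn _ _ hG]; simp; positivity
    · have hcast : (((G - G').toNat : ℕ) : ℤ) = G - G' := Int.toNat_of_nonneg (by omega)
      have := hk (G - G').toNat hcast.le
      rw [hcast] at this
      simp only [sub_sub_cancel, add_sub_cancel, or_self] at this
      refine this.trans (mul_le_mul_of_nonneg_right ?_ hE)
      have : (G - G').toNat ≤ B := by omega
      exact_mod_cast this
  rcases le_abs.1 h.le_abs_sub with hpos | hneg
  · intro k hkG
    left
    induction k with
    | zero => rw [hnn _ _ (by simp)]; simp
    | succ k ih =>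
      have ih := ih (by push_cast at hkG; omega)
      push_cast at hkG
      refine (h.gridCount_le (u := G - (k + 1 : ℕ)) (v := G) (by push_cast; omega)
        (by push_cast; omega) le_rfl (gridCount B A Q₂ (G - k) G) ?_).trans ?_
      · unfold gridCount
        norm_cast
        refine Finset.card_le_card fun x hx => ?_
        obtain ⟨hxQ, hx1, hx2⟩ := Finset.mem_filter.1 hx
        push_cast at hx1 hx2
        refine Finset.mem_filter.2 ⟨hxQ, by push_cast; linarith, ?_⟩
        by_contra hcon
        have := h.gap x hxQ (not_lt.1 hcon)
        linarith
      · push_cast; linarith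
  · intro k hkG
    right
    induction k with
    | zero => rw [hnn _ _ (by simp)]; simp
    | succ k ih =>
      have ih := ih (by push_cast at hkG; omega)
      push_cast at hkG
      refine (h.gridCount_le (u := G') (v := G' + (k + 1 : ℕ)) le_rfl
        (by push_cast; omega) (by push_cast; omega) (gridCount B A Q₂ G' (G' + k)) ?_).trans ?_
      · unfold gridCount
        norm_cast
        refine Finset.card_le_card fun x hx => ?_
        obtain ⟨hxQ, hx1, hx2⟩ := Finset.mem_filter.1 hx
        push_cast at hx1 hx2
        refine Finset.mem_filter.2 ⟨hxQ, ?_, by push_cast; linarith⟩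
        by_contra hcon
        have := h.gap' x hxQ (not_le.1 hcon)
        linarith
      · push_cast; linarith

end ShiftData

end LocalComparison

section LocalContradiction

variable {Ω : Type*}

/-- The partition into unit cells of the coordinates `a`, `b`. -/
def coarse (a b : Ω → ℝ) (x : Ω) : ℤ × ℤ := (⌊a x⌋, ⌊b x⌋)

/-- The partition into cells of height one in `a` and width `T⁻³` in `b`. -/
def fine (T : ℕ) (a b : Ω → ℝ) (x : Ω) : ℤ × ℤ := (⌊a x⌋, ⌊(T : ℝ) ^ 3 * b x⌋)

theorem floor_eq_floor_of_mul {T : ℕ} {m : ℕ} (hT : 0 < T) {s t : ℝ}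
    (h : ⌊(T : ℝ) ^ m * s⌋ = ⌊(T : ℝ) ^ m * t⌋) : ⌊s⌋ = ⌊t⌋ := by
  have key : ∀ u : ℝ, ⌊u⌋ = ⌊(T : ℝ) ^ m * u⌋ / ((T ^ m : ℕ) : ℤ) := by
    intro u
    have hpos : (0 : ℝ) < (T : ℝ) ^ m := by positivity
    have := Int.floor_div_natCast ((T : ℝ) ^ m * u) (T ^ m)
    push_cast at this
    rw [mul_div_cancel_left₀ _ hpos.ne'] at this
    rw [this]; push_cast; rfl
  rw [key s, key t, h]

theorem fine_refines_coarse {T : ℕ} (hT : 0 < T) (a b : Ω → ℝ) :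
    Refines (fine T a b) (coarse a b) := by
  intro x y h
  simp only [fine, coarse, Prod.mk.injEq] at h ⊢
  exact ⟨h.1, floor_eq_floor_of_mul hT h.2⟩

/-- The set of points whose fractional part of `a` lies in `[c.1 / B, c.2 / B)`. -/
def slab (B : ℕ) (a : Ω → ℝ) (c : ℤ × ℤ) : Set Ω :=
  {x | (c.1 : ℝ) ≤ B * Int.fract (a x) ∧ B * Int.fract (a x) < c.2}

/-- The indices of the slabs used to compare the distributions of `a` on cells. -/
def gridPairs (B : ℕ) : Finset (ℤ × ℤ) :=
  Finset.Icc (-(4 * B : ℤ)) (4 * B) ×ˢ Finset.Icc (-(4 * B : ℤ)) (4 * B)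

theorem mem_gridPairs {B : ℕ} {u v : ℤ} (hu : |u| ≤ 4 * B) (hv : |v| ≤ 4 * B) :
    (u, v) ∈ gridPairs B := by
  simp only [gridPairs, Finset.mem_product, Finset.mem_Icc]
  exact ⟨abs_le.1 hu, abs_le.1 hv⟩

variable [Fintype Ω]

/-- The squared deviation of the distribution of `a` on a fine cell from that on the coarse
cell. -/
def defect (T : ℕ) (a b : Ω → ℝ) (x : Ω) : ℝ :=
  ∑ c ∈ gridPairs (T ^ 4),
    (ratio (fine T a b) (slab (T ^ 4) a c) x - ratio (coarse a b) (slab (T ^ 4) a c) x) ^ 2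

theorem defect_nonneg (T : ℕ) (a b : Ω → ℝ) (x : Ω) : 0 ≤ defect T a b x :=
  Finset.sum_nonneg fun _ _ => sq_nonneg _

theorem sq_ratio_sub_le_of_defect {T : ℕ} (hT : 0 < T) {a b : Ω → ℝ} {x : Ω} {η lam : ℝ}
    (hdef : ∑ y ∈ cellOf (coarse a b) x, defect T a b y ≤ η * (cellOf (coarse a b) x).card)
    (hbig : lam * (cellOf (coarse a b) x).card ≤ (cellOf (fine T a b) x).card)
    {c : ℤ × ℤ} (hc : c ∈ gridPairs (T ^ 4)) :
    lam * (ratio (fine T a b) (slab (T ^ 4) a c) x -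
      ratio (coarse a b) (slab (T ^ 4) a c) x) ^ 2 ≤ η := by
  set d := (ratio (fine T a b) (slab (T ^ 4) a c) x -
      ratio (coarse a b) (slab (T ^ 4) a c) x) ^ 2 with hd
  have hq := cellOf_card_pos (coarse a b) x
  have h1 : (cellOf (fine T a b) x).card * d ≤ ∑ y ∈ cellOf (fine T a b) x, defect T a b y := by
    rw [← nsmul_eq_mul, ← Finset.sum_const]
    refine Finset.sum_le_sum fun y hy => ?_
    have hy' := mem_cellOf.1 hy
    have : d = (ratio (fine T a b) (slab (T ^ 4) a c) y -
      ratio (coarse a b) (slab (T ^ 4) a c) y) ^ 2 := by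
      rw [hd, ratio_congr hy', ratio_congr (fine_refines_coarse hT a b _ _ hy')]
    rw [this]
    exact Finset.single_le_sum (f := fun c => (ratio (fine T a b) (slab (T ^ 4) a c) y -
      ratio (coarse a b) (slab (T ^ 4) a c) y) ^ 2) (fun _ _ => sq_nonneg _) hc
  have h2 := Finset.sum_le_sum_of_subset_of_nonneg
    ((fine_refines_coarse hT a b).cellOf_subset x) fun y _ _ => defect_nonneg T a b y
  have hd0 : 0 ≤ d := sq_nonneg _
  have : lam * (cellOf (coarse a b) x).card * d ≤ η * (cellOf (coarse a b) x).card :=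
    (mul_le_mul_of_nonneg_right hbig hd0).trans (h1.trans (h2.trans hdef))
  nlinarith

theorem ratio_fine_sub_le {T : ℕ} (hT : 0 < T) {a b : Ω → ℝ} {x y : Ω} {η lam ε : ℝ}
    (hlam : 0 < lam) (hxy : coarse a b y = coarse a b x)
    (hdef : ∑ y ∈ cellOf (coarse a b) x, defect T a b y ≤ η * (cellOf (coarse a b) x).card)
    (hx : lam * (cellOf (coarse a b) x).card ≤ (cellOf (fine T a b) x).card)
    (hy : lam * (cellOf (coarse a b) x).card ≤ (cellOf (fine T a b) y).card)
    (hε : 0 ≤ ε) (hη : 4 * η ≤ ε ^ 2 * lam)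
    {c : ℤ × ℤ} (hc : c ∈ gridPairs (T ^ 4)) :
    ratio (fine T a b) (slab (T ^ 4) a c) x ≤ ratio (fine T a b) (slab (T ^ 4) a c) y + ε := by
  have h1 := sq_ratio_sub_le_of_defect hT hdef hx hc
  have h2 := sq_ratio_sub_le_of_defect (x := y) hT (by rwa [cellOf_congr hxy])
    (by rwa [cellOf_congr hxy]) hc
  rw [ratio_congr hxy] at h2
  set r := ratio (coarse a b) (slab (T ^ 4) a c) x
  set r₁ := ratio (fine T a b) (slab (T ^ 4) a c) x
  set r₂ := ratio (fine T a b) (slab (T ^ 4) a c) y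
  have hsq : ∀ d : ℝ, lam * d ^ 2 ≤ η → d ^ 2 ≤ (ε / 2) ^ 2 := fun d hd =>
    le_of_mul_le_mul_left (by linarith : lam * d ^ 2 ≤ lam * (ε / 2) ^ 2) hlam
  have k1 : |r₁ - r| ≤ ε / 2 := abs_le_of_sq_le_sq (hsq _ (by assumption)) (by positivity)
  have k2 : |r₂ - r| ≤ ε / 2 := abs_le_of_sq_le_sq (hsq _ (by assumption)) (by positivity)
  have := abs_le.1 k1
  have := abs_le.1 k2
  linarith

theorem ratio_fine_eq_gridCount (T : ℕ) (a b : Ω → ℝ) (x : Ω) (A : Ω → ℝ) (k : ℤ)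
    (hk : ⌊a x⌋ = k) (hA : ∀ y, A y = a y - k) (u v : ℤ) :
    ratio (fine T a b) (slab (T ^ 4) a (u, v)) x =
      gridCount (T ^ 4) A (cellOf (fine T a b) x) u v / (cellOf (fine T a b) x).card := by
  classical
  unfold ratio gridCount
  congr 1
  rw [Finset.card_filter]
  push_cast
  refine Finset.sum_congr rfl fun y hy => ?_
  have hy' : ⌊a y⌋ = k := by
    rw [← hk]; exact congrArg Prod.fst (mem_cellOf.1 hy)
  have : A y = Int.fract (a y) := by rw [hA, Int.fract, hy']
  simp only [slab, indicator, mem_ofPred_eq, this]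
  push_cast
  rfl

set_option maxHeartbeats 1600000 in
/-- Two directions at a critical distance cannot both be regular at a scale where one of them
has nontrivial branching. -/
theorem local_contradiction {T : ℕ} (hT : 16 ≤ T) {a a' b : Ω → ℝ} {ζ κ₀ τ w₀ σ η ε : ℝ}
    (ha' : ∀ x, a' x = a x + ζ * b x + κ₀)
    (hζ : |ζ| ≤ 1 / T) (hζ' : 1 / (T : ℝ) ^ 2 ≤ |ζ|) (hw : 16 / T ≤ w₀)
    (hgap : ∀ s : ℝ, ∃ g, s ≤ g ∧ g + w₀ ≤ s + τ / 4 ∧ ∀ x, g ≤ a x → g + w₀ ≤ a x)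
    {X : Ω} {core : Finset Ω} (hX : X ∈ core)
    (hcore : ∀ x ∈ core, coarse a b x = coarse a b X ∧ coarse a' b x = coarse a' b X)
    (hfar : ∀ x ∈ core, τ ≤ Int.fract (a x) ∧ Int.fract (a x) ≤ 1 - τ)
    (hfar' : ∀ x ∈ core, τ ≤ Int.fract (a' x) ∧ Int.fract (a' x) ≤ 1 - τ)
    (hσ : 0 < σ) (hcard : σ * (cellOf (coarse a b) X).card ≤ core.card)
    (hcard' : σ * (cellOf (coarse a' b) X).card ≤ core.card)
    (hdef : ∑ y ∈ cellOf (coarse a b) X, defect T a b y ≤ η * (cellOf (coarse a b) X).card)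
    (hdef' : ∑ y ∈ cellOf (coarse a' b) X, defect T a' b y
      ≤ η * (cellOf (coarse a' b) X).card)
    {x₁ x₂ : Ω} (hx₁ : coarse a b x₁ = coarse a b X) (hx₂ : coarse a b x₂ = coarse a b X)
    (hbig₁ : ((cellOf (coarse a b) X).card : ℝ) ≤ T ^ 4 * (cellOf (fine T a b) x₁).card)
    (hbig₂ : ((cellOf (coarse a b) X).card : ℝ) ≤ T ^ 4 * (cellOf (fine T a b) x₂).card)
    (hsep : 1 / (T : ℝ) ≤ |b x₁ - b x₂|)
    (hε : 0 < ε) (hεσ : ε * 8 * T ^ 8 ≤ σ ^ 2) (hη : 8 * η * T ^ 4 ≤ ε ^ 2 * σ ^ 2) : False := by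
  classical
  have hT0 : 0 < T := by omega
  have hTr : (16 : ℝ) ≤ T := by exact_mod_cast hT
  have hTp : (0 : ℝ) < T := by linarith
  set B : ℕ := T ^ 4 with hB
  have hBr : (B : ℝ) = (T : ℝ) ^ 4 := by simp [hB]
  have hBp : (0 : ℝ) < B := by rw [hBr]; positivity
  have hBT : (B : ℝ) = T * T ^ 3 := by rw [hBr]; ring
  have hT3 : (4096 : ℝ) ≤ (T : ℝ) ^ 3 := by
    have := pow_le_pow_left₀ (by norm_num) hTr 3; norm_num at this ⊢; linarith
  have hT1 : (1 : ℝ) / T * B = T ^ 3 := by rw [hBT]; field_simp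
  have hT8 : (T : ℝ) ^ 8 = B * B := by rw [hBr]; ring
  have hB1 : (1 : ℝ) ≤ B := by rw [hBT]; nlinarith
  set q := cellOf (coarse a b) X
  set q' := cellOf (coarse a' b) X
  have hqp : (0 : ℝ) < q.card := cellOf_card_pos _ _
  have hqp' : (0 : ℝ) < q'.card := cellOf_card_pos _ _
  have hcq : (core.card : ℝ) ≤ q.card := by
    exact_mod_cast Finset.card_le_card fun x hx => mem_cellOf.2 (hcore x hx).1
  have hσ1 : σ ≤ 1 := by
    by_contra hc; nlinarith
  have hε1 : ε ≤ σ / 8 := by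
    have : ε * 8 * 1 ≤ ε * 8 * (T : ℝ) ^ 8 := by
      rw [hT8]; gcongr; nlinarith
    nlinarith
  -- coordinates
  set k := ⌊a X⌋ with hk
  set k' := ⌊a' X⌋ with hk'
  set A : Ω → ℝ := fun x => a x - k with hA
  set c : Ω → ℝ := fun x => ζ * b x + κ₀ + k - k' with hc
  have hAc : ∀ x, A x + c x = a' x - k' := by intro x; simp only [hA, hc, ha']; ring
  have hcoarse : ∀ x, coarse a b x = coarse a b X → ⌊a x⌋ = k ∧ ⌊b x⌋ = ⌊b X⌋ := by
    intro x hx; simpa [coarse, hk] using hx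
  have hcoarse' : ∀ x, coarse a' b x = coarse a' b X → ⌊a' x⌋ = k' ∧ ⌊b x⌋ = ⌊b X⌋ := by
    intro x hx; simpa [coarse, hk'] using hx
  have hcvar : ∀ x y, ⌊b x⌋ = ⌊b y⌋ → |c x - c y| ≤ 1 / T := by
    intro x y h
    have h1 := (Int.abs_sub_lt_one_of_floor_eq_floor h).le
    have : c x - c y = ζ * (b x - b y) := by simp only [hc]; ring
    rw [this, abs_mul]
    calc _ ≤ 1 / (T : ℝ) * 1 := mul_le_mul hζ h1 (abs_nonneg _) (by positivity)
      _ = _ := mul_one _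
  have hcfine : ∀ x y, ⌊(T : ℝ) ^ 3 * b x⌋ = ⌊(T : ℝ) ^ 3 * b y⌋ → |B * c x - B * c y| ≤ 1 := by
    intro x y h
    have h1 := (Int.abs_sub_lt_one_of_floor_eq_floor h).le
    have : B * c x - B * c y = (T * ζ) * (T ^ 3 * b x - T ^ 3 * b y) := by
      simp only [hc, hBT]; ring
    rw [this, abs_mul, abs_mul, abs_of_pos hTp]
    have h2 : T * |ζ| ≤ 1 := by
      calc _ ≤ (T : ℝ) * (1 / T) := by gcongr
        _ = 1 := by field_simp
    calc _ ≤ 1 * (1 : ℝ) := mul_le_mul h2 h1 (abs_nonneg _) (by positivity)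
      _ = 1 := mul_one _
  set c₀ := c X
  have hfX : ∀ x ∈ core, τ ≤ A x ∧ A x ≤ 1 - τ ∧ τ - c₀ - 1 / T ≤ A x ∧
      A x ≤ 1 - τ - c₀ + 1 / T := by
    intro x hx
    obtain ⟨e1, e2⟩ := hcoarse x (hcore x hx).1
    obtain ⟨e3, _⟩ := hcoarse' x (hcore x hx).2
    have f1 := hfar x hx
    have f2 := hfar' x hx
    rw [Int.fract, e1] at f1
    rw [Int.fract, e3, ← hAc] at f2
    have := abs_le.1 (hcvar x X e2)
    refine ⟨f1.1, f1.2, ?_, ?_⟩ <;> linarith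
  set lo := max 0 (-c₀) with hlo
  set hi := min 1 (1 - c₀) with hhi
  have hlo0 : 0 ≤ lo := le_max_left _ _
  have hloc : -c₀ ≤ lo := le_max_right _ _
  have hhi1 : hi ≤ 1 := min_le_left _ _
  have hhic : hi ≤ 1 - c₀ := min_le_right _ _
  have hcorelo : ∀ x ∈ core, lo + τ - 1 / T ≤ A x := by
    intro x hx
    obtain ⟨f1, f2, f3, f4⟩ := hfX x hx
    have : 0 < 1 / (T : ℝ) := by positivity
    rcases max_cases 0 (-c₀) with ⟨h, _⟩ | ⟨h, _⟩ <;> rw [hlo, h] <;> linarith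
  have hcorehi : ∀ x ∈ core, A x ≤ hi - τ + 1 / T := by
    intro x hx
    obtain ⟨f1, f2, f3, f4⟩ := hfX x hx
    have : 0 < 1 / (T : ℝ) := by positivity
    rcases min_cases 1 (1 - c₀) with ⟨h, _⟩ | ⟨h, _⟩ <;> rw [hhi, h] <;> linarith
  obtain ⟨g, hg1, hg2, hg3⟩ := hgap (k + hi - τ / 2)
  obtain ⟨g', hg1', hg2', hg3'⟩ := hgap (k + lo + τ / 4)
  have hw1 : 16 * (1 / (T : ℝ)) ≤ w₀ := by rw [mul_one_div]; exact hw
  have hTi : 0 < 1 / (T : ℝ) := by positivity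
  have hBi : 1 / (B : ℝ) ≤ 1 / T := by
    apply one_div_le_one_div_of_le hTp
    rw [hBT]; exact le_mul_of_one_le_right hTp.le (by linarith)
  have hBw : 16 * (T : ℝ) ^ 3 ≤ B * w₀ := by
    rw [← hT1]; linarith [mul_le_mul_of_nonneg_left hw1 hBp.le]
  have hBmul : ∀ s t : ℝ, s ≤ t → B * s ≤ B * t := fun s t h =>
    mul_le_mul_of_nonneg_left h hBp.le
  set γ := g - k with hγ
  set γ' := g' - k with hγ'
  set G : ℤ := ⌈B * γ⌉ with hG
  set G' : ℤ := ⌊B * (γ' + w₀)⌋ with hG'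
  have hG1 : B * γ ≤ G := Int.le_ceil _
  have hG2 : G < B * γ + 1 := Int.ceil_lt_add_one _
  have hG1' : G' ≤ B * (γ' + w₀) := Int.floor_le _
  have hG2' : B * (γ' + w₀) < G' + 1 := Int.lt_floor_add_one _
  have hcoreG : ∀ x ∈ core, (G' : ℝ) ≤ B * A x ∧ B * A x < G := by
    intro x hx
    have h1 := hcorelo x hx
    have h2 := hcorehi x hx
    refine ⟨hG1'.trans (hBmul _ _ (by linarith)), lt_of_lt_of_le ?_ hG1⟩
    exact mul_lt_mul_of_pos_left (by linarith) hBp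
  have hGle : G ≤ B := by
    rw [hG, Int.ceil_le]; push_cast
    have := hBmul γ 1 (by linarith); linarith
  have hG0 : 0 ≤ G' := by
    rw [hG', Int.le_floor]; push_cast
    exact mul_nonneg hBp.le (by linarith)
  have hpG : (G', G) ∈ gridPairs B := by
    have hh : ∀ x ∈ core, G' ≤ G := fun x hx => by
      have := hcoreG x hx
      exact_mod_cast (this.1.trans this.2.le)
    have := hh X hX
    apply mem_gridPairs <;> rw [abs_le] <;> constructor <;> omega
  -- the middle slab is charged by every heavy fine cell
  have hratioX : σ ≤ ratio (coarse a b) (slab B a (G', G)) X := by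
    unfold ratio
    rw [le_div_iff₀ hqp]
    refine hcard.trans ?_
    rw [← nsmul_one, ← Finset.sum_const]
    calc ∑ _x ∈ core, (1 : ℝ) ≤ ∑ x ∈ core, (slab B a (G', G)).indicator (fun _ => (1 : ℝ)) x := by
          refine Finset.sum_le_sum fun x hx => ?_
          rw [indicator_of_mem]
          have e : Int.fract (a x) = A x := by
            rw [Int.fract, (hcoarse x (hcore x hx).1).1]
          simp only [slab, mem_ofPred_eq, e]
          exact hcoreG x hx
      _ ≤ _ := Finset.sum_le_sum_of_subset_of_nonneg
          (fun x hx => mem_cellOf.2 (hcore x hx).1)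
          fun _ _ _ => indicator_nonneg (fun _ _ => zero_le_one) _
  have hlam : (0 : ℝ) < 1 / T ^ 4 := by positivity
  have hη1 : 4 * η ≤ ε ^ 2 * (1 / (T : ℝ) ^ 4) := by
    rw [mul_one_div, le_div_iff₀ (by positivity)]
    have : ε ^ 2 * σ ^ 2 ≤ ε ^ 2 :=
      mul_le_of_le_one_right (sq_nonneg ε) (pow_le_one₀ hσ.le hσ1)
    linarith [sq_nonneg ε]
  have hbig : ∀ x, (q.card : ℝ) ≤ T ^ 4 * (cellOf (fine T a b) x).card →
      1 / (T : ℝ) ^ 4 * q.card ≤ (cellOf (fine T a b) x).card := by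
    intro x hx
    rw [one_div_mul_eq_div, div_le_iff₀ (by positivity)]; linarith
  have hheavy : ∀ x, coarse a b x = coarse a b X →
      (q.card : ℝ) ≤ T ^ 4 * (cellOf (fine T a b) x).card →
      σ / 2 * (cellOf (fine T a b) x).card ≤ gridCount B A (cellOf (fine T a b) x) G' G := by
    intro x hx hxb
    have h1 := sq_ratio_sub_le_of_defect (x := x) hT0
      (by rw [cellOf_congr hx]; exact hdef) (by rw [cellOf_congr hx]; exact hbig x hxb) hpG
    rw [ratio_congr hx] at h1
    have h2 : (ratio (fine T a b) (slab B a (G', G)) x -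
        ratio (coarse a b) (slab B a (G', G)) X) ^ 2 ≤ ε ^ 2 := by
      refine le_of_mul_le_mul_left ?_ hlam
      have : 0 ≤ 1 / (T : ℝ) ^ 4 * (ratio (fine T a b) (slab B a (G', G)) x -
        ratio (coarse a b) (slab B a (G', G)) X) ^ 2 := by positivity
      linarith
    have h3 := abs_le.1 (abs_le_of_sq_le_sq h2 hε.le)
    rw [ratio_fine_eq_gridCount T a b x A k (hcoarse x hx).1 (fun _ => rfl)] at h3
    have hp := cellOf_card_pos (fine T a b) x
    rw [← le_div_iff₀ hp]
    linarith
  have hmem : ∀ x, coarse a b x = coarse a b X → (G' : ℝ) ≤ B * A x → B * A x < G →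
      coarse a' b x = coarse a' b X := by
    intro x hx h1 h2
    obtain ⟨e1, e2⟩ := hcoarse x hx
    have := abs_le.1 (hcvar x X e2)
    have h3 : γ' ≤ A x := by
      have : B * γ' ≤ B * A x := by linarith
      exact le_of_mul_le_mul_left this hBp
    have h4 : A x ≤ γ + w₀ := by
      have : B * A x ≤ B * (γ + w₀) := by linarith
      exact le_of_mul_le_mul_left this hBp
    have h5 : ⌊a' x⌋ = k' := by
      rw [Int.floor_eq_iff]
      have := hAc x
      constructor <;> linarith
    simp only [coarse, Prod.mk.injEq]
    exact ⟨h5, e2⟩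
  have hrep : ∀ x, coarse a b x = coarse a b X →
      (q.card : ℝ) ≤ T ^ 4 * (cellOf (fine T a b) x).card →
      ∃ y ∈ cellOf (fine T a b) x, (G' : ℝ) ≤ B * A y ∧ B * A y < G := by
    intro x hx hxb
    have h1 := hheavy x hx hxb
    have hp := cellOf_card_pos (fine T a b) x
    have h2 : 0 < gridCount B A (cellOf (fine T a b) x) G' G := lt_of_lt_of_le (by positivity) h1
    unfold gridCount at h2
    obtain ⟨y, hy⟩ := Finset.card_pos.1 (Nat.cast_pos.1 h2)
    exact ⟨y, (Finset.mem_filter.1 hy).1, (Finset.mem_filter.1 hy).2⟩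
  obtain ⟨y₁, hy₁, hy₁G⟩ := hrep x₁ hx₁ hbig₁
  obtain ⟨y₂, hy₂, hy₂G⟩ := hrep x₂ hx₂ hbig₂
  have hf₁ := mem_cellOf.1 hy₁
  have hf₂ := mem_cellOf.1 hy₂
  have hq₁ := (fine_refines_coarse hT0 a b _ _ hf₁).trans hx₁
  have hq₂ := (fine_refines_coarse hT0 a b _ _ hf₂).trans hx₂
  rw [← cellOf_congr hf₁] at hbig₁
  rw [← cellOf_congr hf₂] at hbig₂
  have hbsep : 1 / (T : ℝ) - 2 / T ^ 3 ≤ |b y₁ - b y₂| := by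
    have d : ∀ x y, fine T a b y = fine T a b x → |b y - b x| ≤ 1 / T ^ 3 := by
      intro x y h
      have h1 := (Int.abs_sub_lt_one_of_floor_eq_floor (congrArg Prod.snd h)).le
      rw [← mul_sub, abs_mul, abs_of_pos (by positivity)] at h1
      rw [le_div_iff₀ (by positivity)]; linarith
    have d1 := abs_le.1 (d _ _ hf₁)
    have d2 := abs_le.1 (d _ _ hf₂)
    have e : 2 / (T : ℝ) ^ 3 = 1 / T ^ 3 + 1 / T ^ 3 := by ring
    rw [e]
    rcases le_abs.1 hsep with h | h
    · exact le_abs.2 (Or.inl (by linarith))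
    · exact le_abs.2 (Or.inr (by linarith))
  clear hsep hx₁ hx₂ hy₁ hy₂ hf₁ hf₂
  -- the main comparison, up to exchanging the two cells
  have main : ∀ y₁ y₂ : Ω, coarse a b y₁ = coarse a b X → coarse a b y₂ = coarse a b X →
      ((G' : ℝ) ≤ B * A y₁ ∧ B * A y₁ < G) → ((G' : ℝ) ≤ B * A y₂ ∧ B * A y₂ < G) →
      ((q.card : ℝ) ≤ T ^ 4 * (cellOf (fine T a b) y₁).card) →
      ((q.card : ℝ) ≤ T ^ 4 * (cellOf (fine T a b) y₂).card) →
      (1 / (T : ℝ) - 2 / T ^ 3 ≤ |b y₁ - b y₂|) →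
      ((cellOf (fine T a' b) y₁).card : ℝ) * (cellOf (fine T a b) y₂).card ≤
        (cellOf (fine T a b) y₁).card * (cellOf (fine T a' b) y₂).card → False := by
    intro y₁ y₂ hq₁ hq₂ hy₁G hy₂G hbig₁ hbig₂ hbsep hcmp
    have hq₁' := hmem y₁ hq₁ hy₁G.1 hy₁G.2
    have hq₂' := hmem y₂ hq₂ hy₂G.1 hy₂G.2
    have hbig' : ∀ y, coarse a b y = coarse a b X → 
        ((q.card : ℝ) ≤ T ^ 4 * (cellOf (fine T a b) y).card) →
        ⌊a' y⌋ = k' →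
        σ ^ 2 / (2 * T ^ 4) * q'.card ≤ (cellOf (fine T a' b) y).card := by
      intro y hy hyb hyk
      have h1 := hheavy y hy hyb
      have h2 : gridCount B A (cellOf (fine T a b) y) G' G ≤ (cellOf (fine T a' b) y).card := by
        unfold gridCount
        norm_cast
        refine Finset.card_le_card fun z hz => ?_
        obtain ⟨hz1, hz2, hz3⟩ := Finset.mem_filter.1 hz
        have hz1 := mem_cellOf.1 hz1
        have hzc := (fine_refines_coarse hT0 a b _ _ hz1).trans hy
        have h3 := (hcoarse' z (hmem z hzc hz2 hz3)).1
        refine mem_cellOf.2 ?_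
        simp only [fine, Prod.mk.injEq] at hz1 ⊢
        exact ⟨h3.trans hyk.symm, hz1.2⟩
      refine le_trans ?_ (h1.trans h2)
      have h5 : σ * q'.card ≤ T ^ 4 * (cellOf (fine T a b) y).card :=
        hcard'.trans (hcq.trans hyb)
      rw [div_mul_eq_mul_div, div_le_iff₀ (by positivity)]
      linarith [mul_le_mul_of_nonneg_left h5 hσ.le]
    have hlam' : (0 : ℝ) < σ ^ 2 / (2 * T ^ 4) := by positivity
    have hη2 : 4 * η ≤ ε ^ 2 * (σ ^ 2 / (2 * T ^ 4)) := by
      rw [← mul_div_assoc, le_div_iff₀ (by positivity)]; linarith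
    have hzB : |B * c y₁ - B * c y₂| = B * |ζ| * |b y₁ - b y₂| := by
      have : B * c y₁ - B * c y₂ = B * ζ * (b y₁ - b y₂) := by simp only [hc]; ring
      rw [this, abs_mul, abs_mul, abs_of_pos hBp]
    have hb1 : |b y₁ - b y₂| ≤ 1 := (Int.abs_sub_lt_one_of_floor_eq_floor
      ((hcoarse y₁ hq₁).2.trans (hcoarse y₂ hq₂).2.symm)).le
    have hB2 : (T : ℝ) ^ 2 ≤ B * |ζ| := by
      calc (T : ℝ) ^ 2 = B * (1 / T ^ 2) := by rw [hBr]; field_simp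
        _ ≤ _ := by gcongr
    have key : ShiftData B A c (cellOf (fine T a b) y₁) (cellOf (fine T a b) y₂)
        (cellOf (fine T a' b) y₁) (cellOf (fine T a' b) y₂) G' G (c y₁) (c y₂) (1 / T) ε
        (B / σ) :=
      { two_le := by
          have : (2 : ℝ) ≤ B := by
            rw [hBT]; linarith [mul_le_mul hTr hT3 (by norm_num) hTp.le]
          exact_mod_cast this
        nonneg := hG0
        le_B := hGle
        pos₁ := cellOf_card_pos _ _
        pos₂ := cellOf_card_pos _ _
        pos₂' := cellOf_card_pos _ _
        close := fun u v hu hv => by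
          rw [← ratio_fine_eq_gridCount T a b y₁ A k (hcoarse _ hq₁).1 (fun _ => rfl),
            ← ratio_fine_eq_gridCount T a b y₂ A k (hcoarse _ hq₂).1 (fun _ => rfl)]
          refine ratio_fine_sub_le hT0 hlam (hq₁.trans hq₂.symm) ?_ ?_ ?_ hε.le hη1
            (mem_gridPairs hu hv)
          · rw [cellOf_congr hq₂]; exact hdef
          · rw [cellOf_congr hq₂]; exact hbig _ hbig₂
          · rw [cellOf_congr hq₂]; exact hbig _ hbig₁
        close' := fun u v hu hv => by
          rw [← ratio_fine_eq_gridCount T a' b y₁ _ k' (hcoarse' _ hq₁').1 hAc,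
            ← ratio_fine_eq_gridCount T a' b y₂ _ k' (hcoarse' _ hq₂').1 hAc]
          refine ratio_fine_sub_le hT0 hlam' (hq₂'.trans hq₁'.symm) ?_ ?_ ?_ hε.le hη2
            (mem_gridPairs hu hv)
          · rw [cellOf_congr hq₁']; exact hdef'
          · rw [cellOf_congr hq₁']; exact hbig' _ hq₁ hbig₁ (hcoarse' _ hq₁').1
          · rw [cellOf_congr hq₁']; exact hbig' _ hq₂ hbig₂ (hcoarse' _ hq₂').1
        mem₁' := fun x hx h1 h2 => by
          have hx := mem_cellOf.1 hx
          have hxc := (fine_refines_coarse hT0 a b _ _ hx).trans hq₁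
          have h3 := (hcoarse' x (hmem x hxc h1 h2)).1
          refine mem_cellOf.2 ?_
          simp only [fine, Prod.mk.injEq] at hx ⊢
          exact ⟨h3.trans (hcoarse' _ hq₁').1.symm, hx.2⟩
        mem₂ := fun x hx h1 h2 => by
          have hx := mem_cellOf.1 hx
          rw [mul_assoc, hT1] at h1 h2
          have h3 : γ' ≤ A x := by
            have : B * γ' ≤ B * A x := by linarith
            exact le_of_mul_le_mul_left this hBp
          have h4 : A x ≤ γ + w₀ := by
            have : B * A x ≤ B * (γ + w₀) := by linarith
            exact le_of_mul_le_mul_left this hBp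
          have h5 : ⌊a x⌋ = k := by
            rw [Int.floor_eq_iff]
            simp only [hA] at h3 h4
            constructor <;> linarith
          refine mem_cellOf.2 ?_
          simp only [fine, Prod.mk.injEq] at hx ⊢
          exact ⟨h5.trans (hcoarse _ hq₂).1.symm, hx.2⟩
        shift₁ := fun x hx => hcfine _ _ (congrArg Prod.snd (mem_cellOf.1 hx))
        shift₂ := fun x hx => hcfine _ _ (congrArg Prod.snd (mem_cellOf.1 hx))
        gap := fun x _ h => by
          rw [mul_assoc, hT1]
          have h1 : γ ≤ A x := le_of_mul_le_mul_left (hG1.trans h) hBp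
          have h2 := hg3 x (by simp only [hA, hγ] at h1; linarith)
          have h3 := hBmul (γ + w₀) (A x) (by simp only [hA, hγ]; linarith)
          linarith
        gap' := fun x _ h => by
          rw [mul_assoc, hT1]
          have h1 : A x < γ' + w₀ := lt_of_mul_lt_mul_left (h.trans_le hG1') hBp.le
          have h2 : A x < γ' := by
            by_contra hcon
            have := hg3' x (by simp only [hA, hγ'] at hcon; linarith)
            simp only [hA, hγ'] at h1
            linarith
          have h3 := mul_lt_mul_of_pos_left h2 hBp
          linarith
        abs_shift_le := by
          have e1 := (hcoarse _ hq₁).1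
          have e2 := (hcoarse' _ hq₁').1
          rw [Int.floor_eq_iff] at e1 e2
          have := hAc y₁
          simp only [hA] at this
          rw [abs_le]; constructor <;> linarith
        le_abs_sub := by
          rw [hzB]
          calc (6 : ℝ) ≤ T ^ 2 * (1 / T - 2 / T ^ 3) := by
                have e : (T : ℝ) ^ 2 * (1 / T - 2 / T ^ 3) = T - 2 / T := by field_simp
                have : 2 / (T : ℝ) ≤ 1 := by rw [div_le_one hTp]; linarith
                rw [e]; linarith
            _ ≤ _ := by
                have : (0 : ℝ) ≤ 1 / T - 2 / T ^ 3 := by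
                  rw [sub_nonneg, div_le_div_iff₀ (by positivity) hTp]
                  have : (T : ℝ) ^ 3 = T ^ 2 * T := by ring
                  nlinarith
                exact mul_le_mul hB2 hbsep this (by positivity)
        abs_sub_le := by
          rw [hzB]
          calc B * |ζ| * |b y₁ - b y₂| ≤ B * (1 / T) * 1 := by gcongr
            _ = _ := by ring
        four_le := by rw [hT1]; linarith
        eps_nonneg := hε.le
        compare := hcmp
        card_le := by
          have h1 : ((cellOf (fine T a' b) y₁).card : ℝ) ≤ q'.card := by
            have := (fine_refines_coarse hT0 a' b).cellOf_subset y₁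
            rw [cellOf_congr hq₁'] at this
            exact_mod_cast Finset.card_le_card this
          have h2 : σ * q'.card ≤ B * (cellOf (fine T a b) y₁).card := by
            rw [hBr]; exact hcard'.trans (hcq.trans hbig₁)
          rw [div_mul_eq_mul_div, le_div_iff₀ hσ]
          linarith [mul_le_mul_of_nonneg_right h1 hσ.le] }
    have h1 := key.gridCount_le_mul (by positivity)
    have h2 := hheavy y₂ hq₂ hbig₂
    rw [← le_div_iff₀ (cellOf_card_pos _ _)] at h2
    have h3 : (B : ℝ) * (ε * (1 + B / σ)) * σ ≤ σ ^ 2 / 4 := by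
      have : (B : ℝ) * (ε * (1 + B / σ)) * σ = ε * (B * σ + B * B) := by field_simp
      rw [this]
      rw [hT8] at hεσ
      have : B * σ ≤ B * B := mul_le_mul_of_nonneg_left (hσ1.trans hB1) hBp.le
      linarith [mul_le_mul_of_nonneg_left this hε.le]
    linarith [mul_le_mul_of_nonneg_right (h2.trans h1) hσ.le, sq_pos_of_pos hσ]
  rcases le_total (((cellOf (fine T a' b) y₁).card : ℝ) * (cellOf (fine T a b) y₂).card)
    ((cellOf (fine T a b) y₁).card * (cellOf (fine T a' b) y₂).card) with h | h
  · exact main y₁ y₂ hq₁ hq₂ hy₁G hy₂G hbig₁ hbig₂ hbsep h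
  · exact main y₂ y₁ hq₂ hq₁ hy₂G hy₁G hbig₂ hbig₁ (by rwa [abs_sub_comm])
      (by linarith)

end LocalContradiction

section Branching

variable {Ω : Type*}

/-- The partition into cells of height one in `a` and width `T⁻¹` in `b`. -/
def medium (T : ℕ) (a b : Ω → ℝ) (x : Ω) : ℤ × ℤ := (⌊a x⌋, ⌊(T : ℝ) * b x⌋)

theorem card_image_prod_le (S : Finset Ω) (f g : Ω → ℤ) (k m : ℤ) (K : ℕ)
    (hf : ∀ x ∈ S, f x = k) (hg : ∀ x ∈ S, m ≤ g x ∧ g x < m + K) :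
    (S.image fun x => (f x, g x)).card ≤ K := by
  have h : (S.image fun x => (f x, g x)) ⊆ {k} ×ˢ Finset.Ico m (m + K) := by
    intro p hp
    obtain ⟨x, hx, rfl⟩ := Finset.mem_image.1 hp
    simp only [Finset.mem_product, Finset.mem_singleton, Finset.mem_Ico]
    exact ⟨hf x hx, hg x hx⟩
  refine (Finset.card_le_card h).trans ?_
  simp

theorem floor_mul_mem {T : ℕ} {s : ℝ} :
    (T : ℤ) * ⌊s⌋ ≤ ⌊(T : ℝ) * s⌋ ∧ (⌊(T : ℝ) * s⌋ < T * ⌊s⌋ + T ∨ T = 0) := by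
  have h1 := Int.floor_le s
  have h2 := Int.lt_floor_add_one s
  constructor
  · rw [Int.le_floor]; push_cast; gcongr
  · rcases Nat.eq_zero_or_pos T with h | h
    · exact Or.inr h
    · left
      rw [Int.floor_lt]; push_cast
      have : (0 : ℝ) < T := by exact_mod_cast h
      nlinarith

variable [Fintype Ω]

theorem card_image_medium_le {T : ℕ} (hT : 0 < T) (a b : Ω → ℝ) (X : Ω) :
    ((cellOf (coarse a b) X).image (medium T a b)).card ≤ T := by
  refine card_image_prod_le _ _ _ ⌊a X⌋ (T * ⌊b X⌋) T (fun x hx => ?_) fun x hx => ?_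
  · exact congrArg Prod.fst (mem_cellOf.1 hx)
  · have : ⌊b x⌋ = ⌊b X⌋ := congrArg Prod.snd (mem_cellOf.1 hx)
    rw [← this]
    have h := floor_mul_mem (T := T) (s := b x)
    exact ⟨h.1, h.2.resolve_right hT.ne'⟩

theorem card_image_fine_le {T : ℕ} (hT : 0 < T) (a b : Ω → ℝ) (X : Ω) :
    ((cellOf (coarse a b) X).image (fine T a b)).card ≤ T ^ 3 := by
  have := card_image_medium_le (T := T ^ 3) (by positivity) a b X
  have e : medium (T ^ 3) a b = fine T a b := by
    ext x <;> simp [medium, fine]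
  rwa [e] at this

theorem two_mul_le_two_pow {n : ℕ} (hn : 2 ≤ n) : 2 * n ≤ 2 ^ n := by
  induction n, hn using Nat.le_induction with
  | base => norm_num
  | succ n hn ih => rw [pow_succ]; omega

/-- If the heavy fine cells of a coarse cell have nearly the same `b`-coordinate, then the
coarse cell branches very little. -/
theorem sum_log_medium_le {T : ℕ} (hT : 4 ≤ T) (a b : Ω → ℝ) (X : Ω)
    (h : ∀ x₁ x₂, coarse a b x₁ = coarse a b X → coarse a b x₂ = coarse a b X →
      ((cellOf (coarse a b) X).card : ℝ) ≤ T ^ 4 * (cellOf (fine T a b) x₁).card →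
      ((cellOf (coarse a b) X).card : ℝ) ≤ T ^ 4 * (cellOf (fine T a b) x₂).card →
      |b x₁ - b x₂| < 1 / (T : ℝ)) :
    ∑ x ∈ cellOf (coarse a b) X, Real.log ((cellOf (coarse a b) X).card /
      (cellOf (medium T a b) x).card) ≤ (cellOf (coarse a b) X).card * (3 * Real.log 2) := by
  classical
  have hT0 : 0 < T := by omega
  have hTp : (0 : ℝ) < T := by exact_mod_cast hT0
  set q := cellOf (coarse a b) X with hq
  have hqp : (0 : ℝ) < q.card := cellOf_card_pos _ _
  set heavy : Ω → Prop := fun x => (q.card : ℝ) ≤ T ^ 4 * (cellOf (fine T a b) x).card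
  set K : Ω → ℝ := fun x => if heavy x then 4 else 2 * T with hK
  have hKp : ∀ x, 0 < K x := by intro x; simp only [hK]; split_ifs <;> positivity
  have hheavy : ((q.filter heavy).image (medium T a b)).card ≤ 2 := by
    rcases (q.filter heavy).eq_empty_or_nonempty with h0 | hne
    · rw [h0]; simp
    obtain ⟨x₀, hx₀, hmin⟩ := Finset.exists_min_image _ b hne
    obtain ⟨hx₀q, hx₀h⟩ := Finset.mem_filter.1 hx₀
    refine card_image_prod_le _ _ _ ⌊a X⌋ ⌊(T : ℝ) * b x₀⌋ 2 (fun x hx => ?_) fun x hx => ?_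
    · exact congrArg Prod.fst (mem_cellOf.1 (Finset.mem_filter.1 hx).1)
    · obtain ⟨hxq, hxh⟩ := Finset.mem_filter.1 hx
      have h1 := hmin x hx
      have h2 := abs_lt.1 (h x x₀ (mem_cellOf.1 hxq) (mem_cellOf.1 hx₀q) hxh hx₀h)
      refine ⟨Int.floor_mono (by gcongr), ?_⟩
      rw [Int.floor_lt]
      push_cast
      have h3 := Int.lt_floor_add_one ((T : ℝ) * b x₀)
      have h4 : (T : ℝ) * (b x - b x₀) < T * (1 / T) := by gcongr; exact h2.2
      rw [mul_one_div_cancel hTp.ne'] at h4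
      linarith
  have hlight : ((q.filter fun x => ¬ heavy x).card : ℝ) ≤ q.card / T := by
    have h1 : ∀ x ∈ q.filter fun x => ¬ heavy x,
        (1 : ℝ) ≤ q.card / T ^ 4 * (1 / (cellOf (fine T a b) x).card) := by
      intro x hx
      have hx2 := not_le.1 (Finset.mem_filter.1 hx).2
      have := cellOf_card_pos (fine T a b) x
      rw [div_mul_div_comm, one_le_div (by positivity)]
      linarith
    have h2 := Finset.sum_le_sum h1
    rw [← Finset.mul_sum] at h2
    have h3 : ∑ x ∈ q.filter (fun x => ¬ heavy x), 1 / ((cellOf (fine T a b) x).card : ℝ)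
        ≤ T ^ 3 := by
      refine (sum_inv_cellOf_le _ _).trans ?_
      have := (Finset.card_le_card (Finset.image_subset_image
        (f := fine T a b) (Finset.filter_subset (fun x => ¬ heavy x) q))).trans
        (card_image_fine_le hT0 a b X)
      exact_mod_cast this
    simp only [Finset.sum_const, nsmul_eq_mul, mul_one] at h2
    calc _ ≤ _ := h2
      _ ≤ q.card / T ^ 4 * T ^ 3 := by gcongr
      _ = _ := by field_simp
  refine (sum_log_ratio_le _ q K hKp ?_).trans ?_
  · rw [← Finset.sum_filter_add_sum_filter_not q heavy]
    have h1 : ∑ x ∈ q.filter heavy, 1 / ((cellOf (medium T a b) x).card * K x) ≤ 1 / 2 := by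
      have : ∀ x ∈ q.filter heavy, 1 / ((cellOf (medium T a b) x).card * K x)
          = 1 / 4 * (1 / (cellOf (medium T a b) x).card) := by
        intro x hx
        simp only [hK, if_pos (Finset.mem_filter.1 hx).2]
        rw [one_div_mul_one_div, mul_comm]
      rw [Finset.sum_congr rfl this, ← Finset.mul_sum]
      have h2 := sum_inv_cellOf_le (medium T a b) (q.filter heavy)
      have h3 : (((q.filter heavy).image (medium T a b)).card : ℝ) ≤ 2 := by
        exact_mod_cast hheavy
      linarith
    have h2 : ∑ x ∈ q.filter (fun x => ¬ heavy x),
        1 / ((cellOf (medium T a b) x).card * K x) ≤ 1 / 2 := by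
      have : ∀ x ∈ q.filter (fun x => ¬ heavy x), 1 / ((cellOf (medium T a b) x).card * K x)
          = 1 / (2 * T) * (1 / (cellOf (medium T a b) x).card) := by
        intro x hx
        simp only [hK, if_neg (Finset.mem_filter.1 hx).2]
        rw [one_div_mul_one_div, mul_comm]
      rw [Finset.sum_congr rfl this, ← Finset.mul_sum]
      have h2 := sum_inv_cellOf_le (medium T a b) (q.filter fun x => ¬ heavy x)
      have h3 : (((q.filter fun x => ¬ heavy x).image (medium T a b)).card : ℝ) ≤ T := by
        exact_mod_cast (Finset.card_le_card (Finset.image_subset_image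
          (f := medium T a b) (Finset.filter_subset (fun x => ¬ heavy x) q))).trans
          (card_image_medium_le hT0 a b X)
      calc _ ≤ 1 / (2 * (T : ℝ)) * T := by gcongr; exact h2.trans h3
        _ = 1 / 2 := by field_simp
    linarith
  · rw [← Finset.sum_filter_add_sum_filter_not q heavy]
    have h1 : ∑ x ∈ q.filter heavy, Real.log (K x) ≤ q.card * (2 * Real.log 2) := by
      have e4 : Real.log 4 = 2 * Real.log 2 := by
        rw [show (4 : ℝ) = 2 ^ 2 by norm_num, Real.log_pow]; norm_num
      rw [Finset.sum_congr rfl (g := fun _ => 2 * Real.log 2)]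
      · rw [Finset.sum_const, nsmul_eq_mul]
        have : ((q.filter heavy).card : ℝ) ≤ q.card := by
          exact_mod_cast Finset.card_filter_le _ _
        have := Real.log_nonneg (one_le_two (α := ℝ))
        gcongr
      · intro x hx
        simp only [hK, if_pos (Finset.mem_filter.1 hx).2, e4]
    have h2 : ∑ x ∈ q.filter (fun x => ¬ heavy x), Real.log (K x) ≤ q.card * Real.log 2 := by
      have e : Real.log (2 * T) ≤ T * Real.log 2 := by
        rw [← Real.log_pow]
        refine Real.log_le_log (by positivity) ?_
        exact_mod_cast two_mul_le_two_pow (by omega)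
      rw [Finset.sum_congr rfl (g := fun _ => Real.log (2 * T))]
      · rw [Finset.sum_const, nsmul_eq_mul]
        have hl0 : 0 ≤ Real.log (2 * T) := Real.log_nonneg (by
          have : (4 : ℝ) ≤ T := by exact_mod_cast hT
          linarith)
        calc _ ≤ q.card / T * Real.log (2 * T) := by gcongr
          _ ≤ q.card / T * (T * Real.log 2) := by gcongr
          _ = _ := by field_simp
      · intro x hx
        simp only [hK, if_neg (Finset.mem_filter.1 hx).2]
    linarith

theorem sum_log_medium_le_log {T : ℕ} (hT : 0 < T) (a b : Ω → ℝ) (X : Ω) :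
    ∑ x ∈ cellOf (coarse a b) X, Real.log ((cellOf (coarse a b) X).card /
      (cellOf (medium T a b) x).card) ≤ (cellOf (coarse a b) X).card * Real.log T :=
  sum_log_ratio_le_of_card_image _ _ _ (by exact_mod_cast hT)
    (by exact_mod_cast card_image_medium_le hT a b X)

end Branching

section Levels

variable {Ω : Type*}

/-- The index of the dyadic interval of length `2⁻ⁿ` containing `u x`. -/
def lev (u : Ω → ℝ) (n : ℕ) (x : Ω) : ℤ := ⌊(2 : ℝ) ^ n * u x⌋

/-- The dyadic rectangle of size `2⁻ⁿ × 2⁻ˡ` containing `(P x, y x)`. -/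
def rect (P y : Ω → ℝ) (n l : ℕ) (x : Ω) : ℤ × ℤ := (lev P n x, lev y l x)

theorem lev_eq_of_le {u : Ω → ℝ} {m n : ℕ} (h : m ≤ n) {x z : Ω} (hx : lev u n x = lev u n z) :
    lev u m x = lev u m z := by
  obtain ⟨k, rfl⟩ := Nat.exists_eq_add_of_le h
  have e : ∀ w, (2 : ℝ) ^ (m + k) * u w = ((2 : ℕ) : ℝ) ^ k * (2 ^ m * u w) := by
    intro w; push_cast; rw [pow_add]; ring
  simp only [lev, e] at hx ⊢
  exact floor_eq_floor_of_mul (by norm_num) hx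

theorem rect_refines {P y : Ω → ℝ} {n l n' l' : ℕ} (hn : n' ≤ n) (hl : l' ≤ l) :
    Refines (rect P y n l) (rect P y n' l') := by
  intro x z h
  simp only [rect, Prod.mk.injEq] at h ⊢
  exact ⟨lev_eq_of_le hn h.1, lev_eq_of_le hl h.2⟩

theorem rect_eq_coarse (P y : Ω → ℝ) (n l : ℕ) :
    rect P y n l = coarse (fun x => 2 ^ n * P x) fun x => 2 ^ l * y x := rfl

theorem rect_eq_medium (P y : Ω → ℝ) (n l i : ℕ) :
    rect P y n (l + i) = medium (2 ^ i) (fun x => 2 ^ n * P x) fun x => 2 ^ l * y x := by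
  ext x
  · rfl
  · simp only [rect, lev, medium]; push_cast; rw [pow_add]; ring_nf

theorem rect_eq_fine (P y : Ω → ℝ) (n l i : ℕ) :
    rect P y n (l + 3 * i) = fine (2 ^ i) (fun x => 2 ^ n * P x) fun x => 2 ^ l * y x := by
  ext x
  · rfl
  · simp only [rect, lev, fine]; push_cast; rw [pow_add, pow_mul']; ring_nf

variable [Fintype Ω]

theorem rect_log_submodular (P y : Ω → ℝ) {n l m : ℕ} (hl : l ≤ n) (hm : m ≤ l) :
    logMass (rect P y n m) - logMass (rect P y n l)
      ≤ logMass (rect P y l m) - logMass (rect P y l l) := by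
  have h1 := logMass_submodular (f := rect P y n m) (g := rect P y l l) (h := rect P y l m)
    (rect_refines hl le_rfl) (rect_refines le_rfl hm)
  have h2 : logMass (fun x => (rect P y n m x, rect P y l l x)) ≤ logMass (rect P y n l) := by
    apply Refines.logMass_le
    intro x z h
    simp only [rect, Prod.mk.injEq] at h ⊢
    exact ⟨h.1.1, h.2.2⟩
  linarith

end Levels

section CriticalPairs

variable {Ω : Type*} [Fintype Ω]

/-- The coarse cell of `X` contains two heavy fine cells which are far apart. -/
def Branches (T : ℕ) (a b : Ω → ℝ) (X : Ω) : Prop :=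
  ∃ x₁ x₂, coarse a b x₁ = coarse a b X ∧ coarse a b x₂ = coarse a b X ∧
    ((cellOf (coarse a b) X).card : ℝ) ≤ T ^ 4 * (cellOf (fine T a b) x₁).card ∧
    ((cellOf (coarse a b) X).card : ℝ) ≤ T ^ 4 * (cellOf (fine T a b) x₂).card ∧
    1 / (T : ℝ) ≤ |b x₁ - b x₂|

/-- The point is at distance at least `τ` from the integer grid. -/
def FarFromGrid (τ s : ℝ) : Prop := τ ≤ Int.fract s ∧ Int.fract s ≤ 1 - τ

theorem branches_congr {T : ℕ} {a b : Ω → ℝ} {X Y : Ω} (h : coarse a b Y = coarse a b X) :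
    Branches T a b Y ↔ Branches T a b X := by
  simp only [Branches, h, cellOf_congr h]

open scoped Classical in
theorem logMass_coarse_sub_medium_le {T : ℕ} (hT : 4 ≤ T) (a b : Ω → ℝ) :
    logMass (coarse a b) - logMass (medium T a b) ≤
      Fintype.card Ω * (3 * Real.log 2) +
        (Finset.univ.filter (Branches T a b)).card * Real.log T := by
  rw [Refines.logMass_sub_eq]
  have hT1 : 0 ≤ Real.log T := Real.log_natCast_nonneg T
  have h2 := Real.log_nonneg (one_le_two (α := ℝ))
  have : (Fintype.card Ω * (3 * Real.log 2) +
        (Finset.univ.filter (Branches T a b)).card * Real.log T : ℝ)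
      = ∑ x, (3 * Real.log 2 + if Branches T a b x then Real.log T else 0) := by
    rw [Finset.sum_add_distrib, ← Finset.sum_filter]; simp
  rw [this]
  refine sum_le_sum_of_cells (coarse a b) _ _ fun X => ?_
  have e1 : ∀ y ∈ cellOf (coarse a b) X,
      Real.log ((cellOf (coarse a b) y).card / (cellOf (medium T a b) y).card)
      = Real.log ((cellOf (coarse a b) X).card / (cellOf (medium T a b) y).card) := by
    intro y hy; rw [cellOf_congr (mem_cellOf.1 hy)]
  have e2 : ∀ y ∈ cellOf (coarse a b) X,
      (3 * Real.log 2 + if Branches T a b y then Real.log T else 0)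
      = 3 * Real.log 2 + if Branches T a b X then Real.log T else 0 := by
    intro y hy; simp only [branches_congr (mem_cellOf.1 hy)]
  rw [Finset.sum_congr rfl e1, Finset.sum_congr rfl e2, Finset.sum_const, nsmul_eq_mul]
  by_cases hb : Branches T a b X
  · rw [if_pos hb]
    refine (sum_log_medium_le_log (by omega) a b X).trans ?_
    gcongr
    linarith
  · rw [if_neg hb, add_zero]
    refine sum_log_medium_le hT a b X fun x₁ x₂ h1 h2 h3 h4 => ?_
    by_contra hcon
    exact hb ⟨x₁, x₂, h1, h2, h3, h4, not_lt.1 hcon⟩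

theorem card_image_coarse_le {a a' b : Ω → ℝ} {ζ κ₀ : ℝ} (ha' : ∀ x, a' x = a x + ζ * b x + κ₀)
    (hζ : |ζ| ≤ 1) (X : Ω) : ((cellOf (coarse a b) X).image (coarse a' b)).card ≤ 3 := by
  obtain ⟨x₀, hx₀, hmin⟩ := Finset.exists_min_image (cellOf (coarse a b) X) a'
    ⟨X, self_mem_cellOf _ _⟩
  have h : (cellOf (coarse a b) X).image (coarse a' b) ⊆
      Finset.Ico ⌊a' x₀⌋ (⌊a' x₀⌋ + 3) ×ˢ {⌊b X⌋} := by
    intro p hp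
    obtain ⟨x, hx, rfl⟩ := Finset.mem_image.1 hp
    have hm := hmin x hx
    have hx := mem_cellOf.1 hx
    have hx₀ := mem_cellOf.1 hx₀
    have hxx := hx.trans hx₀.symm
    simp only [coarse, Prod.mk.injEq] at hx hxx
    have h1 := abs_lt.1 (Int.abs_sub_lt_one_of_floor_eq_floor hxx.1)
    have h2 := (Int.abs_sub_lt_one_of_floor_eq_floor hxx.2).le
    have h3 : |ζ * (b x - b x₀)| ≤ 1 := by
      rw [abs_mul]; exact mul_le_one₀ hζ (abs_nonneg _) h2
    have h4 := (abs_le.1 h3).2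
    simp only [coarse, Finset.mem_product, Finset.mem_singleton, Finset.mem_Ico]
    refine ⟨⟨Int.floor_mono hm, ?_⟩, hx.2⟩
    rw [Int.floor_lt]
    push_cast
    have h5 := Int.lt_floor_add_one (a' x₀)
    have e1 := ha' x
    have e2 := ha' x₀
    linarith
  exact (Finset.card_le_card h).trans (by simp)

/-- At a single scale, the branching points are contained in the union of six exceptional
sets, each of which is controlled separately. -/
theorem branching_card_le {T : ℕ} (hT : 16 ≤ T) {a a' b : Ω → ℝ} {ζ κ₀ τ w₀ σ η ε : ℝ}
    (ha' : ∀ x, a' x = a x + ζ * b x + κ₀)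
    (hζ : |ζ| ≤ 1 / T) (hζ' : 1 / (T : ℝ) ^ 2 ≤ |ζ|) (hw : 16 / T ≤ w₀)
    (hgap : ∀ s : ℝ, ∃ g, s ≤ g ∧ g + w₀ ≤ s + τ / 4 ∧ ∀ x, g ≤ a x → g + w₀ ≤ a x)
    (hσ : 0 < σ) (hε : 0 < ε) (hεσ : ε * 8 * T ^ 8 ≤ σ ^ 2)
    (hη0 : 0 < η) (hη : 8 * η * T ^ 4 ≤ ε ^ 2 * σ ^ 2)
    {N F F' : Finset Ω} (hN : ∀ x ∈ N, Branches T a b x)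
    (hF : ∀ x, ¬ FarFromGrid τ (a x) → x ∈ F) (hF' : ∀ x, ¬ FarFromGrid τ (a' x) → x ∈ F') :
    (N.card : ℝ) ≤ F.card + F'.card + 6 * σ * Fintype.card Ω +
      (∑ x, defect T a b x) / η + (∑ x, defect T a' b x) / η := by
  classical
  set Good : Finset Ω := Finset.univ.filter fun x => FarFromGrid τ (a x) ∧ FarFromGrid τ (a' x)
    with hGood
  set core : Ω → Finset Ω := fun X =>
    (cellOf (coarse a b) X ∩ cellOf (coarse a' b) X) ∩ Good with hcoredef
  set S := Good.filter fun X => ((core X).card : ℝ) ≤ σ * (cellOf (coarse a b) X).card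
  set S' := Good.filter fun X => ((core X).card : ℝ) ≤ σ * (cellOf (coarse a' b) X).card
  set D := Finset.univ.filter fun X => η * (cellOf (coarse a b) X).card ≤
    ∑ y ∈ cellOf (coarse a b) X, defect T a b y
  set D' := Finset.univ.filter fun X => η * (cellOf (coarse a' b) X).card ≤
    ∑ y ∈ cellOf (coarse a' b) X, defect T a' b y
  have hζ1 : |ζ| ≤ 1 := hζ.trans (by
    rw [div_le_one (by positivity)]
    have : (16 : ℝ) ≤ T := by exact_mod_cast hT
    linarith)
  have hD : (D.card : ℝ) ≤ (∑ x, defect T a b x) / η := by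
    rw [le_div_iff₀ hη0, mul_comm]
    exact card_filter_large_average_le (coarse a b) _ (defect_nonneg T a b) η D
      fun x hx => (Finset.mem_filter.1 hx).2
  have hD' : (D'.card : ℝ) ≤ (∑ x, defect T a' b x) / η := by
    rw [le_div_iff₀ hη0, mul_comm]
    exact card_filter_large_average_le (coarse a' b) _ (defect_nonneg T a' b) η D'
      fun x hx => (Finset.mem_filter.1 hx).2
  have hS : (S.card : ℝ) ≤ (3 : ℕ) * σ * Fintype.card Ω := by
    refine card_filter_small_join_le (coarse a b) (coarse a' b) Good 3 σ hσ.le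
      (card_image_coarse_le ha' hζ1) S (Finset.filter_subset _ _) fun X hX => ?_
    refine le_trans (le_of_eq ?_) (Finset.mem_filter.1 hX).2
    congr 2
    ext x
    simp only [hcoredef, mem_cellOf, Finset.mem_inter, Prod.mk.injEq]
  have hS' : (S'.card : ℝ) ≤ (3 : ℕ) * σ * Fintype.card Ω := by
    refine card_filter_small_join_le (coarse a' b) (coarse a b) Good 3 σ hσ.le
      (card_image_coarse_le (ζ := -ζ) (κ₀ := -κ₀) (fun x => by rw [ha' x]; ring)
        (by rwa [abs_neg])) S' (Finset.filter_subset _ _) fun X hX => ?_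
    refine le_trans (le_of_eq ?_) (Finset.mem_filter.1 hX).2
    congr 2
    ext x
    simp only [hcoredef, mem_cellOf, Finset.mem_inter, Prod.mk.injEq]
    tauto
  have hsub : N ⊆ F ∪ F' ∪ S ∪ S' ∪ D ∪ D' := by
    intro X hX
    by_contra hcon
    simp only [Finset.mem_union, not_or] at hcon
    obtain ⟨⟨⟨⟨⟨hXF, hXF'⟩, hXS⟩, hXS'⟩, hXD⟩, hXD'⟩ := hcon
    have hXG : X ∈ Good := by
      rw [hGood, Finset.mem_filter]
      exact ⟨Finset.mem_univ _, by_contra fun h => hXF (hF X h),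
        by_contra fun h => hXF' (hF' X h)⟩
    have hXS := fun h => hXS (Finset.mem_filter.2 ⟨hXG, h⟩)
    have hXS' := fun h => hXS' (Finset.mem_filter.2 ⟨hXG, h⟩)
    have hXD := fun h => hXD (Finset.mem_filter.2 ⟨Finset.mem_univ _, h⟩)
    have hXD' := fun h => hXD' (Finset.mem_filter.2 ⟨Finset.mem_univ _, h⟩)
    obtain ⟨x₁, x₂, h1, h2, h3, h4, h5⟩ := hN X hX
    have hcm : ∀ x ∈ core X, x ∈ Good := fun x hx => (Finset.mem_inter.1 hx).2
    exact local_contradiction hT ha' hζ hζ' hw hgap (X := X) (core := core X)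
      (by simp only [hcoredef, Finset.mem_inter]
          exact ⟨⟨self_mem_cellOf _ _, self_mem_cellOf _ _⟩, hXG⟩)
      (fun x hx => by
        simp only [hcoredef, Finset.mem_inter, mem_cellOf] at hx
        exact hx.1)
      (fun x hx => (Finset.mem_filter.1 (hcm x hx)).2.1)
      (fun x hx => (Finset.mem_filter.1 (hcm x hx)).2.2)
      hσ (not_le.1 hXS).le (not_le.1 hXS').le (not_le.1 hXD).le (not_le.1 hXD').le
      h1 h2 h3 h4 h5 hε hεσ hη
  have hcard : N.card ≤ F.card + F'.card + S.card + S'.card + D.card + D'.card := by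
    refine (Finset.card_le_card hsub).trans ?_
    have e1 := Finset.card_union_le (F ∪ F' ∪ S ∪ S' ∪ D) D'
    have e2 := Finset.card_union_le (F ∪ F' ∪ S ∪ S') D
    have e3 := Finset.card_union_le (F ∪ F' ∪ S) S'
    have e4 := Finset.card_union_le (F ∪ F') S
    have e5 := Finset.card_union_le F F'
    omega
  have hcard' : (N.card : ℝ) ≤ F.card + F'.card + S.card + S'.card + D.card + D'.card := by
    exact_mod_cast hcard
  push_cast at hS hS'
  linarith

open scoped Classical in
/-- Two directions at a critical distance cannot both be regular when one of them has much
branching. -/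
theorem critical_pair_contradiction {P P' y : Ω → ℝ} {ϑ κ₀ τ w₀ c η ε : ℝ} {i w M n₀ : ℕ}
    (hP' : ∀ x, P' x = P x + ϑ * y x + κ₀) (hi : 4 ≤ i)
    (hn₀ : (w + 3) * i ≤ n₀) (hϑ : |ϑ| ≤ 1 / 2 ^ ((w + 4) * i))
    (hϑ' : 1 / 2 ^ ((w + 5) * i) ≤ |ϑ|) (hw : 16 / 2 ^ i ≤ w₀)
    (hgap : ∀ n < M, ∀ s : ℝ, ∃ g, s ≤ g ∧ g + w₀ ≤ s + τ / 4 ∧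
      ∀ x, g ≤ 2 ^ n * P x → g + w₀ ≤ 2 ^ n * P x)
    (hc : 0 < c) (hε : 0 < ε) (hεσ : ε * 8 * (2 ^ i) ^ 8 ≤ (c / 60) ^ 2)
    (hη0 : 0 < η) (hη : 8 * η * (2 ^ i) ^ 4 ≤ ε ^ 2 * (c / 60) ^ 2)
    (hM : 0 < M) (hΩ : 0 < Fintype.card Ω)
    (hbranch : (c * i + 3) * (M * Fintype.card Ω * Real.log 2) ≤
      ∑ n ∈ Finset.Ico n₀ M, (logMass (rect P y n (n - (w + 3) * i)) -
        logMass (rect P y n (n - (w + 2) * i))))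
    (hfar : ∑ n ∈ Finset.Ico n₀ M,
      ((Finset.univ.filter fun x => ¬ FarFromGrid τ (2 ^ n * P x)).card : ℝ)
        ≤ c / 10 * (M * Fintype.card Ω))
    (hfar' : ∑ n ∈ Finset.Ico n₀ M,
      ((Finset.univ.filter fun x => ¬ FarFromGrid τ (2 ^ n * P' x)).card : ℝ)
        ≤ c / 10 * (M * Fintype.card Ω))
    (hdef : ∑ n ∈ Finset.Ico n₀ M, ∑ x, defect (2 ^ i) (fun x => 2 ^ n * P x)
      (fun x => 2 ^ (n - (w + 3) * i) * y x) x ≤ η * c / 10 * (M * Fintype.card Ω))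
    (hdef' : ∑ n ∈ Finset.Ico n₀ M, ∑ x, defect (2 ^ i) (fun x => 2 ^ n * P' x)
      (fun x => 2 ^ (n - (w + 3) * i) * y x) x ≤ η * c / 10 * (M * Fintype.card Ω)) :
    False := by
  set Z : ℝ := ((Fintype.card Ω : ℕ) : ℝ) with hZ
  have hZ0 : 0 < Z := by rw [hZ]; exact_mod_cast hΩ
  have hM0 : (0 : ℝ) < M := by exact_mod_cast hM
  have hl2 : 0 < Real.log 2 := Real.log_pos one_lt_two
  have hi0 : (0 : ℝ) < i := by exact_mod_cast (by omega : 0 < i)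
  have hTc : ((2 ^ i : ℕ) : ℝ) = 2 ^ i := by push_cast; rfl
  have h16 : 16 ≤ 2 ^ i := by
    calc 16 = 2 ^ 4 := by norm_num
      _ ≤ 2 ^ i := Nat.pow_le_pow_right (by norm_num) hi
  set N : ℕ → Finset Ω := fun n => Finset.univ.filter
    (Branches (2 ^ i) (fun x => 2 ^ n * P x) fun x => 2 ^ (n - (w + 3) * i) * y x) with hN
  have h1 : ∀ n ∈ Finset.Ico n₀ M, logMass (rect P y n (n - (w + 3) * i)) -
      logMass (rect P y n (n - (w + 2) * i)) ≤
        Z * (3 * Real.log 2) + (N n).card * (i * Real.log 2) := by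
    intro n hn
    have hn := (Finset.mem_Ico.1 hn).1
    have e : n - (w + 2) * i = (n - (w + 3) * i) + i := by
      have : (w + 3) * i = (w + 2) * i + i := by ring
      omega
    rw [e, rect_eq_medium, rect_eq_coarse]
    refine (logMass_coarse_sub_medium_le (by omega) _ _).trans (le_of_eq ?_)
    rw [hTc, Real.log_pow]
  have h2 : ∀ n ∈ Finset.Ico n₀ M, ((N n).card : ℝ) ≤
      ((Finset.univ.filter fun x => ¬ FarFromGrid τ (2 ^ n * P x)).card : ℝ) +
      ((Finset.univ.filter fun x => ¬ FarFromGrid τ (2 ^ n * P' x)).card : ℝ) +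
      6 * (c / 60) * Z +
      (∑ x, defect (2 ^ i) (fun x => 2 ^ n * P x)
        (fun x => 2 ^ (n - (w + 3) * i) * y x) x) / η +
      (∑ x, defect (2 ^ i) (fun x => 2 ^ n * P' x)
        (fun x => 2 ^ (n - (w + 3) * i) * y x) x) / η := by
    intro n hn
    obtain ⟨hn, hnM⟩ := Finset.mem_Ico.1 hn
    have hnw : n = (n - (w + 3) * i) + (w + 3) * i := by omega
    have hpp : ∀ k : ℕ, (0 : ℝ) < 2 ^ k := fun k => by positivity
    refine branching_card_le (ζ := 2 ^ ((w + 3) * i) * ϑ) (κ₀ := 2 ^ n * κ₀) (τ := τ) (w₀ := w₀)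
      (σ := c / 60) (ε := ε) h16 (fun x => ?_) ?_ ?_ (by rwa [hTc]) (hgap n hnM) (by positivity)
      hε (by rwa [hTc]) hη0 (by rwa [hTc]) (fun x hx => (Finset.mem_filter.1 hx).2)
      (fun x hx => Finset.mem_filter.2 ⟨Finset.mem_univ _, hx⟩)
      (fun x hx => Finset.mem_filter.2 ⟨Finset.mem_univ _, hx⟩)
    · have : (2 : ℝ) ^ n = 2 ^ ((w + 3) * i) * 2 ^ (n - (w + 3) * i) := by
        rw [← pow_add]; congr 1; omega
      rw [hP', mul_add, mul_add]
      congr 2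
      rw [this]; ring
    · rw [abs_mul, abs_of_pos (hpp _), hTc]
      calc (2 : ℝ) ^ ((w + 3) * i) * |ϑ| ≤ 2 ^ ((w + 3) * i) * (1 / 2 ^ ((w + 4) * i)) := by
            gcongr
        _ = 1 / 2 ^ i := by
            rw [show (w + 4) * i = (w + 3) * i + i by ring, pow_add]
            field_simp
    · rw [abs_mul, abs_of_pos (hpp _), hTc]
      calc 1 / ((2 : ℝ) ^ i) ^ 2 = 2 ^ ((w + 3) * i) * (1 / 2 ^ ((w + 5) * i)) := by
            rw [show (w + 5) * i = (w + 3) * i + i * 2 by ring, pow_add]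
            field_simp
            exact pow_mul _ _ _
        _ ≤ _ := by gcongr
  have h1s := hbranch.trans (Finset.sum_le_sum h1)
  have h2s := Finset.sum_le_sum h2
  rw [Finset.sum_add_distrib, Finset.sum_const, nsmul_eq_mul, ← Finset.sum_mul] at h1s
  simp only [Finset.sum_add_distrib, Finset.sum_const, nsmul_eq_mul, ← Finset.sum_div] at h2s
  have hcard : (((Finset.Ico n₀ M).card : ℕ) : ℝ) ≤ M := by
    rw [Nat.card_Ico]; exact_mod_cast Nat.sub_le _ _
  set V : ℝ := ∑ n ∈ Finset.Ico n₀ M, ((N n).card : ℝ)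
  have a1 : (((Finset.Ico n₀ M).card : ℕ) : ℝ) * (Z * (3 * Real.log 2)) ≤
      M * (Z * (3 * Real.log 2)) := by gcongr
  have a2 : (((Finset.Ico n₀ M).card : ℕ) : ℝ) * (6 * (c / 60) * Z) ≤
      M * (6 * (c / 60) * Z) := by gcongr
  have a3 : c * (M * Z) ≤ V := by
    have : c * (M * Z) * (i * Real.log 2) ≤ V * (i * Real.log 2) := by linarith
    exact le_of_mul_le_mul_right this (by positivity)
  have a4 : (∑ n ∈ Finset.Ico n₀ M, ∑ x, defect (2 ^ i) (fun x => 2 ^ n * P x)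
      (fun x => 2 ^ (n - (w + 3) * i) * y x) x) / η ≤ c / 10 * (M * Z) := by
    rw [div_le_iff₀ hη0]; linarith
  have a5 : (∑ n ∈ Finset.Ico n₀ M, ∑ x, defect (2 ^ i) (fun x => 2 ^ n * P' x)
      (fun x => 2 ^ (n - (w + 3) * i) * y x) x) / η ≤ c / 10 * (M * Z) := by
    rw [div_le_iff₀ hη0]; linarith
  have : 0 < c * (M * Z) := by positivity
  linarith

end CriticalPairs

section Multiscale

variable {Ω : Type*} [Fintype Ω]

/-- The gain of `logMass` when rectangles of height `2⁻ⁿ` are widened from ratio `2 ^ (w * i)`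
to ratio `2 ^ ((w + 1) * i)`. -/
def widthGain (P y : Ω → ℝ) (n i w : ℕ) : ℝ :=
  logMass (rect P y n (n - (w + 1) * i)) - logMass (rect P y n (n - w * i))

/-- The sum over all heights of `widthGain`. -/
def totalGain (P y : Ω → ℝ) (M i w : ℕ) : ℝ := ∑ n ∈ Finset.range M, widthGain P y n i w

theorem widthGain_nonneg (P y : Ω → ℝ) (n i w : ℕ) : 0 ≤ widthGain P y n i w := by
  have : n - (w + 1) * i ≤ n - w * i := Nat.sub_le_sub_left (Nat.mul_le_mul_right _ (by omega)) _
  exact sub_nonneg.2 (Refines.logMass_le (rect_refines le_rfl this))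

theorem widthGain_le (P y : Ω → ℝ) (n i w : ℕ) :
    widthGain P y n i w ≤ Fintype.card Ω * (i * Real.log 2) := by
  have h1 : n - (w + 1) * i ≤ n - w * i := Nat.sub_le_sub_left (Nat.mul_le_mul_right _ (by omega)) _
  obtain ⟨k, hk⟩ := Nat.exists_eq_add_of_le h1
  have hki : k ≤ i := by
    have : (w + 1) * i = w * i + i := by ring
    omega
  rw [widthGain, hk, rect_eq_medium, rect_eq_coarse]
  refine (logMass_sub_le_of_card_image _ _ ((2 ^ k : ℕ) : ℝ) (by positivity) fun x => by
    exact_mod_cast card_image_medium_le (by positivity) _ _ x).trans ?_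
  push_cast
  rw [Real.log_pow]
  have := Real.log_nonneg (one_le_two (α := ℝ))
  gcongr

theorem widthGain_le_widthGain_zero (P y : Ω → ℝ) (n i w : ℕ) :
    widthGain P y n i w ≤ widthGain P y (n - w * i) i 0 := by
  have e : n - (w + 1) * i = n - w * i - i := by
    have : (w + 1) * i = w * i + i := by ring
    omega
  simp only [widthGain, e, zero_add, one_mul, zero_mul, Nat.sub_zero]
  exact rect_log_submodular P y (Nat.sub_le _ _) (Nat.sub_le _ _)

theorem sum_range_sub_le {f : ℕ → ℝ} (hf : ∀ n, 0 ≤ f n) (h0 : f 0 = 0) (M k : ℕ) :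
    ∑ n ∈ Finset.range M, f (n - k) ≤ ∑ n ∈ Finset.range M, f n := by
  induction M with
  | zero => simp
  | succ M ih =>
    rcases lt_or_ge M k with h | h
    · have : ∑ n ∈ Finset.range (M + 1), f (n - k) = 0 := by
        refine Finset.sum_eq_zero fun n hn => ?_
        rw [Finset.mem_range] at hn
        rw [show n - k = 0 by omega, h0]
      rw [this]; exact Finset.sum_nonneg fun n _ => hf n
    · have hsub : ∑ n ∈ Finset.Ico k (M + 1), f (n - k) = ∑ n ∈ Finset.range (M + 1 - k), f n := by
        rw [Finset.sum_Ico_eq_sum_range]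
        exact Finset.sum_congr rfl fun n _ => by rw [Nat.add_sub_cancel_left]
      have hz : ∑ n ∈ Finset.range k, f (n - k) = 0 :=
        Finset.sum_eq_zero fun n hn => by
          rw [Finset.mem_range] at hn
          rw [show n - k = 0 by omega, h0]
      rw [← Finset.sum_range_add_sum_Ico _ (by omega : k ≤ M + 1), hz, hsub, zero_add]
      exact Finset.sum_le_sum_of_subset_of_nonneg
        (Finset.range_mono (Nat.sub_le _ _)) fun n _ _ => hf n

theorem totalGain_nonneg (P y : Ω → ℝ) (M i w : ℕ) : 0 ≤ totalGain P y M i w :=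
  Finset.sum_nonneg fun _ _ => widthGain_nonneg ..

theorem totalGain_le_totalGain_zero (P y : Ω → ℝ) (M i w : ℕ) :
    totalGain P y M i w ≤ totalGain P y M i 0 :=
  (Finset.sum_le_sum fun n _ => widthGain_le_widthGain_zero P y n i w).trans
    (sum_range_sub_le (fun n => widthGain_nonneg P y n i 0) (by simp [widthGain]) M _)

theorem totalGain_zero_le (P y : Ω → ℝ) (M i : ℕ) :
    totalGain P y M i 0 ≤ i * (M * Fintype.card Ω * Real.log 2) := by
  refine (Finset.sum_le_sum fun n _ => widthGain_le P y n i 0).trans (le_of_eq ?_)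
  simp; ring

theorem sum_totalGain (P y : Ω → ℝ) (M i V : ℕ) :
    ∑ w ∈ Finset.range V, totalGain P y M i w = totalGain P y M (V * i) 0 := by
  simp only [totalGain]
  rw [Finset.sum_comm]
  refine Finset.sum_congr rfl fun n _ => ?_
  have := Finset.sum_range_sub (fun w => logMass (rect P y n (n - w * i))) V
  simp only [widthGain]
  rw [this]
  simp

theorem card_filter_lt_mul_le {ι : Type*} (s : Finset ι) {f : ι → ℝ} (hf : ∀ x ∈ s, 0 ≤ f x)
    {a b : ℝ} [DecidablePred fun x => a < f x] (hb : ∑ x ∈ s, f x ≤ b) :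
    ((s.filter fun x => a < f x).card : ℝ) * a ≤ b := by
  refine le_trans ?_ hb
  calc ((s.filter fun x => a < f x).card : ℝ) * a = ∑ x ∈ s.filter (fun x => a < f x), a := by simp
    _ ≤ ∑ x ∈ s.filter (fun x => a < f x), f x :=
        Finset.sum_le_sum fun x hx => (Finset.mem_filter.1 hx).2.le
    _ ≤ _ := Finset.sum_le_sum_of_subset_of_nonneg (Finset.filter_subset _ _)
        fun x hx _ => hf x hx

theorem exists_small_drop {u : ℕ → ℝ} {R : ℕ} (hR : 0 < R) (h0 : 0 ≤ u R) :
    ∃ r < R, u r - u (r + 1) ≤ u 0 / R := by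
  by_contra! h
  have h1 : ∑ r ∈ Finset.range R, u 0 / R < ∑ r ∈ Finset.range R, (u r - u (r + 1)) :=
    Finset.sum_lt_sum_of_nonempty ⟨0, by simpa using hR⟩ fun r hr => h r (Finset.mem_range.1 hr)
  rw [Finset.sum_range_sub', Finset.sum_const, Finset.card_range, nsmul_eq_mul,
    mul_div_cancel₀ _ (by positivity)] at h1
  linarith

/-- The total defect at relative width `w`. -/
def totalDefect (P y : Ω → ℝ) (n₀ M i w : ℕ) : ℝ :=
  ∑ n ∈ Finset.Ico n₀ M, ∑ x, defect (2 ^ i) (fun x => 2 ^ n * P x)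
      (fun x => 2 ^ (n - (w + 3) * i) * y x) x

theorem totalDefect_nonneg (P y : Ω → ℝ) (n₀ M i w : ℕ) : 0 ≤ totalDefect P y n₀ M i w :=
  Finset.sum_nonneg fun _ _ => Finset.sum_nonneg fun _ _ => defect_nonneg ..

theorem sum_totalDefect_le (P y : Ω → ℝ) {n₀ M i W : ℕ} (hn₀ : (W + 3) * i ≤ n₀) :
    ∑ w ∈ Finset.range W, totalDefect P y n₀ M i w ≤
      3 * (gridPairs ((2 ^ i) ^ 4)).card * (M * Fintype.card Ω) := by
  simp only [totalDefect]
  rw [Finset.sum_comm]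
  have key : ∀ n ∈ Finset.Ico n₀ M, ∑ w ∈ Finset.range W, ∑ x, defect (2 ^ i) (fun x => 2 ^ n * P x)
      (fun x => 2 ^ (n - (w + 3) * i) * y x) x ≤
        (gridPairs ((2 ^ i) ^ 4)).card * (3 * Fintype.card Ω) := by
    intro n hn
    have hn := (Finset.mem_Ico.1 hn).1
    set e : (ℤ × ℤ) → ℕ → ℝ := fun c w =>
      energy (rect P y n (n - w * i)) (slab ((2 ^ i) ^ 4) (fun x => 2 ^ n * P x) c) with he
    have h1 : ∀ w ∈ Finset.range W, ∑ x, defect (2 ^ i) (fun x => 2 ^ n * P x)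
        (fun x => 2 ^ (n - (w + 3) * i) * y x) x =
          ∑ c ∈ gridPairs ((2 ^ i) ^ 4), (e c w - e c (w + 3)) := by
      intro w hw
      have hw := Finset.mem_range.1 hw
      simp only [defect]
      rw [Finset.sum_comm]
      refine Finset.sum_congr rfl fun c _ => ?_
      rw [Refines.sum_sq_ratio_sub (fine_refines_coarse (by positivity) _ _), ← rect_eq_fine,
        ← rect_eq_coarse]
      have h3 : (w + 3) * i ≤ n := (Nat.mul_le_mul_right i (by omega)).trans (hn₀.trans hn)
      have h4 : (w + 3) * i = w * i + 3 * i := by ring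
      rw [show n - (w + 3) * i + 3 * i = n - w * i by omega]
    rw [Finset.sum_congr rfl h1, Finset.sum_comm]
    rw [← nsmul_eq_mul, ← Finset.sum_const]
    refine Finset.sum_le_sum fun c _ => ?_
    have h2 := Finset.sum_range_sub' (fun w => e c w + e c (w + 1) + e c (w + 2)) W
    rw [Finset.sum_congr rfl (g := fun w => (e c w + e c (w + 1) + e c (w + 2)) -
      (e c (w + 1) + e c (w + 1 + 1) + e c (w + 1 + 2))) fun w _ => by ring_nf, h2]
    have hle : ∀ w, e c w ≤ Fintype.card Ω := fun w => energy_le _ _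
    have hge : ∀ w, 0 ≤ e c w := fun w => energy_nonneg _ _
    linarith [hle 0, hle (0 + 1), hle (0 + 2), hge W, hge (W + 1), hge (W + 2)]
  refine (Finset.sum_le_sum key).trans ?_
  rw [Finset.sum_const, nsmul_eq_mul, Nat.card_Ico]
  have : ((M - n₀ : ℕ) : ℝ) ≤ M := by exact_mod_cast Nat.sub_le _ _
  calc _ ≤ (M : ℝ) * ((gridPairs ((2 ^ i) ^ 4)).card * (3 * Fintype.card Ω)) := by gcongr
    _ = _ := by ring

/-- The projection branches substantially and has a small defect at relative width `w`. -/
def RegularAt (P y : Ω → ℝ) (c η : ℝ) (n₀ M i w : ℕ) : Prop :=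
  (c * i + 3) * (M * Fintype.card Ω * Real.log 2) ≤
      ∑ n ∈ Finset.Ico n₀ M, widthGain P y n i (w + 2) ∧
  totalDefect P y n₀ M i w ≤ η * c / 10 * (M * Fintype.card Ω)

open scoped Classical in
/-- Some scale of the chain is regular at most relative widths. -/
theorem exists_regular_scale {P y : Ω → ℝ} {c : ℝ} {i W : ℕ → ℕ} {η : ℕ → ℝ} {R M : ℕ}
    (hR : 0 < R) (hM : 0 < M) (hΩ : 0 < Fintype.card Ω) (hc : 0 < c)
    (hchain : ∀ r, i (r + 1) = (W r + 2) * i r) (hi : ∀ r, 6 ≤ c * i r) (hη : ∀ r, 0 < η r)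
    (hMW : ∀ r < R, 2 * ((W r + 3) * i r : ℕ) ≤ c * M)
    (hgain : ∀ r < R, 3 * c * i r * (M * Fintype.card Ω * Real.log 2) ≤ totalGain P y M (i r) 0) :
    ∃ r < R, (((Finset.range (W r)).filter fun w =>
        ¬ RegularAt P y c (η r) ((W r + 3) * i r) M (i r) w).card : ℝ) ≤
      (W r + 2) / (R * c) + 30 * (gridPairs ((2 ^ i r) ^ 4)).card / (η r * c) := by
  set Z : ℝ := ((Fintype.card Ω : ℕ) : ℝ) with hZ
  have hZ0 : 0 < Z := by rw [hZ]; exact_mod_cast hΩ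
  have hM0 : (0 : ℝ) < M := by exact_mod_cast hM
  have hR0 : (0 : ℝ) < R := by exact_mod_cast hR
  have hl2 : 0 < Real.log 2 := Real.log_pos one_lt_two
  have hi0 : ∀ r, (0 : ℝ) < i r := fun r => by
    rcases Nat.eq_zero_or_pos (i r) with h | h
    · have := hi r; rw [h] at this; norm_num at this
    · exact_mod_cast h
  set Q : ℝ := M * Z * Real.log 2 with hQ
  have hQ0 : 0 < Q := by positivity
  obtain ⟨r, hr, hdrop⟩ := exists_small_drop (u := fun r => totalGain P y M (i r) 0 / i r) hR
    (div_nonneg (totalGain_nonneg ..) (hi0 R).le)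
  refine ⟨r, hr, ?_⟩
  set n₀ := (W r + 3) * i r with hn₀
  set g : ℕ → ℝ := totalGain P y M (i r) with hg
  have hdrop1 : g 0 / i r - (∑ w ∈ Finset.range (W r + 2), g w) / ((W r + 2) * i r) ≤ Q / R := by
    have h1 : totalGain P y M (i 0) 0 / i 0 ≤ Q := by
      rw [div_le_iff₀ (hi0 0), mul_comm]; exact totalGain_zero_le P y M (i 0)
    have h2 : ∑ w ∈ Finset.range (W r + 2), g w = totalGain P y M (i (r + 1)) 0 := by
      rw [hg, sum_totalGain, hchain]
    have h3 : ((W r + 2 : ℝ) * i r) = (i (r + 1) : ℝ) := by rw [hchain]; push_cast; rfl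
    rw [h2, h3]
    refine hdrop.trans ?_
    gcongr
  have hdrop2 : ∑ w ∈ Finset.range (W r + 2), (g 0 - g w) ≤ (W r + 2) * i r * (Q / R) := by
    rw [Finset.sum_sub_distrib, Finset.sum_const, Finset.card_range, nsmul_eq_mul]
    have hpos : (0 : ℝ) < (W r + 2) * i r := by have := hi0 r; positivity
    have := mul_le_mul_of_nonneg_left hdrop1 hpos.le
    refine le_trans (le_of_eq ?_) this
    have := hi0 r
    push_cast
    field_simp
  set B₁ := (Finset.range (W r + 2)).filter fun w => c * i r * Q < g 0 - g w
  set B₂ := (Finset.range (W r)).filter fun w =>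
    η r * c / 10 * (M * Z) < totalDefect P y n₀ M (i r) w
  have hB₁ : (B₁.card : ℝ) ≤ (W r + 2) / (R * c) := by
    have h := card_filter_lt_mul_le (Finset.range (W r + 2)) (f := fun w => g 0 - g w)
      (fun w _ => sub_nonneg.2 (totalGain_le_totalGain_zero ..)) (a := c * i r * Q) hdrop2
    rw [le_div_iff₀ (by positivity)]
    have hpos : (0 : ℝ) < i r * Q := by have := hi0 r; positivity
    refine le_of_mul_le_mul_right ?_ hpos
    have h' := mul_le_mul_of_nonneg_right h hR0.le
    calc (B₁.card : ℝ) * (R * c) * (i r * Q) = B₁.card * (c * i r * Q) * R := by ring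
      _ ≤ (W r + 2) * i r * (Q / R) * R := h'
      _ = _ := by field_simp
  have hB₂ : (B₂.card : ℝ) ≤ 30 * (gridPairs ((2 ^ i r) ^ 4)).card / (η r * c) := by
    have h := card_filter_lt_mul_le (Finset.range (W r)) (f := totalDefect P y n₀ M (i r))
      (fun w _ => totalDefect_nonneg ..) (a := η r * c / 10 * (M * Z))
      (sum_totalDefect_le P y hn₀.ge)
    have := hη r
    rw [le_div_iff₀ (by positivity)]
    have hpos : (0 : ℝ) < M * Z := by positivity
    refine le_of_mul_le_mul_right ?_ hpos
    change (B₂.card : ℝ) * _ ≤ _ at h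
    rw [← hZ] at h
    linarith
  have hsub : ((Finset.range (W r)).filter fun w => ¬ RegularAt P y c (η r) n₀ M (i r) w).card ≤
      B₁.card + B₂.card := by
    have hs : (Finset.range (W r)).filter (fun w => ¬ RegularAt P y c (η r) n₀ M (i r) w) ⊆
        (Finset.range (W r)).filter (fun w => w + 2 ∈ B₁) ∪ B₂ := by
      intro w hw
      obtain ⟨hw, hreg⟩ := Finset.mem_filter.1 hw
      by_contra hcon
      simp only [Finset.mem_union, not_or] at hcon
      refine hreg ⟨?_, ?_⟩
      · have h1 : ¬ c * i r * Q < g 0 - g (w + 2) := fun h => hcon.1 <| Finset.mem_filter.2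
          ⟨hw, Finset.mem_filter.2 ⟨by simpa using hw, h⟩⟩
        have h2 := hgain r hr
        rw [← hZ, ← hQ]
        have h3 : g (w + 2) = ∑ n ∈ Finset.range M, widthGain P y n (i r) (w + 2) := rfl
        have hn₀M : (n₀ : ℝ) ≤ c * M / 2 := by have := hMW r hr; linarith
        have h4 : g (w + 2) ≤ n₀ * (Z * (i r * Real.log 2)) +
            ∑ n ∈ Finset.Ico n₀ M, widthGain P y n (i r) (w + 2) := by
          have h5 : ∑ n ∈ Finset.range n₀, widthGain P y n (i r) (w + 2) ≤
              n₀ * (Z * (i r * Real.log 2)) := by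
            refine (Finset.sum_le_sum fun n _ => widthGain_le P y n (i r) (w + 2)).trans ?_
            simp [hZ]
          rcases le_or_gt n₀ M with hle | hgt
          · rw [h3, ← Finset.sum_range_add_sum_Ico _ hle]; linarith
          · have h6 : ∑ n ∈ Finset.range M, widthGain P y n (i r) (w + 2) ≤
                ∑ n ∈ Finset.range n₀, widthGain P y n (i r) (w + 2) :=
              Finset.sum_le_sum_of_subset_of_nonneg (Finset.range_mono hgt.le)
                fun n _ _ => widthGain_nonneg ..
            rw [Finset.Ico_eq_empty (by omega), Finset.sum_empty, add_zero, h3]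
            exact h6.trans h5
        have h7 : (n₀ : ℝ) * (Z * (i r * Real.log 2)) ≤ c / 2 * i r * Q := by
          have := hi0 r
          calc (n₀ : ℝ) * (Z * (i r * Real.log 2)) ≤ c * M / 2 * (Z * (i r * Real.log 2)) := by
                gcongr
            _ = _ := by rw [hQ]; ring
        have h8 : 3 * Q ≤ c / 2 * i r * Q := by
          have := hi r
          have : 3 ≤ c / 2 * i r := by linarith
          gcongr
        have h9 := not_lt.1 h1
        linarith
      · exact not_lt.1 fun h => hcon.2 (Finset.mem_filter.2 ⟨hw, h⟩)
    refine (Finset.card_le_card hs).trans ((Finset.card_union_le _ _).trans ?_)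
    refine Nat.add_le_add_right ?_ _
    exact Finset.card_le_card_of_injOn (fun w => w + 2)
      (fun w hw => (Finset.mem_filter.1 hw).2) (fun a _ b _ h => by simpa using h)
  calc _ ≤ ((B₁.card + B₂.card : ℕ) : ℝ) := by exact_mod_cast hsub
    _ = (B₁.card : ℝ) + B₂.card := by push_cast; rfl
    _ ≤ _ := add_le_add hB₁ hB₂

end Multiscale

section Projections

variable {Ω : Type*}

open scoped Classical in
/-- Among any `m` consecutive intervals of the same length `δ ≥ δ₀`, at most `C * m ^ t` meet the
range of `P`. -/
def SparseRange (t C δ₀ : ℝ) (P : Ω → ℝ) : Prop :=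
  ∀ a δ : ℝ, δ₀ ≤ δ → ∀ m : ℕ, 1 ≤ m →
    (((Finset.range m).filter fun k : ℕ => ∃ x, a + k * δ ≤ P x ∧ P x < a + (k + 1) * δ).card : ℝ)
      ≤ C * (m : ℝ) ^ t

theorem SparseRange.add_const {t C δ₀ : ℝ} {P : Ω → ℝ} (h : SparseRange t C δ₀ P) (κ₀ : ℝ) :
    SparseRange t C δ₀ fun x => P x + κ₀ := by
  classical
  intro a δ hδ m hm
  refine le_trans (le_of_eq ?_) (h (a - κ₀) δ hδ m hm)
  congr 2
  refine Finset.filter_congr fun k _ => exists_congr fun x => ?_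
  constructor <;> rintro ⟨h1, h2⟩ <;> constructor <;> linarith

theorem SparseRange.exists_gap {t C δ₀ τ : ℝ} {P : Ω → ℝ} (h : SparseRange t C δ₀ P) {m n : ℕ}
    (hτ : 0 < τ) (hm : C * (m : ℝ) ^ t < m) (hC : 0 ≤ C) (hδ : δ₀ ≤ τ / (4 * m) / 2 ^ n) (s : ℝ) :
    ∃ g, s ≤ g ∧ g + τ / (4 * m) ≤ s + τ / 4 ∧
      ∀ x, g ≤ 2 ^ n * P x → g + τ / (4 * m) ≤ 2 ^ n * P x := by
  classical
  have hm0 : (0 : ℝ) < m := lt_of_le_of_lt (by positivity) hm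
  have hm1 : 1 ≤ m := by exact_mod_cast hm0
  set w₀ := τ / (4 * m) with hw₀
  have hw : m * w₀ = τ / 4 := by rw [hw₀]; field_simp
  have hw0 : 0 < w₀ := by positivity
  have h1 := (h (s / 2 ^ n) (w₀ / 2 ^ n) hδ m hm1).trans_lt hm
  obtain ⟨k, hk, hk'⟩ : ∃ k ∈ Finset.range m, k ∉ (Finset.range m).filter fun k : ℕ =>
      ∃ x, s / 2 ^ n + k * (w₀ / 2 ^ n) ≤ P x ∧ P x < s / 2 ^ n + (k + 1) * (w₀ / 2 ^ n) := by
    by_contra! hcon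
    have := Finset.card_le_card (show Finset.range m ⊆ _ from hcon)
    rw [Finset.card_range] at this
    have : (m : ℝ) ≤ _ := Nat.cast_le.2 this
    exact absurd h1 (not_lt.2 this)
  have hkm : (k : ℝ) + 1 ≤ m := by exact_mod_cast Finset.mem_range.1 hk
  refine ⟨s + k * w₀, by have := hw0.le; nlinarith [(Nat.cast_nonneg k : (0 : ℝ) ≤ k)], ?_, ?_⟩
  · nlinarith
  · intro x hx
    by_contra hcon
    push Not at hcon
    refine hk' (Finset.mem_filter.2 ⟨hk, x, ?_, ?_⟩)
    · rw [show s / 2 ^ n + k * (w₀ / 2 ^ n) = (s + k * w₀) / 2 ^ n by ring,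
        div_le_iff₀ (by positivity)]
      linarith
    · rw [show s / 2 ^ n + (k + 1) * (w₀ / 2 ^ n) = (s + k * w₀ + w₀) / 2 ^ n by ring,
        lt_div_iff₀ (by positivity)]
      linarith

theorem rect_injective_of_separated {p y P : Ω → ℝ} {θ κ₀ : ℝ} {N n : ℕ}
    (hsep : ∀ x x', x ≠ x' → 1 / 2 ^ N ≤ max |p x - p x'| |y x - y x'|) (hθ : |θ| ≤ 1)
    (hP : ∀ x, P x = p x + θ * y x + κ₀) (hn : N + 1 ≤ n) : Function.Injective (rect P y n n) := by
  intro x x' hxx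
  by_contra hne
  have h := hsep x x' hne
  simp only [rect, lev, Prod.mk.injEq] at hxx
  have h1 := Int.abs_sub_lt_one_of_floor_eq_floor hxx.1
  have h2 := Int.abs_sub_lt_one_of_floor_eq_floor hxx.2
  rw [← mul_sub, abs_mul, abs_of_pos (by positivity : (0 : ℝ) < 2 ^ n), ← lt_div_iff₀'
    (by positivity)] at h1 h2
  have h3 : 1 / (2 : ℝ) ^ n ≤ 1 / 2 ^ (N + 1) := by
    gcongr; norm_num
  have h4 : 1 / (2 : ℝ) ^ (N + 1) = 1 / 2 ^ N / 2 := by rw [pow_succ]; field_simp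
  have h5 : |p x - p x'| ≤ |P x - P x'| + |y x - y x'| := by
    have : p x - p x' = (P x - P x') - θ * (y x - y x') := by rw [hP, hP]; ring
    rw [this]
    refine (abs_sub _ _).trans ?_
    rw [abs_mul]
    nlinarith [abs_nonneg (y x - y x'), abs_nonneg θ]
  have h6 : max |p x - p x'| |y x - y x'| < 1 / 2 ^ N := by
    apply max_lt
    · linarith
    · have : (0 : ℝ) < 1 / 2 ^ N := by positivity
      linarith
  linarith

variable [Fintype Ω]

theorem SparseRange.card_image_rect_le {t C δ₀ : ℝ} {P : Ω → ℝ} (h : SparseRange t C δ₀ P)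
    (y : Ω → ℝ) {n l l' : ℕ} (hl : l ≤ n) (hδ : δ₀ ≤ 1 / 2 ^ n) (X : Ω) :
    (((cellOf (rect P y l l') X).image (rect P y n l')).card : ℝ) ≤
      C * ((2 ^ (n - l) : ℕ) : ℝ) ^ t := by
  classical
  refine le_trans ?_ (h ((lev P l X : ℝ) / 2 ^ l) (1 / 2 ^ n) hδ (2 ^ (n - l)) Nat.one_le_two_pow)
  norm_cast
  refine le_trans (Finset.card_le_card (t := Finset.image (fun k : ℕ =>
    (2 ^ (n - l) * lev P l X + (k : ℤ), lev y l' X)) ((Finset.range (2 ^ (n - l))).filter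
      fun k : ℕ => ∃ x, (lev P l X : ℝ) / 2 ^ l + k * (1 / 2 ^ n) ≤ P x ∧
        P x < (lev P l X : ℝ) / 2 ^ l + (k + 1) * (1 / 2 ^ n))) ?_) (Finset.card_image_le.trans
          (le_of_eq (by push_cast; rfl)))
  intro z hz
  obtain ⟨x, hx, rfl⟩ := Finset.mem_image.1 hz
  have hx := mem_cellOf.1 hx
  simp only [rect, Prod.mk.injEq] at hx
  have hn : (2 : ℝ) ^ n = 2 ^ (n - l) * 2 ^ l := by rw [← pow_add]; congr 1; omega
  have h1 := floor_mul_mem (T := 2 ^ (n - l)) (s := 2 ^ l * P x)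
  have h2 : ⌊((2 ^ (n - l) : ℕ) : ℝ) * (2 ^ l * P x)⌋ = lev P n x := by
    rw [lev, hn]; push_cast; rw [mul_assoc]
  have h3 : ⌊2 ^ l * P x⌋ = lev P l X := hx.1
  rw [h2, h3] at h1
  have h4 := h1.2.resolve_right (by positivity)
  obtain ⟨k, hk⟩ := Int.eq_ofNat_of_zero_le (sub_nonneg.2 h1.1)
  have hk' : lev P n x = 2 ^ (n - l) * lev P l X + (k : ℤ) := by
    push_cast at hk; linarith
  have hpos : (0 : ℝ) < 2 ^ l := by positivity
  have hpos' : (0 : ℝ) < 2 ^ n := by positivity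
  have e : ∀ v : ℝ, (lev P l X : ℝ) / 2 ^ l + v * (1 / 2 ^ n) =
      (2 ^ (n - l) * lev P l X + v) / 2 ^ n := by
    intro v; rw [hn]; field_simp
  refine Finset.mem_image.2 ⟨k, Finset.mem_filter.2 ⟨?_, x, ?_, ?_⟩, ?_⟩
  · rw [Finset.mem_range]; push_cast at hk h4; zify; linarith
  · rw [e, div_le_iff₀ hpos']
    have := Int.floor_le ((2 : ℝ) ^ n * P x)
    change ((lev P n x : ℤ) : ℝ) ≤ _ at this
    rw [hk'] at this; push_cast at this; linarith
  · rw [e, lt_div_iff₀ hpos']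
    have := Int.lt_floor_add_one ((2 : ℝ) ^ n * P x)
    change _ < ((lev P n x : ℤ) : ℝ) + 1 at this
    rw [hk'] at this; push_cast at this; linarith
  · simp only [rect, hk', hx.2]

theorem SparseRange.le_totalGain {t C δ₀ : ℝ} {P : Ω → ℝ} (h : SparseRange t C δ₀ P)
    (y : Ω → ℝ) {M i : ℕ} (ht : 0 ≤ t) (hC : 0 < C) (hδ : δ₀ ≤ 1 / 2 ^ M) (hiM : i ≤ M)
    (hzero : ∀ n, M - i ≤ n → logMass (rect P y n n) = 0) :
    i * logMass (rect P y 0 0) - M * Fintype.card Ω * (Real.log C + t * i * Real.log 2) ≤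
      totalGain P y M i 0 := by
  classical
  have hl2 := Real.log_nonneg (one_le_two (α := ℝ))
  set A : ℕ → ℝ := fun n => logMass (rect P y n n) with hA
  have hA0 : ∀ n, 0 ≤ A n := fun n => logMass_nonneg _
  have h1 : ∀ n ∈ Finset.range M, A (n - i) - A n -
      Fintype.card Ω * (Real.log C + t * i * Real.log 2) ≤ widthGain P y n i 0 := by
    intro n hn
    have hnM : (2 : ℝ) ^ n ≤ 2 ^ M := by gcongr; norm_num; exact (Finset.mem_range.1 hn).le
    have := logMass_sub_le_of_card_image (rect P y (n - i) (n - i)) (rect P y n (n - i))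
      (C * ((2 ^ (n - (n - i)) : ℕ) : ℝ) ^ t) (by positivity)
      (h.card_image_rect_le y (Nat.sub_le _ _) (hδ.trans (by gcongr)))
    have h2 : Real.log (C * ((2 ^ (n - (n - i)) : ℕ) : ℝ) ^ t) ≤
        Real.log C + t * i * Real.log 2 := by
      rw [Real.log_mul hC.ne' (by positivity), Real.log_rpow (by positivity)]
      push_cast
      rw [Real.log_pow, mul_assoc]
      have : ((n - (n - i) : ℕ) : ℝ) ≤ i := by exact_mod_cast (by omega)
      gcongr
    have h3 : (Fintype.card Ω : ℝ) * Real.log (C * ((2 ^ (n - (n - i)) : ℕ) : ℝ) ^ t) ≤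
        Fintype.card Ω * (Real.log C + t * i * Real.log 2) := by gcongr
    simp only [widthGain, zero_add, one_mul, zero_mul, Nat.sub_zero, hA]
    linarith
  have h2 := Finset.sum_le_sum h1
  rw [Finset.sum_sub_distrib, Finset.sum_sub_distrib, Finset.sum_const, Finset.card_range,
    nsmul_eq_mul] at h2
  have h3 : ∑ n ∈ Finset.range M, A n = ∑ n ∈ Finset.range (M - i), A n := by
    rw [← Finset.sum_range_add_sum_Ico _ (Nat.sub_le M i)]
    rw [Finset.sum_eq_zero (s := Finset.Ico (M - i) M) fun n hn =>
      hzero n (Finset.mem_Ico.1 hn).1, add_zero]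
  have h4 : i * A 0 + ∑ n ∈ Finset.range (M - i), A n = ∑ n ∈ Finset.range M, A (n - i) := by
    rw [← Finset.sum_range_add_sum_Ico _ hiM, Finset.sum_Ico_eq_sum_range]
    congr 1
    · rw [Finset.sum_congr rfl (g := fun _ => A 0) fun n hn => by
        rw [Nat.sub_eq_zero_of_le (Finset.mem_range.1 hn).le]]
      simp
    · exact Finset.sum_congr rfl fun n _ => by rw [Nat.add_sub_cancel_left]
  change i * A 0 - _ ≤ totalGain P y M i 0
  change _ ≤ totalGain P y M i 0 at h2
  linarith

theorem logMass_eq_zero_of_injective {β : Type*} {f : Ω → β} (hf : Function.Injective f) :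
    logMass f = 0 := by
  refine Finset.sum_eq_zero fun x _ => ?_
  have : cellOf f x = {x} := by
    ext z; simp only [mem_cellOf, Finset.mem_singleton]; exact hf.eq_iff
  rw [this]; simp

theorem le_logMass_rect_zero {P y : Ω → ℝ} (hP : ∀ x, |P x| ≤ 3) (hy : ∀ x, |y x| ≤ 1) :
    Fintype.card Ω * (Real.log (Fintype.card Ω) - 5 * Real.log 2) ≤ logMass (rect P y 0 0) := by
  classical
  have h := logMass_sub_le_of_card_image (fun _ : Ω => ()) (rect P y 0 0) 32 (by norm_num)
    (fun X => by
      have hs : (cellOf (fun _ : Ω => ()) X).image (rect P y 0 0) ⊆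
          Finset.Icc (-3) 3 ×ˢ Finset.Icc (-1) 1 := by
        intro z hz
        obtain ⟨x, -, rfl⟩ := Finset.mem_image.1 hz
        have h1 := abs_le.1 (hP x)
        have h2 := abs_le.1 (hy x)
        simp only [rect, lev, pow_zero, one_mul, Finset.mem_product, Finset.mem_Icc]
        refine ⟨⟨Int.le_floor.2 (by push_cast; linarith), ?_⟩,
          Int.le_floor.2 (by push_cast; linarith), ?_⟩
        · exact Int.cast_le.1 ((Int.floor_le _).trans (by push_cast; exact h1.2) :
            ((⌊P x⌋ : ℤ) : ℝ) ≤ ((3 : ℤ) : ℝ))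
        · exact Int.cast_le.1 ((Int.floor_le _).trans (by push_cast; exact h2.2) :
            ((⌊y x⌋ : ℤ) : ℝ) ≤ ((1 : ℤ) : ℝ))
      have := Finset.card_le_card hs
      have h' : (Finset.Icc (-3 : ℤ) 3 ×ˢ Finset.Icc (-1 : ℤ) 1).card ≤ 32 := by decide
      exact_mod_cast this.trans h')
  have e : logMass (fun _ : Ω => ()) = Fintype.card Ω * Real.log (Fintype.card Ω) := by
    simp [logMass, cellOf]
  rw [e, show (32 : ℝ) = 2 ^ 5 by norm_num, Real.log_pow] at h
  push_cast at h
  linarith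

open scoped Classical in
theorem exists_grid_shift (u : Ω → ℝ) {q : ℕ} (hq : Odd q) (M : ℕ) :
    ∃ k < q, ∑ n ∈ Finset.range M, ((Finset.univ.filter fun x =>
      ¬ FarFromGrid (1 / (2 * q)) (2 ^ n * (u x + k / q))).card : ℝ) ≤
        M * Fintype.card Ω / q := by
  have hq0 : (0 : ℝ) < q := by exact_mod_cast hq.pos
  by_contra! hcon
  have h1 : ∑ k ∈ Finset.range q, (M * Fintype.card Ω / q : ℝ) <
      ∑ k ∈ Finset.range q, ∑ n ∈ Finset.range M, ((Finset.univ.filter fun x =>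
      ¬ FarFromGrid (1 / (2 * q)) (2 ^ n * (u x + k / q))).card : ℝ) :=
    Finset.sum_lt_sum_of_nonempty ⟨0, by simpa using hq.pos⟩
      fun k hk => hcon k (Finset.mem_range.1 hk)
  rw [Finset.sum_const, Finset.card_range, nsmul_eq_mul, mul_div_cancel₀ _ hq0.ne',
    Finset.sum_comm] at h1
  refine absurd h1 (not_lt.2 ?_)
  have h2 : ∀ n ∈ Finset.range M, ∑ k ∈ Finset.range q, ((Finset.univ.filter fun x =>
      ¬ FarFromGrid (1 / (2 * q)) (2 ^ n * (u x + k / q))).card : ℝ) ≤ Fintype.card Ω := by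
    intro n _
    simp only [Finset.card_filter]
    push_cast
    rw [Finset.sum_comm]
    have : (Fintype.card Ω : ℝ) = ∑ _x : Ω, 1 := by simp
    rw [this]
    refine Finset.sum_le_sum fun x _ => ?_
    rw [← Finset.sum_filter, Finset.sum_const, nsmul_eq_mul, mul_one]
    refine Nat.cast_le_one.2 (Finset.card_le_one.2 ?_)
    have near : ∀ s : ℝ, ¬ FarFromGrid (1 / (2 * q)) s → ∃ z : ℤ, |s - z| < 1 / (2 * q) := by
      intro s hs
      rw [FarFromGrid, not_and_or, not_le, not_le] at hs
      rcases hs with hs | hs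
      · refine ⟨⌊s⌋, ?_⟩
        rw [← Int.fract, abs_of_nonneg (Int.fract_nonneg s)]; exact hs
      · refine ⟨⌊s⌋ + 1, ?_⟩
        push_cast
        have e : s - (⌊s⌋ + 1) = Int.fract s - 1 := by rw [Int.fract]; ring
        rw [e, abs_of_neg (by linarith [Int.fract_lt_one s])]; linarith
    intro k hk k' hk'
    obtain ⟨hk, hb⟩ := Finset.mem_filter.1 hk
    obtain ⟨hk', hb'⟩ := Finset.mem_filter.1 hk'
    obtain ⟨z, hz⟩ := near _ hb
    obtain ⟨z', hz'⟩ := near _ hb'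
    have h3 : |((2 ^ n * ((k : ℤ) - k') - q * (z - z') : ℤ) : ℝ)| < 1 := by
      have e : ((2 ^ n * ((k : ℤ) - k') - q * (z - z') : ℤ) : ℝ) =
          q * ((2 ^ n * (u x + k / q) - z) - (2 ^ n * (u x + k' / q) - z')) := by
        push_cast; field_simp; ring
      rw [e, abs_mul, abs_of_pos hq0]
      have h4 := (abs_sub (2 ^ n * (u x + k / q) - z) (2 ^ n * (u x + k' / q) - z'))
      have h5 : (q : ℝ) * (1 / (2 * q) + 1 / (2 * q)) = 1 := by field_simp; norm_num
      calc _ ≤ (q : ℝ) * (|2 ^ n * (u x + k / q) - z| + |2 ^ n * (u x + k' / q) - z'|) := by gcongr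
        _ < q * (1 / (2 * q) + 1 / (2 * q)) := by gcongr
        _ = 1 := h5
    have h4 : 2 ^ n * ((k : ℤ) - k') - q * (z - z') = 0 := by
      rw [← Int.cast_abs] at h3
      exact Int.abs_lt_one_iff.1 (by exact_mod_cast h3)
    have h5 : (q : ℤ) ∣ 2 ^ n * ((k : ℤ) - k') := ⟨z - z', by linarith⟩
    have hcop : IsCoprime (q : ℤ) (2 ^ n) := by
      have : Nat.Coprime q (2 ^ n) := Nat.Coprime.pow_right _ hq.coprime_two_right
      exact_mod_cast Nat.isCoprime_iff_coprime.2 this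
    have h6 := hcop.dvd_of_dvd_mul_left h5
    have hk := Finset.mem_range.1 hk
    have hk' := Finset.mem_range.1 hk'
    have h7 : (k : ℤ) - k' = 0 := Int.eq_zero_of_abs_lt_dvd h6 (by
      rw [abs_lt]; constructor <;> omega)
    omega
  refine (Finset.sum_le_sum h2).trans ?_
  simp

end Projections

section Counting

/-- The set `E` is covered by at most `n` sets of diameter at most `d`. -/
def HasCover (E : Set ℝ) (n : ℕ) (d : ℝ) : Prop :=
  ∃ 𝒰 : Finset (Set ℝ), 𝒰.card ≤ n ∧ E ⊆ ⋃ U ∈ 𝒰, U ∧ ∀ U ∈ 𝒰, ∀ x ∈ U, ∀ y ∈ U, |x - y| ≤ d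

theorem HasCover.mono {E E' : Set ℝ} {n n' : ℕ} {d d' : ℝ} (h : HasCover E n d) (hE : E' ⊆ E)
    (hn : n ≤ n') (hd : d ≤ d') : HasCover E' n' d' := by
  obtain ⟨𝒰, h1, h2, h3⟩ := h
  exact ⟨𝒰, h1.trans hn, hE.trans h2, fun U hU x hx y hy => (h3 U hU x hx y hy).trans hd⟩

theorem hasCover_biUnion {ι : Type*} (s : Finset ι) {E : ι → Set ℝ} {n : ℕ} {d : ℝ}
    (h : ∀ b ∈ s, HasCover (E b) n d) : HasCover (⋃ b ∈ s, E b) (s.card * n) d := by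
  classical
  choose! 𝒰 h1 h2 h3 using h
  refine ⟨s.biUnion 𝒰, Finset.card_biUnion_le_card_mul _ _ _ h1, ?_, ?_⟩
  · intro x hx
    obtain ⟨b, hb, hx⟩ := mem_iUnion₂.1 hx
    obtain ⟨U, hU, hx⟩ := mem_iUnion₂.1 (h2 b hb hx)
    exact mem_iUnion₂.2 ⟨U, Finset.mem_biUnion.2 ⟨b, hb, hU⟩, hx⟩
  · intro U hU
    obtain ⟨b, hb, hU⟩ := Finset.mem_biUnion.1 hU
    exact h3 b hb U hU

theorem HasCover.refine {E : Set ℝ} {n m : ℕ} {d d' : ℝ} (h : HasCover E n d)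
    (h' : ∀ U ⊆ E, (∀ x ∈ U, ∀ y ∈ U, |x - y| ≤ d) → HasCover U m d') :
    HasCover E (n * m) d' := by
  obtain ⟨𝒰, h1, h2, h3⟩ := h
  have := hasCover_biUnion 𝒰 (E := fun U => U ∩ E) (n := m) (d := d') fun U hU =>
    h' _ inter_subset_right fun x hx y hy => h3 U hU x hx.1 y hy.1
  refine this.mono ?_ (Nat.mul_le_mul_right _ h1) le_rfl
  intro x hx
  obtain ⟨U, hU, hxU⟩ := mem_iUnion₂.1 (h2 hx)
  exact mem_iUnion₂.2 ⟨U, hU, hxU, hx⟩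

theorem hasCover_one {U : Set ℝ} {d : ℝ} (h : ∀ x ∈ U, ∀ y ∈ U, |x - y| ≤ d) : HasCover U 1 d :=
  ⟨{U}, by simp, by simp, by simpa using h⟩

theorem hasCover_split {U : Set ℝ} {d : ℝ} (hd : 0 < d) (h : ∀ x ∈ U, ∀ y ∈ U, |x - y| ≤ d) {k : ℕ}
    (hk : 0 < k) : HasCover U k (d / k) := by
  classical
  rcases U.eq_empty_or_nonempty with rfl | ⟨x₀, hx₀⟩
  · exact ⟨∅, by simp, by simp, by simp⟩
  have hk0 : (0 : ℝ) < k := by exact_mod_cast hk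
  set e := d / k with he
  have he0 : 0 < e := by positivity
  have hke : k * e = d := by rw [he]; field_simp
  have hbdd : BddBelow U := ⟨x₀ - d, fun x hx => by
    have := (abs_le.1 (h x hx x₀ hx₀)).1; linarith⟩
  set m := sInf U
  have hm : ∀ x ∈ U, m ≤ x := fun x hx => csInf_le hbdd hx
  have hm' : ∀ x ∈ U, x ≤ m + d := fun x hx => by
    have : x - d ≤ m := le_csInf ⟨x₀, hx₀⟩ fun z hz => by
      have := (abs_le.1 (h x hx z hz)).2; linarith
    linarith
  refine ⟨(Finset.range k).image fun j : ℕ => Icc (m + j * e) (m + (j + 1) * e),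
    Finset.card_image_le.trans (by simp), ?_, ?_⟩
  · intro x hx
    simp only [Finset.mem_image, Finset.mem_range, iUnion_exists, mem_iUnion, exists_prop]
    set v := (x - m) / e with hv
    have hv0 : 0 ≤ v := div_nonneg (by linarith [hm x hx]) he0.le
    have hxe : x = m + v * e := by rw [hv]; field_simp; ring
    have hvk : v ≤ k := by
      rw [hv, div_le_iff₀ he0, hke]; linarith [hm' x hx]
    rcases lt_or_ge ⌊v⌋₊ k with hlt | hge
    · refine ⟨_, ⌊v⌋₊, ⟨hlt, rfl⟩, ?_⟩
      have h1 := Nat.floor_le hv0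
      have h2 := (Nat.lt_floor_add_one v).le
      rw [mem_Icc, hxe]
      constructor <;> gcongr
    · refine ⟨_, k - 1, ⟨by omega, rfl⟩, ?_⟩
      have h1 : (k : ℝ) ≤ v := (Nat.le_floor_iff hv0).1 hge
      have h2 : ((k - 1 : ℕ) : ℝ) = k - 1 := by rw [Nat.cast_sub hk]; simp
      rw [mem_Icc, hxe, h2]
      constructor <;> gcongr <;> linarith
  · intro V hV
    obtain ⟨j, -, rfl⟩ := Finset.mem_image.1 hV
    intro x hx z hz
    rw [abs_le]
    have := hx.1; have := hx.2; have := hz.1; have := hz.2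
    constructor <;> linarith

theorem hasCover_of_rigid {E : Set ℝ} (hE : ∀ θ ∈ E, |θ| ≤ 1) {i : ℕ} (B : Finset ℕ) {W : ℕ}
    (h : ∀ w < W, w ∉ B → ∀ θ ∈ E, ∀ θ' ∈ E, |θ - θ'| ≤ 1 / 2 ^ ((w + 4) * i) →
      |θ - θ'| ≤ 1 / 2 ^ ((w + 5) * i)) :
    HasCover E (2 ^ (4 * i + 1) * 2 ^ (i * B.card)) (1 / 2 ^ ((W + 4) * i)) := by
  have key : ∀ w ≤ W, HasCover E (2 ^ (4 * i + 1) * 2 ^ (i * (B.filter (· < w)).card))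
      (1 / 2 ^ ((w + 4) * i)) := by
    intro w
    induction w with
    | zero =>
      intro _
      have : HasCover E (2 ^ (4 * i + 1)) (2 / (2 ^ (4 * i + 1) : ℕ)) :=
        hasCover_split two_pos (fun x hx y hy => by
          have h1 := abs_le.1 (hE x hx)
          have h2 := abs_le.1 (hE y hy)
          rw [abs_le]; constructor <;> linarith) (by positivity)
      refine this.mono le_rfl (by simp) (le_of_eq ?_)
      push_cast; rw [pow_succ]; field_simp
    | succ w ih =>
      intro hw
      have ih := ih (by omega)
      by_cases hB : w ∈ B
      · have hc : (B.filter (· < w + 1)).card = (B.filter (· < w)).card + 1 := by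
          rw [← Finset.card_insert_of_notMem (a := w) (s := B.filter (· < w)) (by simp)]
          congr 1
          ext v
          simp only [Finset.mem_filter, Finset.mem_insert]
          constructor
          · rintro ⟨h1, h2⟩
            rcases Nat.lt_succ_iff_lt_or_eq.1 h2 with h3 | h3
            · exact Or.inr ⟨h1, h3⟩
            · exact Or.inl h3
          · rintro (rfl | ⟨h1, h2⟩)
            · exact ⟨hB, by omega⟩
            · exact ⟨h1, by omega⟩
        have := ih.refine (m := 2 ^ i) (d' := 1 / 2 ^ ((w + 4) * i) / (2 ^ i : ℕ))
          fun U _ hU => hasCover_split (by positivity) hU (by positivity)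
        refine this.mono le_rfl (le_of_eq ?_) (le_of_eq ?_)
        · rw [hc, mul_add, pow_add _ (i * _), mul_one, mul_assoc]
        · push_cast
          rw [show (w + 1 + 4) * i = (w + 4) * i + i by ring, pow_add]; field_simp
      · have := ih.refine (m := 1) (d' := 1 / 2 ^ ((w + 5) * i)) fun U hUE hU =>
          hasCover_one fun x hx z hz => h w (by omega) hB x (hUE hx) z (hUE hz) (hU x hx z hz)
        refine this.mono le_rfl ?_ (le_of_eq ?_)
        · rw [mul_one]
          gcongr
          · norm_num
          · omega
        · rw [show w + 1 + 4 = w + 5 by ring]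
  refine (key W le_rfl).mono le_rfl ?_ le_rfl
  gcongr
  · norm_num
  · exact Finset.filter_subset _ _

variable {Ω : Type*} [Fintype Ω]

open scoped Classical in
/-- A set of directions, each of which is regular at all but `b` relative widths, has a small
cover. -/
theorem hasCover_of_regular {p y : Ω → ℝ} {E : Set ℝ} {τ w₀ c η ε : ℝ} {i W M b : ℕ}
    (hE : ∀ θ ∈ E, |θ| ≤ 1) (hi : 4 ≤ i) (hw : 16 / 2 ^ i ≤ w₀)
    (hc : 0 < c) (hε : 0 < ε) (hεσ : ε * 8 * (2 ^ i) ^ 8 ≤ (c / 60) ^ 2)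
    (hη0 : 0 < η) (hη : 8 * η * (2 ^ i) ^ 4 ≤ ε ^ 2 * (c / 60) ^ 2)
    (hM : 0 < M) (hΩ : 0 < Fintype.card Ω)
    (h : ∀ θ ∈ E, ∃ κ₀, ∀ P : Ω → ℝ, (∀ x, P x = p x + θ * y x + κ₀) →
      (∀ n < M, ∀ s : ℝ, ∃ g, s ≤ g ∧ g + w₀ ≤ s + τ / 4 ∧
        ∀ x, g ≤ 2 ^ n * P x → g + w₀ ≤ 2 ^ n * P x) ∧
      (∑ n ∈ Finset.range M, ((Finset.univ.filter fun x =>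
        ¬ FarFromGrid τ (2 ^ n * P x)).card : ℝ) ≤ c / 10 * (M * Fintype.card Ω)) ∧
      ((Finset.range W).filter fun w => ¬ RegularAt P y c η ((W + 3) * i) M i w).card ≤ b) :
    HasCover E (2 ^ W * (2 ^ (4 * i + 1) * 2 ^ (i * b))) (1 / 2 ^ ((W + 4) * i)) := by
  choose! κ₀ hκ using h
  set P : ℝ → Ω → ℝ := fun θ x => p x + θ * y x + κ₀ θ with hP
  set Bad : ℝ → Finset ℕ := fun θ =>
    (Finset.range W).filter fun w => ¬ RegularAt (P θ) y c η ((W + 3) * i) M i w with hBad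
  have hκ' := fun θ hθ => hκ θ hθ (P θ) fun x => rfl
  have hcov : ∀ B ∈ (Finset.range W).powerset,
      HasCover {θ ∈ E | Bad θ = B} (2 ^ (4 * i + 1) * 2 ^ (i * b)) (1 / 2 ^ ((W + 4) * i)) := by
    intro B _
    by_cases hBb : B.card ≤ b
    · refine (hasCover_of_rigid (fun θ hθ => hE θ hθ.1) B ?_).mono le_rfl ?_ le_rfl
      · intro w hwW hwB θ hθ θ' hθ' hd
        by_contra hcon
        push Not at hcon
        have hreg : ∀ θ ∈ E, Bad θ = B → RegularAt (P θ) y c η ((W + 3) * i) M i w := by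
          intro θ _ hB
          by_contra hr
          exact hwB (hB ▸ Finset.mem_filter.2 ⟨Finset.mem_range.2 hwW, hr⟩)
        have hfar : ∀ θ ∈ E, ∑ n ∈ Finset.Ico ((W + 3) * i) M, ((Finset.univ.filter fun x =>
            ¬ FarFromGrid τ (2 ^ n * P θ x)).card : ℝ) ≤ c / 10 * (M * Fintype.card Ω) := by
          intro θ hθ
          refine le_trans (Finset.sum_le_sum_of_subset_of_nonneg ?_ fun _ _ _ => by positivity)
            (hκ' θ hθ).2.1
          intro n hn
          exact Finset.mem_range.2 (Finset.mem_Ico.1 hn).2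
        have hr := hreg θ hθ.1 hθ.2
        have hr' := hreg θ' hθ'.1 hθ'.2
        refine critical_pair_contradiction (P := P θ) (P' := P θ') (y := y) (ϑ := θ' - θ)
          (κ₀ := κ₀ θ' - κ₀ θ) (n₀ := (W + 3) * i) (w := w) (fun x => by simp only [hP]; ring) hi
          (Nat.mul_le_mul_right _ (by omega)) (by rwa [abs_sub_comm])
          (by rw [abs_sub_comm]; exact hcon.le) hw (hκ' θ hθ.1).1 hc hε hεσ hη0 hη hM hΩ
          hr.1 (hfar θ hθ.1) (hfar θ' hθ'.1) hr.2 hr'.2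
      · gcongr
        norm_num
    · refine ⟨∅, by simp, ?_, by simp⟩
      rintro θ ⟨hθ, hB⟩
      exact absurd (hB ▸ (hκ' θ hθ).2.2) hBb
  refine (hasCover_biUnion _ hcov).mono ?_ (by simp) le_rfl
  intro θ hθ
  exact mem_iUnion₂.2 ⟨Bad θ, Finset.mem_powerset.2 (Finset.filter_subset _ _), hθ, rfl⟩

end Counting

section LinearProjections

/-- The directions for which the projection of a planar set has a sparse range. -/
def sparseDirections {Ω : Type*} (p y : Ω → ℝ) (t C δ₀ : ℝ) : Set ℝ :=
  {θ | |θ| ≤ 1 ∧ SparseRange t C δ₀ fun x => p x + θ * y x}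

theorem exists_mul_rpow_lt {t C : ℝ} (ht : t < 1) : ∃ m : ℕ, C * (m : ℝ) ^ t < m := by
  have h : Tendsto (fun m : ℕ => (m : ℝ) ^ (1 - t)) atTop atTop :=
    (tendsto_rpow_atTop (by linarith)).comp tendsto_natCast_atTop_atTop
  obtain ⟨m, hm, hm0⟩ := ((h.eventually_gt_atTop C).and (eventually_gt_atTop 0)).exists
  have hm0 : (0 : ℝ) < m := by exact_mod_cast hm0
  refine ⟨m, ?_⟩
  calc C * (m : ℝ) ^ t < (m : ℝ) ^ (1 - t) * (m : ℝ) ^ t := by gcongr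
    _ = m := by rw [← Real.rpow_add hm0]; simp

/-- The sequence of scales obtained by iterating `i ↦ (W i + 2) * i`. -/
def scaleChain (W : ℕ → ℕ) (I : ℕ) : ℕ → ℕ
  | 0 => I
  | r + 1 => (W (scaleChain W I r) + 2) * scaleChain W I r

theorem le_scaleChain (W : ℕ → ℕ) (I r : ℕ) : I ≤ scaleChain W I r := by
  induction r with
  | zero => exact le_rfl
  | succ r ih => exact ih.trans (Nat.le_mul_of_pos_left _ (by omega))

theorem cover_count_le {κ : ℝ} {i W b : ℕ} (hi : 4 ≤ κ * i) (hi1 : 1 ≤ i) (hW : 20 ≤ κ * W)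
    (hb : (b : ℝ) ≤ κ / 4 * W) (hκ : 0 < κ) :
    ((2 ^ W * (2 ^ (4 * i + 1) * 2 ^ (i * b)) : ℕ) : ℝ) ≤
      (2 : ℝ) ^ (κ * ((W + 2) * i : ℕ)) := by
  push_cast
  rw [← pow_add, ← pow_add, ← Real.rpow_natCast]
  apply Real.rpow_le_rpow_of_exponent_le one_le_two
  push_cast
  have hi1' : (1 : ℝ) ≤ i := by exact_mod_cast hi1
  have h1 : (i : ℝ) * b ≤ i * (κ / 4 * W) := by gcongr
  have h2 : (W : ℝ) * 4 ≤ W * (κ * i) := by gcongr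
  have h3 : (i : ℝ) * 20 ≤ i * (κ * W) := by gcongr
  have h4 : 0 ≤ κ * i := by positivity
  have h5 : 0 ≤ κ * i * W := by positivity
  nlinarith

set_option maxHeartbeats 1600000 in
/-- The linear form of the theorem: the set of directions in which a discretised set of large
dimension has a sparse projection is covered efficiently at one of finitely many scales. -/
theorem sparseDirections_cover {t C s κ : ℝ} (ht0 : 0 ≤ t) (ht1 : t < 1) (hC : 1 ≤ C) (hst : t < s)
    (hκ : 0 < κ) :
    ∃ R : ℕ, ∀ I₀ : ℕ, ∃ L : ℕ → ℕ, (∀ r, I₀ ≤ L r) ∧ ∃ N₀ : ℕ, ∀ N ≥ N₀,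
      ∀ (Ω : Type) [Fintype Ω] (p y : Ω → ℝ), (∀ x, |p x| ≤ 1) → (∀ x, |y x| ≤ 1) →
        (∀ x x', x ≠ x' → 1 / 2 ^ N ≤ max |p x - p x'| |y x - y x'|) →
        (2 : ℝ) ^ (s * N) ≤ Fintype.card Ω →
        ∃ E : ℕ → Set ℝ, sparseDirections p y t C (1 / 2 ^ (2 * N)) ⊆ ⋃ r ∈ Finset.range R, E r ∧
          ∀ r, ∃ n : ℕ, (n : ℝ) ≤ 2 ^ (κ * L r) ∧ HasCover (E r) n (1 / 2 ^ L r) := by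
  classical
  obtain ⟨c, hc, rfl⟩ : ∃ c, 0 < c ∧ s = t + 4 * c := ⟨(s - t) / 4, by linarith, by ring⟩
  have hl2 : 0 < Real.log 2 := Real.log_pos one_lt_two
  obtain ⟨q', hq'⟩ := exists_nat_ge (10 / c)
  set q := 2 * q' + 1 with hq
  have hq0 : (0 : ℝ) < q := by positivity
  have hqc : 1 / (q : ℝ) ≤ c / 10 := by
    rw [div_le_iff₀ hq0]
    rw [div_le_iff₀ hc] at hq'
    rw [hq]; push_cast; nlinarith
  set τ : ℝ := 1 / (2 * q) with hτ
  have hτ0 : 0 < τ := by positivity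
  obtain ⟨m, hm⟩ := exists_mul_rpow_lt (C := C) ht1
  have hm0 : (0 : ℝ) < m := lt_of_le_of_lt (by positivity) hm
  set w₀ : ℝ := τ / (4 * m) with hw₀
  have hw₀0 : 0 < w₀ := by positivity
  obtain ⟨a, ha⟩ : ∃ a : ℕ, 16 / w₀ ≤ 2 ^ a := by
    obtain ⟨a, ha⟩ := pow_unbounded_of_one_lt (16 / w₀) (one_lt_two (α := ℝ))
    exact ⟨a, ha.le⟩
  set ε : ℕ → ℝ := fun i => (c / 60) ^ 2 / (8 * (2 ^ i) ^ 8) with hε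
  set η : ℕ → ℝ := fun i => ε i ^ 2 * (c / 60) ^ 2 / (8 * (2 ^ i) ^ 4) with hη
  have hε0 : ∀ i, 0 < ε i := fun i => by positivity
  have hη0 : ∀ i, 0 < η i := fun i => by have := hε0 i; positivity
  have hWex : ∀ i : ℕ, ∃ W : ℕ, 2 ≤ W ∧ 20 ≤ κ * W ∧
      30 * (gridPairs ((2 ^ i) ^ 4)).card / (η i * c) ≤ κ / 8 * W := by
    intro i
    obtain ⟨W₁, h1⟩ := exists_nat_ge (20 / κ)
    obtain ⟨W₂, h2⟩ := exists_nat_ge (30 * (gridPairs ((2 ^ i) ^ 4)).card / (η i * c) / (κ / 8))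
    refine ⟨2 + W₁ + W₂, by omega, ?_, ?_⟩
    · rw [div_le_iff₀ hκ] at h1; push_cast; nlinarith [(Nat.cast_nonneg W₂ : (0 : ℝ) ≤ W₂)]
    · rw [div_le_iff₀ (by positivity)] at h2
      push_cast
      nlinarith [(Nat.cast_nonneg W₁ : (0 : ℝ) ≤ W₁)]
  choose Wf hWf2 hWf20 hWfU using hWex
  obtain ⟨R', hR'⟩ := exists_nat_ge (16 / (c * κ))
  set R := R' + 1 with hR
  have hRR : 16 ≤ R * (c * κ) := by
    rw [div_le_iff₀ (by positivity)] at hR'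
    rw [hR]; push_cast
    have : 0 < c * κ := by positivity
    nlinarith
  refine ⟨R, fun I₀ => ?_⟩
  obtain ⟨I, hI0, hI4, hIa, hIκ, hIc, hIC⟩ : ∃ I : ℕ, I₀ ≤ I ∧ 4 ≤ I ∧ a ≤ I ∧ 4 ≤ κ * I ∧
      6 ≤ c * I ∧ Real.log C ≤ c / 2 * I * Real.log 2 := by
    obtain ⟨k₁, h1⟩ := exists_nat_ge (4 / κ)
    obtain ⟨k₂, h2⟩ := exists_nat_ge (6 / c)
    obtain ⟨k₃, h3⟩ := exists_nat_ge (Real.log C / (c / 2 * Real.log 2))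
    have hle : ∀ k, k ≤ I₀ + 4 + a + k₁ + k₂ + k₃ →
      (k : ℝ) ≤ ((I₀ + 4 + a + k₁ + k₂ + k₃ : ℕ) : ℝ) := fun k hk => by exact_mod_cast hk
    refine ⟨I₀ + 4 + a + k₁ + k₂ + k₃, by omega, by omega, by omega, ?_, ?_, ?_⟩
    · have := h1.trans (hle k₁ (by omega)); rwa [div_le_iff₀ hκ, mul_comm] at this
    · have := h2.trans (hle k₂ (by omega)); rwa [div_le_iff₀ hc, mul_comm] at this
    · have := h3.trans (hle k₃ (by omega))
      rw [div_le_iff₀ (by positivity)] at this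
      linarith
  set i : ℕ → ℕ := scaleChain Wf I with hi
  set W : ℕ → ℕ := fun r => Wf (i r) with hW
  have hiI : ∀ r, I ≤ i r := le_scaleChain Wf I
  have hiI' : ∀ r, (I : ℝ) ≤ i r := fun r => by exact_mod_cast hiI r
  have hchain : ∀ r, i (r + 1) = (W r + 2) * i r := fun r => rfl
  refine ⟨fun r => i (r + 1), fun r => hI0.trans (hiI _), ?_⟩
  set K : ℕ := ∑ r ∈ Finset.range R, i r with hK
  set K₂ : ℕ := ∑ r ∈ Finset.range R, (W r + 3) * i r with hK₂
  have hiK : ∀ r < R, i r ≤ K := fun r hr =>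
    Finset.single_le_sum (f := i) (fun _ _ => Nat.zero_le _) (Finset.mem_range.2 hr)
  have hWK : ∀ r < R, (W r + 3) * i r ≤ K₂ := fun r hr =>
    Finset.single_le_sum (f := fun r => (W r + 3) * i r) (fun _ _ => Nat.zero_le _)
      (Finset.mem_range.2 hr)
  obtain ⟨N₁, hN₁⟩ := exists_nat_ge (2 * K₂ / c)
  obtain ⟨N₂, hN₂⟩ := exists_nat_ge ((5 + (t + 4 * c) * (2 + K)) / (c / 2))
  refine ⟨N₁ + N₂ + (2 + K + a), ?_⟩
  intro N hN Ω _ p y hp hy hsep hcard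
  set M := N + 2 + K with hM
  set Z : ℝ := ((Fintype.card Ω : ℕ) : ℝ) with hZ
  have hZ0 : 0 < Z := lt_of_lt_of_le (by positivity) hcard
  have hΩ : 0 < Fintype.card Ω := by rw [hZ] at hZ0; exact_mod_cast hZ0
  have hM0 : 0 < M := by omega
  have hδM : ∀ n ≤ M, 1 / (2 : ℝ) ^ (2 * N) ≤ w₀ / 2 ^ n := by
    intro n hn
    rw [div_le_div_iff₀ (by positivity) (by positivity), one_mul]
    have h1 : (2 : ℝ) ^ n * 2 ^ a ≤ 2 ^ (2 * N) := by
      rw [← pow_add]; exact pow_le_pow_right₀ one_le_two (by omega)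
    have h2 : 1 ≤ w₀ * 2 ^ a := by
      rw [div_le_iff₀ hw₀0] at ha; linarith
    have h3 : (0 : ℝ) < 2 ^ n := by positivity
    nlinarith
  have hNr₁ : (N₁ : ℝ) ≤ N := by exact_mod_cast (by omega)
  have hNr₂ : (N₂ : ℝ) ≤ N := by exact_mod_cast (by omega)
  have hMr : (M : ℝ) = N + 2 + K := by rw [hM]; push_cast; rfl
  have hlogZ : (t + 4 * c) * N * Real.log 2 ≤ Real.log Z := by
    rw [← Real.log_rpow two_pos]
    exact Real.log_le_log (by positivity) hcard
  have hEdir : ∀ θ ∈ sparseDirections p y t C (1 / 2 ^ (2 * N)), ∃ r < R, ∃ κ₀, ∀ P : Ω → ℝ,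
      (∀ x, P x = p x + θ * y x + κ₀) →
      (∀ n < M, ∀ s : ℝ, ∃ g, s ≤ g ∧ g + w₀ ≤ s + τ / 4 ∧
        ∀ x, g ≤ 2 ^ n * P x → g + w₀ ≤ 2 ^ n * P x) ∧
      (∑ n ∈ Finset.range M, ((Finset.univ.filter fun x =>
        ¬ FarFromGrid τ (2 ^ n * P x)).card : ℝ) ≤ c / 10 * (M * Fintype.card Ω)) ∧
      ((Finset.range (W r)).filter fun w =>
        ¬ RegularAt P y c (η (i r)) ((W r + 3) * i r) M (i r) w).card ≤ ⌊κ / 4 * W r⌋₊ := by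
    rintro θ ⟨hθ, hsp⟩
    obtain ⟨k, hk, hfar⟩ := exists_grid_shift (fun x => p x + θ * y x) (q := q) ⟨q', hq⟩ M
    set P : Ω → ℝ := fun x => p x + θ * y x + k / q with hP
    have hspP : SparseRange t C (1 / 2 ^ (2 * N)) P := hsp.add_const _
    have hk1 : (k : ℝ) / q ≤ 1 := by
      rw [div_le_one hq0]; exact_mod_cast hk.le
    have hk0 : (0 : ℝ) ≤ (k : ℝ) / q := by positivity
    have hP3 : ∀ x, |P x| ≤ 3 := by
      intro x
      have h1 := abs_le.1 (hp x)
      have h2 : |θ * y x| ≤ 1 := by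
        rw [abs_mul]; exact mul_le_one₀ hθ (abs_nonneg _) (hy x)
      have h2 := abs_le.1 h2
      rw [hP, abs_le]; constructor <;> linarith
    have hgain : ∀ r < R, 3 * c * i r * (M * Fintype.card Ω * Real.log 2) ≤
        totalGain P y M (i r) 0 := by
      intro r hr
      have h1 := hspP.le_totalGain y (M := M) (i := i r) ht0 (by linarith)
        ((hδM M le_rfl).trans (by
          gcongr
          rw [hw₀, div_le_one (by positivity)]
          have : τ ≤ 1 := by
            rw [hτ, div_le_one (by positivity)]
            rw [hq]; push_cast; linarith [(Nat.cast_nonneg q' : (0 : ℝ) ≤ q')]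
          have : (1 : ℝ) ≤ m := by exact_mod_cast hm0
          linarith)) ((hiK r hr).trans (by omega))
        (fun n hn => logMass_eq_zero_of_injective (rect_injective_of_separated hsep hθ
          (fun x => rfl) (by have := hiK r hr; omega)))
      have h2 := le_logMass_rect_zero hP3 hy
      have hi0 : (0 : ℝ) ≤ i r := Nat.cast_nonneg _
      have h3 : Real.log C ≤ c / 2 * i r * Real.log 2 :=
        hIC.trans (by have := hiI' r; gcongr)
      refine le_trans ?_ h1
      rw [← hZ] at h2 ⊢
      have h4 : i r * (Z * ((t + 4 * c) * N * Real.log 2 - 5 * Real.log 2)) ≤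
          i r * logMass (rect P y 0 0) := by
        refine mul_le_mul_of_nonneg_left (le_trans ?_ h2) hi0
        gcongr
      have h5 : (M : ℝ) * Z * (Real.log C + t * i r * Real.log 2) ≤
          M * Z * (c / 2 * i r * Real.log 2 + t * i r * Real.log 2) := by gcongr
      have h6 : (3 * c + c / 2 + t) * M ≤ (t + 4 * c) * N - 5 := by
        have := hN₂.trans hNr₂
        rw [div_le_iff₀ (by positivity)] at this
        rw [hMr]
        have hK0 : (0 : ℝ) ≤ c / 2 * (2 + K) := by positivity
        linarith
      have h7 : (i r * Z * Real.log 2) * ((3 * c + c / 2 + t) * M) ≤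
          (i r * Z * Real.log 2) * ((t + 4 * c) * N - 5) :=
        mul_le_mul_of_nonneg_left h6 (by positivity)
      linarith
    obtain ⟨r, hr, hbad⟩ := exists_regular_scale (P := P) (y := y) (c := c) (i := i) (W := W)
      (η := fun r => η (i r)) (R := R) (M := M) (by omega) hM0 hΩ hc hchain
      (fun r => hIc.trans (by have := hiI' r; gcongr)) (fun r => hη0 _)
      (fun r hr => by
        have h1 : (((W r + 3) * i r : ℕ) : ℝ) ≤ K₂ := by exact_mod_cast hWK r hr
        have h2 := hN₁.trans hNr₁
        rw [div_le_iff₀ hc] at h2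
        rw [hMr]
        have : (0 : ℝ) ≤ c * (2 + K) := by positivity
        linarith) hgain
    refine ⟨r, hr, k / q, fun P' hP' => ?_⟩
    obtain rfl : P' = P := funext hP'
    refine ⟨fun n hn s => ?_, ?_, ?_⟩
    · exact hspP.exists_gap hτ0 hm (by linarith) (hδM n hn.le) s
    · refine hfar.trans ?_
      rw [← hZ]
      have : (M : ℝ) * Z * (1 / q) ≤ M * Z * (c / 10) := by gcongr
      calc (M : ℝ) * Z / q = M * Z * (1 / q) := by ring
        _ ≤ _ := this
        _ = _ := by ring
    · apply Nat.le_floor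
      refine hbad.trans ?_
      have h1 := hWfU (i r)
      have h2 : ((W r : ℝ) + 2) / (R * c) ≤ κ / 8 * W r := by
        have hR0 : (0 : ℝ) < R := by positivity
        rw [div_le_iff₀ (by positivity)]
        have h3 : (2 : ℝ) ≤ W r := by exact_mod_cast hWf2 (i r)
        have h4 : (W r : ℝ) * 16 ≤ W r * (R * (c * κ)) := by gcongr
        linarith
      change 30 * _ / (η (i r) * c) ≤ κ / 8 * (W r : ℝ) at h1
      linarith
  refine ⟨fun r => {θ | |θ| ≤ 1 ∧ ∃ κ₀, ∀ P : Ω → ℝ, (∀ x, P x = p x + θ * y x + κ₀) →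
      (∀ n < M, ∀ s : ℝ, ∃ g, s ≤ g ∧ g + w₀ ≤ s + τ / 4 ∧
        ∀ x, g ≤ 2 ^ n * P x → g + w₀ ≤ 2 ^ n * P x) ∧
      (∑ n ∈ Finset.range M, ((Finset.univ.filter fun x =>
        ¬ FarFromGrid τ (2 ^ n * P x)).card : ℝ) ≤ c / 10 * (M * Fintype.card Ω)) ∧
      ((Finset.range (W r)).filter fun w =>
        ¬ RegularAt P y c (η (i r)) ((W r + 3) * i r) M (i r) w).card ≤ ⌊κ / 4 * W r⌋₊}, ?_, ?_⟩
  · intro θ hθ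
    obtain ⟨r, hr, h⟩ := hEdir θ hθ
    exact mem_iUnion₂.2 ⟨r, Finset.mem_range.2 hr, hθ.1, h⟩
  · intro r
    refine ⟨_, cover_count_le (i := i r) (W := W r) (b := ⌊κ / 4 * W r⌋₊)
      (hIκ.trans (by have := hiI' r; gcongr)) (by have := hiI r; omega) (hWf20 _)
      (Nat.floor_le (by positivity)) hκ, ?_⟩
    refine (hasCover_of_regular (p := p) (y := y) (τ := τ) (w₀ := w₀) (c := c) (η := η (i r))
      (ε := ε (i r)) (i := i r) (W := W r) (M := M) (fun θ hθ => hθ.1) (hI4.trans (hiI r)) ?_ hc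
      (hε0 _) (le_of_eq ?_) (hη0 _) (le_of_eq ?_) hM0 hΩ fun θ hθ => hθ.2).mono le_rfl le_rfl ?_
    · rw [div_le_iff₀ (by positivity)]
      rw [div_le_iff₀ hw₀0] at ha
      have : (2 : ℝ) ^ a ≤ 2 ^ i r := pow_le_pow_right₀ one_le_two (hIa.trans (hiI r))
      nlinarith
    · rw [hε]; field_simp
    · rw [hη]; field_simp
    · have : (2 : ℝ) ^ i (r + 1) ≤ 2 ^ ((W r + 4) * i r) :=
        pow_le_pow_right₀ one_le_two (by rw [hchain]; exact Nat.mul_le_mul_right _ (by omega))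
      gcongr

end LinearProjections

section Assouad

/-- The covering condition in the definition of the Assouad dimension. -/
def AssouadBound {X : Type*} [PseudoMetricSpace X] (E : Set X) (α C : ℝ) : Prop :=
  ∀ x ∈ E, ∀ r R : ℝ, 0 < r → r < R →
    ∃ 𝒰 : Finset (Set X), (E ∩ closedBall x R ⊆ ⋃ U ∈ 𝒰, U) ∧
      (∀ U ∈ 𝒰, ediam U ≤ ENNReal.ofReal r) ∧ ((𝒰.card : ℝ) ≤ C * (R / r) ^ α)

theorem assouadDim_eq_sInf {X : Type*} [PseudoMetricSpace X] (E : Set X) :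
    assouadDim E = sInf {α : ℝ | 0 ≤ α ∧ ∃ C : ℝ, 0 < C ∧ AssouadBound E α C} := rfl

theorem AssouadBound.mono {X : Type*} [PseudoMetricSpace X] {E : Set X} {α β C C' : ℝ}
    (h : AssouadBound E α C) (hα : α ≤ β) (hC : C ≤ C') (hC' : 0 ≤ C') : AssouadBound E β C' := by
  intro x hx r R hr hR
  obtain ⟨𝒰, h1, h2, h3⟩ := h x hx r R hr hR
  refine ⟨𝒰, h1, h2, h3.trans ?_⟩
  have : 1 ≤ R / r := (one_le_div hr).2 hR.le
  gcongr

theorem AssouadBound.assouadDim_le {X : Type*} [PseudoMetricSpace X] {E : Set X} {α C : ℝ}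
    (h : AssouadBound E α C) (hα : 0 ≤ α) (hC : 0 < C) : assouadDim E ≤ α :=
  csInf_le ⟨0, fun _ hb => hb.1⟩ ⟨hα, C, hC, h⟩

theorem assouadBound_real (E : Set ℝ) : AssouadBound E 1 3 := by
  intro x _ r R hr hR
  have hR0 : 0 < R := hr.trans hR
  have hk : 0 < ⌈2 * R / r⌉₊ := Nat.ceil_pos.2 (by positivity)
  obtain ⟨𝒰, h1, h2, h3⟩ := hasCover_split (U := closedBall x R) (d := 2 * R) (by positivity)
    (fun a ha b hb => by
      have := dist_triangle_right a b x
      rw [← Real.dist_eq]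
      linarith [mem_closedBall.1 ha, mem_closedBall.1 hb]) hk
  refine ⟨𝒰, inter_subset_right.trans h2,
    fun U hU => ediam_le_of_forall_dist_le fun a ha b hb => ?_, ?_⟩
  · refine (h3 U hU a ha b hb).trans ?_
    have := Nat.le_ceil (2 * R / r)
    rw [div_le_iff₀ hr] at this
    rw [div_le_iff₀ (by exact_mod_cast hk)]
    linarith
  · rw [Real.rpow_one]
    have h5 := Nat.ceil_lt_add_one (a := 2 * R / r) (by positivity)
    have h6 : 1 ≤ R / r := (one_le_div hr).2 hR.le
    have h7 : (𝒰.card : ℝ) ≤ ⌈2 * R / r⌉₊ := by exact_mod_cast h1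
    have : 2 * R / r = 2 * (R / r) := by ring
    linarith

theorem Euc.abs_apply_sub_le (a b : Euc 2) (i : Fin 2) : |a i - b i| ≤ dist a b := by
  rw [dist_eq_norm]
  simpa using PiLp.norm_apply_le (a - b) i

theorem Euc.dist_sq {i j : Fin 2} (hij : i ≠ j) (a b : Euc 2) :
    dist a b ^ 2 = (a i - b i) ^ 2 + (a j - b j) ^ 2 := by
  rw [EuclideanSpace.dist_eq, Real.sq_sqrt (by positivity), Fin.sum_univ_two, Real.dist_eq,
    Real.dist_eq, sq_abs, sq_abs]
  fin_cases i <;> fin_cases j <;> simp_all [add_comm]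

theorem Euc.dist_le {i j : Fin 2} (hij : i ≠ j) (a b : Euc 2) :
    dist a b ≤ |a i - b i| + |a j - b j| := by
  have h1 := Euc.dist_sq hij a b
  refine le_of_sq_le_sq ?_ (by positivity)
  rw [h1]
  nlinarith [abs_nonneg (a i - b i), abs_nonneg (a j - b j), sq_abs (a i - b i),
    sq_abs (a j - b j)]

theorem assouadBound_plane (E : Set (Euc 2)) : AssouadBound E 2 25 := by
  classical
  intro x _ r R hr hR
  have hR0 : 0 < R := hr.trans hR
  set k := ⌈4 * R / r⌉₊ with hkdef
  have hk : 0 < k := Nat.ceil_pos.2 (by positivity)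
  have hd : 2 * R / k ≤ r / 2 := by
    have := Nat.le_ceil (4 * R / r)
    rw [div_le_iff₀ hr] at this
    rw [div_le_iff₀ (by exact_mod_cast hk)]
    linarith
  have hc : ∀ i : Fin 2, HasCover (closedBall (x i) R) k (r / 2) := fun i =>
    (hasCover_split (d := 2 * R) (by positivity)
    (fun a ha b hb => by
      have := dist_triangle_right a b (x i)
      rw [← Real.dist_eq]
      linarith [mem_closedBall.1 ha, mem_closedBall.1 hb]) hk).mono subset_rfl le_rfl hd
  obtain ⟨𝒰, h1, h2, h3⟩ := hc 0
  obtain ⟨𝒱, k1, k2, k3⟩ := hc 1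
  refine ⟨(𝒰 ×ˢ 𝒱).image fun P => {u : Euc 2 | u 0 ∈ P.1 ∧ u 1 ∈ P.2}, ?_, ?_, ?_⟩
  · rintro u ⟨-, hu⟩
    have hu' : ∀ i, u i ∈ closedBall (x i) R := fun i => by
      rw [mem_closedBall, Real.dist_eq]
      exact (Euc.abs_apply_sub_le u x i).trans hu
    obtain ⟨U, hU, hu0⟩ := mem_iUnion₂.1 (h2 (hu' 0))
    obtain ⟨V, hV, hu1⟩ := mem_iUnion₂.1 (k2 (hu' 1))
    exact mem_iUnion₂.2 ⟨_, Finset.mem_image_of_mem _ (Finset.mk_mem_product hU hV), hu0, hu1⟩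
  · intro W hW
    obtain ⟨⟨U, V⟩, hUV, rfl⟩ := Finset.mem_image.1 hW
    obtain ⟨hU, hV⟩ := Finset.mem_product.1 hUV
    refine ediam_le_of_forall_dist_le fun a ha b hb => (Euc.dist_le zero_ne_one a b).trans ?_
    linarith [h3 U hU _ ha.1 _ hb.1, k3 V hV _ ha.2 _ hb.2]
  · have h5 := Nat.ceil_lt_add_one (a := 4 * R / r) (by positivity)
    have h6 : 1 ≤ R / r := (one_le_div hr).2 hR.le
    have h7 : (k : ℝ) ≤ 5 * (R / r) := by
      have : 4 * R / r = 4 * (R / r) := by ring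
      linarith
    have h8 : ((𝒰 ×ˢ 𝒱).card : ℝ) ≤ k * k := by
      rw [Finset.card_product]; exact_mod_cast Nat.mul_le_mul h1 k1
    refine (Nat.cast_le.2 Finset.card_image_le).trans (h8.trans ?_)
    rw [Real.rpow_two]
    nlinarith

theorem exists_assouadBound_of_lt {E : Set ℝ} {a : ℝ} (h : assouadDim E < a) :
    ∃ t : ℚ, ∃ C : ℕ, 0 ≤ t ∧ (t : ℝ) < a ∧ 1 ≤ C ∧ AssouadBound E t C := by
  rw [assouadDim_eq_sInf] at h
  obtain ⟨α, ⟨hα0, C, hC, hb⟩, hα⟩ :=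
    exists_lt_of_csInf_lt (s := {α : ℝ | 0 ≤ α ∧ ∃ C : ℝ, 0 < C ∧ AssouadBound E α C})
      ⟨1, zero_le_one, 3, by norm_num, assouadBound_real E⟩ h
  obtain ⟨t, ht, hta⟩ := exists_rat_btwn hα
  refine ⟨t, ⌈C⌉₊, ?_, hta, Nat.ceil_pos.2 hC, hb.mono ht.le (Nat.le_ceil C) (by positivity)⟩
  exact_mod_cast hα0.trans ht.le

theorem exists_maximal_separated {X : Type*} [PseudoMetricSpace X] {E : Set X} {ε : ℝ} {n : ℕ}
    (h : ∀ S : Finset X, ↑S ⊆ E → (∀ a ∈ S, ∀ b ∈ S, a ≠ b → ε ≤ dist a b) → S.card ≤ n)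
    (hε : 0 < ε) :
    ∃ S : Finset X, ↑S ⊆ E ∧ S.card ≤ n ∧ E ⊆ ⋃ a ∈ S, closedBall a ε := by
  classical
  set K : Set ℕ := {k | ∃ S : Finset X, ↑S ⊆ E ∧
    (∀ a ∈ S, ∀ b ∈ S, a ≠ b → ε ≤ dist a b) ∧ S.card = k}
  have hK : sSup K ∈ K := Nat.sSup_mem ⟨0, ∅, by simp, by simp, by simp⟩
    ⟨n, by rintro k ⟨S, h1, h2, rfl⟩; exact h S h1 h2⟩
  obtain ⟨S, h1, h2, h3⟩ := hK
  refine ⟨S, h1, h S h1 h2, fun x hx => ?_⟩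
  by_contra hcon
  simp only [mem_iUnion, mem_closedBall, not_exists, not_le] at hcon
  have hxS : x ∉ S := fun hxS => by
    have := hcon x hxS
    rw [dist_self] at this
    linarith
  have hins : S.card + 1 ∈ K := by
    refine ⟨insert x S, ?_, ?_, Finset.card_insert_of_notMem hxS⟩
    · rw [Finset.coe_insert]; exact insert_subset hx h1
    · intro a ha b hb hab
      rcases Finset.mem_insert.1 ha with h5 | h5 <;> rcases Finset.mem_insert.1 hb with h6 | h6
      · exact absurd (h5.trans h6.symm) hab
      · exact h5 ▸ (hcon b h6).le
      · rw [dist_comm]; exact h6 ▸ (hcon a h5).le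
      · exact h2 a h5 b h6 hab
  have := le_csSup ⟨n, by rintro k ⟨S, h1, h2, rfl⟩; exact h S h1 h2⟩ hins
  omega

theorem exists_cover_iterate {X : Type*} [PseudoMetricSpace X] {F : Set X} {A b R₀ : ℝ}
    (hb0 : 0 < b) (hb : b ≤ 1) (hA : 0 ≤ A)
    (h : ∀ z ∈ F, ∀ R, 0 < R → R ≤ R₀ → ∃ S : Finset X, ↑S ⊆ F ∧ (S.card : ℝ) ≤ A ∧
      F ∩ closedBall z R ⊆ ⋃ a ∈ S, closedBall a (b * R)) (k : ℕ) :
    ∀ z ∈ F, ∀ R, 0 < R → R ≤ R₀ → ∃ S : Finset X, ↑S ⊆ F ∧ (S.card : ℝ) ≤ A ^ k ∧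
      F ∩ closedBall z R ⊆ ⋃ a ∈ S, closedBall a (b ^ k * R) := by
  classical
  induction k with
  | zero => intro z hz R _ _; exact ⟨{z}, by simpa using hz, by simp, by simp⟩
  | succ k ih =>
    intro z hz R hR hR0
    obtain ⟨S, h1, h2, h3⟩ := ih z hz R hR hR0
    have hle : b ^ k * R ≤ R₀ :=
      (mul_le_of_le_one_left hR.le (pow_le_one₀ hb0.le hb)).trans hR0
    choose! T t1 t2 t3 using fun a (ha : a ∈ S) => h a (h1 ha) (b ^ k * R) (by positivity) hle
    refine ⟨S.biUnion T, ?_, ?_, ?_⟩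
    · intro x hx
      obtain ⟨a, ha, hx⟩ := Finset.mem_biUnion.1 (Finset.mem_coe.1 hx)
      exact t1 a ha hx
    · calc ((S.biUnion T).card : ℝ) ≤ ∑ a ∈ S, ((T a).card : ℝ) := by
            exact_mod_cast Finset.card_biUnion_le
        _ ≤ ∑ a ∈ S, A := Finset.sum_le_sum t2
        _ = S.card * A := by simp
        _ ≤ A ^ k * A := by gcongr
        _ = A ^ (k + 1) := (pow_succ _ _).symm
    · intro x hx
      obtain ⟨a, ha, hxa⟩ := mem_iUnion₂.1 (h3 hx)
      obtain ⟨c, hc, hxc⟩ := mem_iUnion₂.1 (t3 a ha ⟨hx.1, hxa⟩)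
      refine mem_iUnion₂.2 ⟨c, Finset.mem_biUnion.2 ⟨a, ha, hc⟩, ?_⟩
      rwa [pow_succ', mul_assoc]

theorem ediam_closedBall_le {X : Type*} [PseudoMetricSpace X] (a : X) {ρ r : ℝ} (h : 2 * ρ ≤ r) :
    ediam (closedBall a ρ) ≤ ENNReal.ofReal r :=
  ediam_le_of_forall_dist_le fun x hx y hy => by
    have := dist_triangle_right x y a
    linarith [mem_closedBall.1 hx, mem_closedBall.1 hy]

/-- If every ball of radius at most `R₀` centred in a totally bounded set satisfies a one-step
covering bound with exponent `s`, then the set satisfies the Assouad covering condition with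
exponent `s`. -/
theorem assouadBound_of_step {X : Type*} [PseudoMetricSpace X] {F : Set X}
    (hF : TotallyBounded F) {s R₀ : ℝ} {N : ℕ} (hN : 1 ≤ N) (hs : 0 ≤ s) (hR₀ : 0 < R₀)
    (h : ∀ z ∈ F, ∀ R, 0 < R → R ≤ R₀ → ∃ S : Finset X, ↑S ⊆ F ∧
      (S.card : ℝ) ≤ (2 : ℝ) ^ (s * N) ∧
      F ∩ closedBall z R ⊆ ⋃ a ∈ S, closedBall a (1 / 2 ^ N * R)) :
    ∃ C, 0 < C ∧ AssouadBound F s C := by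
  classical
  set C₁ : ℝ := (2 : ℝ) ^ (s * (N + 1)) with hC₁
  have hC₁1 : 1 ≤ C₁ := Real.one_le_rpow (by norm_num) (by positivity)
  have small : ∀ z ∈ F, ∀ r R, 0 < r → r < R → R ≤ R₀ → ∃ S : Finset X,
      (S.card : ℝ) ≤ C₁ * (R / r) ^ s ∧ F ∩ closedBall z R ⊆ ⋃ a ∈ S, closedBall a (r / 2) := by
    intro z hz r R hr hrR hR
    have hR' : 0 < R := hr.trans hrR
    have hx : 1 ≤ 2 * (R / r) := by
      have := (one_le_div hr).2 hrR.le
      linarith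
    have hN2 : (1 : ℝ) < 2 ^ N := one_lt_pow₀ (by norm_num) (by omega)
    obtain ⟨k, hk1, hk2⟩ := exists_nat_pow_near hx hN2
    obtain ⟨S, -, h2, h3⟩ := exists_cover_iterate (by positivity)
      (by rw [div_le_one (by positivity)]; exact hN2.le) (by positivity) h (k + 1) z hz R hR' hR
    refine ⟨S, h2.trans ?_, h3.trans ?_⟩
    · calc ((2 : ℝ) ^ (s * N)) ^ (k + 1) = (((2 : ℝ) ^ N) ^ k * 2 ^ N) ^ s := by
            rw [← pow_succ, ← pow_mul, ← Real.rpow_natCast, ← Real.rpow_natCast, ← Real.rpow_mul,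
              ← Real.rpow_mul] <;> try positivity
            push_cast; ring_nf
        _ ≤ (2 * (R / r) * 2 ^ N) ^ s := by gcongr
        _ = ((2 : ℝ) ^ (N + 1) * (R / r)) ^ s := by ring_nf
        _ = C₁ * (R / r) ^ s := by
            rw [Real.mul_rpow (by positivity) (by positivity), ← Real.rpow_natCast,
              ← Real.rpow_mul (by norm_num), hC₁]
            push_cast; ring_nf
    · refine iUnion₂_mono fun a _ => closedBall_subset_closedBall ?_
      rw [one_div, inv_pow, inv_mul_le_iff₀ (by positivity)]
      have : R = R / r * r := by field_simp
      nlinarith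
  obtain ⟨T, hTF, hTfin, hT⟩ := finite_approx_of_totallyBounded hF (R₀ / 2) (by positivity)
  lift T to Finset X using hTfin
  have key : ∀ z ∈ F, ∀ r R, 0 < r → r < R → ∃ S : Finset X,
      (S.card : ℝ) ≤ ((T.card + 1) * C₁) * (R / r) ^ s ∧
        F ∩ closedBall z R ⊆ ⋃ a ∈ S, closedBall a (r / 2) := by
    intro z hz r R hr hrR
    have hx : 1 ≤ R / r := (one_le_div hr).2 hrR.le
    have hxs : 1 ≤ (R / r) ^ s := Real.one_le_rpow hx hs
    rcases le_or_gt R R₀ with hR | hR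
    · obtain ⟨S, h1, h2⟩ := small z hz r R hr hrR hR
      refine ⟨S, h1.trans ?_, h2⟩
      gcongr
      nlinarith [(Nat.cast_nonneg T.card : (0 : ℝ) ≤ T.card)]
    · rcases le_or_gt R₀ r with hr0 | hr0
      · refine ⟨T, ?_, inter_subset_left.trans (hT.trans ?_)⟩
        · have : (1 : ℝ) ≤ C₁ * (R / r) ^ s := one_le_mul_of_one_le_of_one_le hC₁1 hxs
          nlinarith [(Nat.cast_nonneg T.card : (0 : ℝ) ≤ T.card)]
        · exact iUnion₂_mono fun a _ => ball_subset_closedBall.trans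
            (closedBall_subset_closedBall (by linarith))
      · choose! S h1 h2 using fun u (hu : u ∈ T) => small u (hTF hu) r R₀ hr hr0 le_rfl
        refine ⟨T.biUnion S, ?_, ?_⟩
        · calc ((T.biUnion S).card : ℝ) ≤ ∑ a ∈ T, ((S a).card : ℝ) := by
                exact_mod_cast Finset.card_biUnion_le
            _ ≤ ∑ a ∈ T, C₁ * (R / r) ^ s :=
                Finset.sum_le_sum fun a ha => (h1 a ha).trans (by gcongr)
            _ = T.card * (C₁ * (R / r) ^ s) := by simp
            _ ≤ ((T.card + 1) * C₁) * (R / r) ^ s := by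
              rw [mul_assoc]; gcongr; linarith
        · intro x hx
          obtain ⟨u, hu, hxu⟩ := mem_iUnion₂.1 (hT hx.1)
          obtain ⟨a, ha, hxa⟩ := mem_iUnion₂.1 (h2 u hu ⟨hx.1, by
            have := mem_ball.1 hxu
            rw [mem_closedBall]; linarith⟩)
          exact mem_iUnion₂.2 ⟨a, Finset.mem_biUnion.2 ⟨u, hu, ha⟩, hxa⟩
  refine ⟨(T.card + 1) * C₁, by positivity, fun z hz r R hr hrR => ?_⟩
  obtain ⟨S, h1, h2⟩ := key z hz r R hr hrR
  refine ⟨S.image fun a => closedBall a (r / 2), ?_, ?_,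
    (Nat.cast_le.2 Finset.card_image_le).trans h1⟩
  · intro x hx
    obtain ⟨a, ha, hxa⟩ := mem_iUnion₂.1 (h2 hx)
    exact mem_iUnion₂.2 ⟨_, Finset.mem_image_of_mem _ ha, hxa⟩
  · intro U hU
    obtain ⟨a, -, rfl⟩ := Finset.mem_image.1 hU
    exact ediam_closedBall_le a (by linarith)

/-- Below the Assouad dimension there are, at arbitrarily small scales, large separated sets. -/
theorem exists_large_separated {X : Type*} [PseudoMetricSpace X] {F : Set X}
    (hF : TotallyBounded F) {s R₀ : ℝ} {N : ℕ} (hN : 1 ≤ N) (hs : 0 ≤ s) (hR₀ : 0 < R₀)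
    (hsF : s < assouadDim F) :
    ∃ z ∈ F, ∃ R, 0 < R ∧ R ≤ R₀ ∧ ∃ S : Finset X, ↑S ⊆ F ∩ closedBall z R ∧
      (∀ a ∈ S, ∀ b ∈ S, a ≠ b → 1 / 2 ^ N * R ≤ dist a b) ∧ (2 : ℝ) ^ (s * N) ≤ S.card := by
  by_contra hcon
  push Not at hcon
  obtain ⟨C, hC, hb⟩ := assouadBound_of_step hF hN hs hR₀ fun z hz R hR hRR => by
    obtain ⟨S, h1, h2, h3⟩ := exists_maximal_separated (E := F ∩ closedBall z R)
      (ε := 1 / 2 ^ N * R) (n := ⌊(2 : ℝ) ^ (s * N)⌋₊)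
      (fun S h1 h2 => Nat.le_floor (hcon z hz R hR hRR S h1 h2).le) (by positivity)
    exact ⟨S, h1.trans inter_subset_left,
      (Nat.cast_le.2 h2).trans (Nat.floor_le (by positivity)), h3⟩
  exact absurd (hb.assouadDim_le hs hC) (not_le.2 hsF)

end Assouad

section CoverSum

/-- A finite cover by sets of diameter at most `ρ`, with `d`-dimensional sum at most `B`. -/
def CoverSum {X : Type*} [PseudoEMetricSpace X] (d ρ : ℝ) (S : Set X) (B : ℝ) : Prop :=
  ∃ 𝒱 : Finset (Set X), S ⊆ ⋃ V ∈ 𝒱, V ∧ (∀ V ∈ 𝒱, ediam V ≤ ENNReal.ofReal ρ) ∧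
    ∑ V ∈ 𝒱, ediam V ^ d ≤ ENNReal.ofReal B

variable {X : Type*} [PseudoEMetricSpace X] {d ρ : ℝ}

theorem CoverSum.mono {S S' : Set X} {ρ' B B' : ℝ} (h : CoverSum d ρ S B) (hS : S' ⊆ S)
    (hρ : ρ ≤ ρ') (hB : B ≤ B') : CoverSum d ρ' S' B' := by
  obtain ⟨𝒱, h1, h2, h3⟩ := h
  exact ⟨𝒱, hS.trans h1, fun V hV => (h2 V hV).trans (ENNReal.ofReal_le_ofReal hρ),
    h3.trans (ENNReal.ofReal_le_ofReal hB)⟩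

theorem CoverSum.union {S S' : Set X} {B B' : ℝ} (h : CoverSum d ρ S B) (h' : CoverSum d ρ S' B')
    (hB : 0 ≤ B) (hB' : 0 ≤ B') : CoverSum d ρ (S ∪ S') (B + B') := by
  classical
  obtain ⟨𝒱, h1, h2, h3⟩ := h
  obtain ⟨𝒲, k1, k2, k3⟩ := h'
  refine ⟨𝒱 ∪ 𝒲, ?_, fun V hV => (Finset.mem_union.1 hV).elim (h2 V) (k2 V), ?_⟩
  · rw [Finset.set_biUnion_union]; exact union_subset_union h1 k1
  · rw [ENNReal.ofReal_add hB hB']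
    refine le_trans ?_ (add_le_add h3 k3)
    rw [← Finset.sum_union_inter]
    exact le_self_add

theorem CoverSum.biUnion {ι : Type*} (s : Finset ι) {S : ι → Set X} {B : ℝ} (hB : 0 ≤ B)
    (h : ∀ i ∈ s, CoverSum d ρ (S i) B) : CoverSum d ρ (⋃ i ∈ s, S i) (s.card * B) := by
  classical
  induction s using Finset.induction_on with
  | empty => exact ⟨∅, by simp, by simp, by simp⟩
  | insert a s ha ih =>
    rw [Finset.set_biUnion_insert, Finset.card_insert_of_notMem ha]
    refine ((h a (by simp)).union (ih fun i hi => h i (by simp [hi])) hB (by positivity)).mono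
      subset_rfl le_rfl (le_of_eq ?_)
    push_cast; ring

theorem coverSum_of_card {S : Set X} {δ : ℝ} {n : ℕ} (hd : 0 ≤ d) (hδ : 0 ≤ δ)
    (𝒱 : Finset (Set X)) (hn : 𝒱.card ≤ n) (hS : S ⊆ ⋃ V ∈ 𝒱, V)
    (h : ∀ V ∈ 𝒱, ediam V ≤ ENNReal.ofReal δ) : CoverSum d δ S (n * δ ^ d) := by
  refine ⟨𝒱, hS, h, ?_⟩
  calc ∑ V ∈ 𝒱, ediam V ^ d ≤ ∑ V ∈ 𝒱, ENNReal.ofReal δ ^ d :=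
        Finset.sum_le_sum fun V hV => ENNReal.rpow_le_rpow (h V hV) hd
    _ = 𝒱.card * ENNReal.ofReal (δ ^ d) := by
        rw [Finset.sum_const, nsmul_eq_mul, ENNReal.ofReal_rpow_of_nonneg hδ hd]
    _ ≤ n * ENNReal.ofReal (δ ^ d) := by gcongr
    _ = ENNReal.ofReal (n * δ ^ d) := by
        rw [ENNReal.ofReal_mul (by positivity), ENNReal.ofReal_natCast]

end CoverSum

theorem dimH_le_of_coverSum {X : Type*} [EMetricSpace X] {S : Set X} {d : ℝ≥0} {B : ℝ} {ρ : ℕ → ℝ}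
    (hρ : Tendsto ρ atTop (𝓝 0)) (h : ∀ k, CoverSum d (ρ k) S B) : dimH S ≤ d := by
  borelize X
  choose 𝒱 h1 h2 h3 using h
  refine dimH_le_of_hausdorffMeasure_ne_top (ne_top_of_le_ne_top ENNReal.ofReal_ne_top
    (b := ENNReal.ofReal B) ?_)
  refine (Measure.hausdorffMeasure_le_liminf_sum (d : ℝ) S (fun k => ENNReal.ofReal (ρ k))
    (by simpa using ENNReal.tendsto_ofReal hρ) (fun k (V : 𝒱 k) => (V : Set X))
    (Eventually.of_forall fun k V => h2 k V V.2) (Eventually.of_forall fun k => ?_)).trans ?_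
  · simpa [iUnion_subtype] using h1 k
  · refine (liminf_le_liminf (v := fun _ => ENNReal.ofReal B)
      (Eventually.of_forall fun k => ?_)).trans (le_of_eq (by simp))
    refine le_trans (le_of_eq ?_) (h3 k)
    exact Finset.sum_coe_sort (𝒱 k) fun V => ediam V ^ (d : ℝ)

/-- A function that is approximately an affine image of points of a set satisfying an Assouad
covering condition has a sparse range. -/
theorem AssouadBound.sparseRange {D : Set ℝ} {Ω : Type*} {t C δ₀ ρ A B : ℝ}
    (hD : AssouadBound D t C) (ht1 : t ≤ 1) (hC : 0 ≤ C) (hδ₀ : 0 < δ₀) (hρ : 0 < ρ)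
    {φ π : Ω → ℝ} (hφ : ∀ u, φ u ∈ D) (happ : ∀ u, |φ u - (A + B * π u)| ≤ ρ * δ₀)
    (hB : 7 / 10 * ρ ≤ |B|) (hB' : |B| ≤ ρ) : SparseRange t (108 * C) δ₀ π := by
  classical
  intro a δ hδ m hm
  have hδ0 : 0 < δ := hδ₀.trans_le hδ
  have hm1 : (1 : ℝ) ≤ m := by exact_mod_cast hm
  set K := (Finset.range m).filter fun k : ℕ => ∃ x, a + k * δ ≤ π x ∧ π x < a + (k + 1) * δ with hK
  rcases K.eq_empty_or_nonempty with h0 | ⟨k₀, hk₀⟩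
  · rw [h0]; simp only [Finset.card_empty, Nat.cast_zero]; positivity
  have : Nonempty Ω := (Finset.mem_filter.1 hk₀).2.nonempty
  choose! u hu hu' using fun k (hk : k ∈ K) => (Finset.mem_filter.1 hk).2
  have hKm : ∀ k ∈ K, (k : ℝ) + 1 ≤ m := fun k hk => by
    exact_mod_cast Finset.mem_range.1 (Finset.mem_filter.1 hk).1
  have hπ : ∀ k ∈ K, |π (u k) - π (u k₀)| ≤ m * δ := by
    intro k hk
    have h1 := hu k hk
    have h2 := hu' k hk
    have h3 := hu k₀ hk₀
    have h4 := hu' k₀ hk₀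
    have h5 : ((k : ℝ) + 1) * δ ≤ m * δ := by gcongr; exact hKm k hk
    have h6 : ((k₀ : ℝ) + 1) * δ ≤ m * δ := by gcongr; exact hKm k₀ hk₀
    have h7 : 0 ≤ (k : ℝ) * δ := by positivity
    have h8 : 0 ≤ (k₀ : ℝ) * δ := by positivity
    rw [abs_le]; constructor <;> linarith
  have hdiff : ∀ v w, |(φ v - φ w) - B * (π v - π w)| ≤ 2 * (ρ * δ) := by
    intro v w
    have h1 := abs_le.1 (happ v)
    have h2 := abs_le.1 (happ w)
    have h3 : ρ * δ₀ ≤ ρ * δ := by gcongr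
    rw [abs_le]; constructor <;> linarith
  have hρδ : 0 < ρ * δ := by positivity
  obtain ⟨𝒰, h1, h2, h3⟩ := hD (φ (u k₀)) (hφ _) (ρ * δ / 4) (3 * (ρ * δ) * m) (by positivity)
    (by nlinarith)
  have hmem : ∀ k ∈ K, ∃ U ∈ 𝒰, φ (u k) ∈ U := by
    intro k hk
    have hb : φ (u k) ∈ closedBall (φ (u k₀)) (3 * (ρ * δ) * m) := by
      rw [mem_closedBall, Real.dist_eq]
      have h4 := hdiff (u k) (u k₀)
      have h5 : |B * (π (u k) - π (u k₀))| ≤ ρ * (m * δ) := by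
        rw [abs_mul]; gcongr; exact hπ k hk
      have h6 := abs_le.1 h4
      have h7 := abs_le.1 h5
      rw [abs_le]; constructor <;> nlinarith
    obtain ⟨U, hU, hUk⟩ := mem_iUnion₂.1 (h1 ⟨hφ (u k), hb⟩)
    exact ⟨U, hU, hUk⟩
  choose! V hV hV' using hmem
  have hcard : K.card ≤ 9 * 𝒰.card := by
    refine Finset.card_le_mul_card_image_of_maps_to hV 9 fun U hU => ?_
    rcases (K.filter fun k => V k = U).eq_empty_or_nonempty with h0 | ⟨k₁, hk₁⟩
    · rw [h0]; simp
    obtain ⟨hk₁K, hk₁U⟩ := Finset.mem_filter.1 hk₁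
    have hsub : (K.filter fun k => V k = U) ⊆ Finset.Icc (k₁ - 4) (k₁ + 4) := by
      intro k hk
      obtain ⟨hkK, hkU⟩ := Finset.mem_filter.1 hk
      have h4 : |φ (u k) - φ (u k₁)| ≤ ρ * δ / 4 := by
        have := edist_le_of_ediam_le (hkU ▸ hV' k hkK) (hk₁U ▸ hV' k₁ hk₁K) (h2 U hU)
        rwa [edist_dist, ENNReal.ofReal_le_ofReal_iff (by positivity), Real.dist_eq] at this
      have h5 := hdiff (u k) (u k₁)
      have h6 : |B| * |π (u k) - π (u k₁)| ≤ 9 / 4 * (ρ * δ) := by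
        rw [← abs_mul]
        have h6 := abs_le.1 h4
        have h7 := abs_le.1 h5
        rw [abs_le]; constructor <;> linarith
      have h7 : |π (u k) - π (u k₁)| ≤ 10 / 3 * δ := by
        by_contra hcon
        push Not at hcon
        have : 7 / 10 * ρ * (10 / 3 * δ) < |B| * |π (u k) - π (u k₁)| := by
          calc 7 / 10 * ρ * (10 / 3 * δ) < 7 / 10 * ρ * |π (u k) - π (u k₁)| := by gcongr
            _ ≤ _ := by gcongr
        nlinarith
      have h8 := abs_le.1 h7
      have g1 := hu k hkK
      have g2 := hu' k hkK
      have g3 := hu k₁ hk₁K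
      have g4 := hu' k₁ hk₁K
      have e1 : (k : ℝ) < k₁ + 5 := lt_of_mul_lt_mul_right (by linarith) hδ0.le
      have e2 : (k₁ : ℝ) < k + 5 := lt_of_mul_lt_mul_right (by linarith) hδ0.le
      have e1 : k < k₁ + 5 := by exact_mod_cast e1
      have e2 : k₁ < k + 5 := by exact_mod_cast e2
      rw [Finset.mem_Icc]; omega
    refine (Finset.card_le_card hsub).trans ?_
    rw [Nat.card_Icc]; omega
  have hratio : 3 * (ρ * δ) * m / (ρ * δ / 4) = 12 * m := by field_simp; ring
  rw [hratio] at h3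
  calc (K.card : ℝ) ≤ 9 * 𝒰.card := by exact_mod_cast hcard
    _ ≤ 9 * (C * (12 * m) ^ t) := by gcongr
    _ = 9 * C * ((12 : ℝ) ^ t * (m : ℝ) ^ t) := by
        rw [Real.mul_rpow (by norm_num) (by positivity)]; ring
    _ ≤ 9 * C * (12 * (m : ℝ) ^ t) := by
        gcongr
        calc (12 : ℝ) ^ t ≤ 12 ^ (1 : ℝ) := Real.rpow_le_rpow_of_exponent_le (by norm_num) ht1
          _ = 12 := Real.rpow_one _
    _ = 108 * C * (m : ℝ) ^ t := by ring

section Plane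

/-- The distance to a far away point is nearly affine. -/
theorem Euc.abs_dist_sub_le {i j : Fin 2} (hij : i ≠ j) {x z u : Euc 2} {η R : ℝ} (hη : 0 < η)
    (hx : η ≤ dist x z) (hu : dist u z ≤ R) (hR : R ≤ η / 2) :
    |dist x u - (dist x z - ((x i - z i) * (u i - z i) + (x j - z j) * (u j - z j)) / dist x z)|
      ≤ R ^ 2 / η := by
  have h1 := Euc.dist_sq hij x z
  have h2 := Euc.dist_sq hij u z
  have h3 := Euc.dist_sq hij x u
  have ha : 0 ≤ dist x u := dist_nonneg
  have hR0 : 0 ≤ dist u z := dist_nonneg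
  generalize dist x z = D at *
  generalize dist u z = r at *
  generalize dist x u = a at *
  have hD : 0 < D := hη.trans_le hx
  set X := x i - z i
  set Y := x j - z j
  set v := u i - z i
  set w := u j - z j
  have h3 : a ^ 2 = (X - v) ^ 2 + (Y - w) ^ 2 := by rw [h3]; simp only [X, Y, v, w]; ring
  set q := (X * v + Y * w) / D with hq
  have hqD : q * D = X * v + Y * w := by rw [hq]; field_simp
  have hqr : q ^ 2 ≤ r ^ 2 := by
    have : (q * D) ^ 2 ≤ r ^ 2 * D ^ 2 := by
      rw [hqD, h1, h2]; nlinarith [sq_nonneg (X * w - Y * v)]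
    rw [mul_pow] at this
    exact le_of_mul_le_mul_right this (by positivity)
  have hqR : |q| ≤ R := (abs_le_of_sq_le_sq' hqr hR0 |> abs_le.2).trans hu
  have hq2 := (abs_le.1 hqR).2
  set b := D - q with hb
  have hb0 : η / 2 ≤ b := by linarith
  have hab : a ^ 2 - b ^ 2 = r ^ 2 - q ^ 2 := by rw [h3, hb, h2]; nlinarith
  have hle : b ≤ a := le_of_sq_le_sq (by linarith) ha
  rw [abs_of_nonneg (by linarith), le_div_iff₀ hη]
  nlinarith [sq_nonneg q]

/-- The points seen from `z` in a direction of slope in `U`, relative to the `i`-th axis. -/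
def sector (i j : Fin 2) (z : Euc 2) (K : ℝ) (U : Set ℝ) : Set (Euc 2) :=
  {x | ∃ θ ∈ U, |θ| ≤ 1 ∧ |x i - z i| ≤ K ∧ x j - z j = θ * (x i - z i)}

theorem coverSum_sector {i j : Fin 2} (hij : i ≠ j) (z : Euc 2) {K δ d : ℝ} (hK : 0 < K)
    (hd : 0 ≤ d) (hδ : 0 < δ) (hδ1 : δ ≤ 1) {U : Set ℝ}
    (hU : ∀ θ ∈ U, ∀ θ' ∈ U, |θ - θ'| ≤ δ) :
    CoverSum d ((2 + K) * δ) (sector i j z K U) ((2 * K + 1) / δ * ((2 + K) * δ) ^ d) := by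
  classical
  have hk : 0 < ⌈2 * K / δ⌉₊ := Nat.ceil_pos.2 (by positivity)
  have hcov : HasCover (Icc (-K) K) ⌈2 * K / δ⌉₊ δ :=
    (hasCover_split (d := 2 * K) (by positivity) (fun a ha b hb => by
      rw [abs_le]; constructor <;> linarith [ha.1, ha.2, hb.1, hb.2]) hk).mono subset_rfl le_rfl (by
      have := Nat.le_ceil (2 * K / δ)
      rw [div_le_iff₀ hδ] at this
      rw [div_le_iff₀ (by exact_mod_cast hk)]
      linarith)
  obtain ⟨𝒰, h1, h2, h3⟩ := hcov
  refine (coverSum_of_card (n := ⌈2 * K / δ⌉₊) hd (by positivity)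
    (𝒰.image fun V => sector i j z K U ∩ {x | x i - z i ∈ V}) (Finset.card_image_le.trans h1)
    ?_ ?_).mono subset_rfl le_rfl ?_
  · intro x hx
    have hx' := hx
    obtain ⟨θ, -, -, hxK, -⟩ := hx'
    obtain ⟨V, hV, hxV⟩ := mem_iUnion₂.1 (h2 (abs_le.1 hxK))
    exact mem_iUnion₂.2 ⟨_, Finset.mem_image_of_mem _ hV, hx, hxV⟩
  · intro W hW
    obtain ⟨V, hV, rfl⟩ := Finset.mem_image.1 hW
    refine ediam_le_of_forall_dist_le ?_
    rintro x ⟨⟨θ, hθ, hθ1, hxK, hx⟩, hxV⟩ x' ⟨⟨θ', hθ', hθ1', hxK', hx'⟩, hxV'⟩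
    refine (Euc.dist_le hij x x').trans ?_
    have e1 : |x i - x' i| ≤ δ := by
      have := h3 V hV _ hxV _ hxV'
      rwa [sub_sub_sub_cancel_right] at this
    have e2 : x j - x' j = θ * (x i - x' i) + (θ - θ') * (x' i - z i) := by
      linear_combination hx - hx'
    have e3 : |x j - x' j| ≤ 1 * δ + δ * K := by
      rw [e2]
      refine (abs_add_le _ _).trans ?_
      rw [abs_mul, abs_mul]
      gcongr
      exact hU θ hθ θ' hθ'
    linarith
  · gcongr
    have := Nat.ceil_lt_add_one (a := 2 * K / δ) (by positivity)
    have h5 : 1 ≤ 1 / δ := (one_le_div hδ).2 hδ1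
    have : (2 * K + 1) / δ = 2 * K / δ + 1 / δ := by ring
    linarith

theorem coverSum_sector_of_hasCover {i j : Fin 2} (hij : i ≠ j) (z : Euc 2) {K κ : ℝ} (hK : 0 < K)
    (hκ : 0 < κ) {E : Set ℝ} {n L : ℕ} (hn : (n : ℝ) ≤ 2 ^ (κ * L))
    (hE : HasCover E n (1 / 2 ^ L)) :
    CoverSum (1 + κ) ((2 + K) * (1 / 2 ^ L)) (sector i j z K E)
      ((2 * K + 1) * (2 + K) ^ (1 + κ)) := by
  obtain ⟨𝒰, h1, h2, h3⟩ := hE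
  set δ : ℝ := 1 / 2 ^ L with hδ
  have hδ0 : 0 < δ := by positivity
  have hδ1 : δ ≤ 1 := by
    rw [hδ, div_le_one (by positivity)]; exact one_le_pow₀ (by norm_num)
  refine (CoverSum.biUnion 𝒰 (S := fun U => sector i j z K U) (by positivity) fun U hU =>
    coverSum_sector hij z hK (by positivity) hδ0 hδ1 (h3 U hU)).mono ?_ le_rfl ?_
  · rintro x ⟨θ, hθ, hx⟩
    obtain ⟨U, hU, hθU⟩ := mem_iUnion₂.1 (h2 hθ)
    exact mem_iUnion₂.2 ⟨U, hU, θ, hθU, hx⟩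
  · have hδκ : δ ^ κ = 1 / 2 ^ (κ * L) := by
      rw [hδ, Real.div_rpow (by norm_num) (by positivity), Real.one_rpow, ← Real.rpow_natCast,
        ← Real.rpow_mul (by norm_num), mul_comm κ]
    have hc : (𝒰.card : ℝ) * δ ^ κ ≤ 1 := by
      rw [hδκ, mul_one_div, div_le_one (by positivity)]
      exact (Nat.cast_le.2 h1).trans hn
    rw [Real.mul_rpow (by positivity) hδ0.le, Real.rpow_add hδ0, Real.rpow_one]
    calc (𝒰.card : ℝ) * ((2 * K + 1) / δ * ((2 + K) ^ (1 + κ) * (δ * δ ^ κ)))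
        = (𝒰.card * δ ^ κ) * ((2 * K + 1) * (2 + K) ^ (1 + κ)) := by field_simp
      _ ≤ 1 * ((2 * K + 1) * (2 + K) ^ (1 + κ)) := by gcongr
      _ = _ := one_mul _

end Plane

section Pins

theorem mem_sector_of_assouadBound {i j : Fin 2} (hij : i ≠ j) {F : Set (Euc 2)} {x z : Euc 2}
    {η R δ₀ t C K : ℝ} {S : Finset (Euc 2)} (hS : ↑S ⊆ F ∩ closedBall z R)
    (hD : AssouadBound (pinnedDistSet x F) t C) (ht1 : t ≤ 1) (hC : 0 ≤ C)
    (hη : 0 < η) (hx : η ≤ dist x z) (hdom : |x j - z j| ≤ |x i - z i|) (hK : |x i - z i| ≤ K)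
    (hR0 : 0 < R) (hR : R ≤ η / 2) (hδ₀ : 0 < δ₀) (hRδ : R ≤ η * δ₀) :
    x ∈ sector i j z K (sparseDirections (fun u : S => ((u : Euc 2) i - z i) / R)
      (fun u : S => ((u : Euc 2) j - z j) / R) t (108 * C) δ₀) := by
  have hd : 0 < dist x z := hη.trans_le hx
  have hsq := Euc.dist_sq hij x z
  have hsq' : (x j - z j) ^ 2 ≤ (x i - z i) ^ 2 := sq_le_sq.2 hdom
  have hX : x i - z i ≠ 0 := by
    intro h
    rw [h] at hsq hsq'
    nlinarith [pow_pos hd 2]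
  have hX' : 0 < |x i - z i| := abs_pos.2 hX
  have hθ : |(x j - z j) / (x i - z i)| ≤ 1 := by
    rw [abs_div, div_le_one hX']; exact hdom
  refine ⟨(x j - z j) / (x i - z i), ⟨hθ, ?_⟩, hθ, hK, by field_simp⟩
  have hB : |-(R * ((x i - z i) / dist x z))| = R * (|x i - z i| / dist x z) := by
    rw [abs_neg, abs_mul, abs_div, abs_of_pos hR0, abs_of_pos hd]
  refine AssouadBound.sparseRange (A := dist x z) (B := -(R * ((x i - z i) / dist x z))) (ρ := R)
    (φ := fun u : S => dist x u) hD ht1 hC hδ₀ hR0 (fun u => ⟨u, (hS u.2).1, rfl⟩) (fun u => ?_)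
    ?_ ?_
  · have h1 := Euc.abs_dist_sub_le hij hη hx (mem_closedBall.1 (hS u.2).2) hR
    have h2 : R ^ 2 / η ≤ R * δ₀ := by
      rw [div_le_iff₀ hη]; nlinarith
    refine le_trans (le_of_eq ?_) (h1.trans h2)
    congr 2
    field_simp
    ring
  · rw [hB, mul_comm]
    refine mul_le_mul_of_nonneg_left ?_ hR0.le
    rw [le_div_iff₀ hd]
    refine le_of_sq_le_sq ?_ hX'.le
    rw [sq_abs]
    nlinarith
  · rw [hB]
    refine mul_le_of_le_one_right hR0.le ((div_le_one hd).2 ?_)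
    exact Euc.abs_apply_sub_le x z i

/-- The bounded part of the set of pins with a fixed Assouad covering condition has Hausdorff
dimension at most `1 + κ`. -/
theorem dimH_pins_le {F : Set (Euc 2)} (hbd : Bornology.IsBounded F) {t C K : ℝ} (ht0 : 0 ≤ t)
    (ht1 : t < 1) (htF : t < assouadDim F) (hC : 1 ≤ C) {κ : ℝ≥0} (hκ : 0 < κ) :
    dimH {x : Euc 2 | ‖x‖ ≤ K ∧ AssouadBound (pinnedDistSet x F) t C} ≤ ((1 + κ : ℝ≥0) : ℝ≥0∞) := by
  obtain ⟨K₁, hK₁0, hK₁⟩ := hbd.exists_pos_norm_le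
  have hF : TotallyBounded F := hbd.isCompact_closure.totallyBounded.subset subset_closure
  set s := t + (assouadDim F - t) / 3 with hs
  set s₁ := t + 2 * (assouadDim F - t) / 3 with hs₁
  set K' := |K| + K₁ with hK'
  have hK'0 : 0 < K' := by positivity
  have hκ' : 0 < (κ : ℝ) := by exact_mod_cast hκ
  obtain ⟨R, hcover⟩ := sparseDirections_cover (C := 108 * C) (s := s) ht0 ht1 (by linarith)
    (by rw [hs]; linarith) hκ'
  set M := (2 * K' + 1) * (2 + K') ^ (1 + (κ : ℝ)) with hM
  have hM0 : 0 ≤ M := by positivity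
  refine dimH_le_of_coverSum (ρ := fun k => (2 + K') * (1 / 2 ^ k))
    (B := 1 * (2 : ℝ) ^ (1 + (κ : ℝ)) + (R * M + R * M)) ?_ fun k => ?_
  · have := tendsto_pow_atTop_nhds_zero_of_lt_one (r := (1 / 2 : ℝ)) (by norm_num) (by norm_num)
    simpa [one_div, inv_pow] using this.const_mul (2 + K')
  obtain ⟨L, hL, N₀, hN₀⟩ := hcover k
  set η : ℝ := 1 / 2 ^ k with hη
  have hη0 : 0 < η := by positivity
  have hη1 : η ≤ 1 := by
    rw [hη, div_le_one (by positivity)]; exact one_le_pow₀ (by norm_num)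
  obtain ⟨N, hN⟩ := exists_nat_ge (max (max (N₀ : ℝ) 1) (s / (s₁ - s)))
  have hNN₀ : N₀ ≤ N := by exact_mod_cast (le_max_left _ _).trans ((le_max_left _ _).trans hN)
  have hN1 : 1 ≤ N := by exact_mod_cast (le_max_right _ _).trans ((le_max_left _ _).trans hN)
  have hss : 0 < s₁ - s := by rw [hs₁, hs]; linarith
  have hNs : s * (N + 1) ≤ s₁ * N := by
    have := (le_max_right _ _).trans hN
    rw [div_le_iff₀ hss] at this
    linarith
  set δ₀ : ℝ := 1 / 2 ^ (2 * (N + 1)) with hδ₀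
  have hδ₀0 : 0 < δ₀ := by positivity
  have hδ₀2 : δ₀ ≤ 1 / 2 := by
    rw [hδ₀]
    exact one_div_le_one_div_of_le two_pos (le_self_pow₀ (by norm_num) (by omega))
  obtain ⟨z, hz, r, hr0, hr, S, hSF, hsep, hcard⟩ := exists_large_separated hF (s := s₁)
    (R₀ := η * δ₀) hN1 (by rw [hs₁]; linarith) (by positivity) (by rw [hs₁]; linarith)
  have chart : ∀ i j : Fin 2, i ≠ j → CoverSum ((1 + κ : ℝ≥0) : ℝ) ((2 + K') * η)
      (sector i j z K' (sparseDirections (fun u : S => ((u : Euc 2) i - z i) / r)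
      (fun u : S => ((u : Euc 2) j - z j) / r) t (108 * C) δ₀)) (R * M) := by
    intro i j hij
    have hle1 : ∀ (l : Fin 2) (u : S), |((u : Euc 2) l - z l) / r| ≤ 1 := by
      intro l u
      rw [abs_div, abs_of_pos hr0, div_le_one hr0]
      exact (Euc.abs_apply_sub_le _ _ _).trans (mem_closedBall.1 (hSF u.2).2)
    obtain ⟨E, hE, hEc⟩ := hN₀ (N + 1) (by omega) S (fun u : S => ((u : Euc 2) i - z i) / r)
      (fun u : S => ((u : Euc 2) j - z j) / r) (hle1 i) (hle1 j) (fun u v huv => by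
        have h1 := hsep u u.2 v v.2 (fun h => huv (Subtype.ext h))
        have h2 := Euc.dist_le hij (u : Euc 2) v
        have h3 : ∀ l, |((u : Euc 2) l - z l) / r - ((v : Euc 2) l - z l) / r| =
            |(u : Euc 2) l - (v : Euc 2) l| / r := fun l => by
          rw [← sub_div, sub_sub_sub_cancel_right, abs_div, abs_of_pos hr0]
        have h4 : 1 / 2 ^ N ≤ |(u : Euc 2) i - (v : Euc 2) i| / r +
            |(u : Euc 2) j - (v : Euc 2) j| / r := by
          rw [← add_div, le_div_iff₀ hr0]; linarith
        have h5 : (1 : ℝ) / 2 ^ (N + 1) = 1 / 2 ^ N / 2 := by rw [pow_succ]; field_simp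
        rw [h3, h3, h5]
        have h6 := le_max_left (|(u : Euc 2) i - (v : Euc 2) i| / r)
          (|(u : Euc 2) j - (v : Euc 2) j| / r)
        have h7 := le_max_right (|(u : Euc 2) i - (v : Euc 2) i| / r)
          (|(u : Euc 2) j - (v : Euc 2) j| / r)
        linarith) (by
        rw [Fintype.card_coe]
        refine le_trans ?_ hcard
        refine Real.rpow_le_rpow_of_exponent_le (by norm_num) ?_
        push_cast; exact hNs)
    choose n hn hnc using hEc
    refine (CoverSum.biUnion (Finset.range R) (S := fun l => sector i j z K' (E l)) hM0
      fun l _ => (coverSum_sector_of_hasCover hij z hK'0 hκ' (hn l) (hnc l)).mono subset_rfl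
        (ρ' := (2 + K') * η) ?_ le_rfl).mono ?_ le_rfl (by simp)
    · have := hL l
      rw [hη]
      gcongr
      norm_num
    · rintro x ⟨θ, hθ, hx⟩
      obtain ⟨l, hl, hθl⟩ := mem_iUnion₂.1 (hE hθ)
      exact mem_iUnion₂.2 ⟨l, hl, θ, hθl, hx⟩
  have hball : CoverSum ((1 + κ : ℝ≥0) : ℝ) ((2 + K') * η) (closedBall z η)
      (1 * (2 : ℝ) ^ (1 + (κ : ℝ))) := by
    refine (coverSum_of_card (n := 1) (δ := 2 * η) (by positivity) (by positivity) {closedBall z η}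
      (by simp) (by simp) (by simpa using ediam_closedBall_le z le_rfl)).mono subset_rfl
      (by nlinarith) ?_
    push_cast
    gcongr
    linarith
  refine (hball.union ((chart 0 1 (by decide)).union (chart 1 0 (by decide)) (by positivity)
    (by positivity)) (by positivity) (by positivity)).mono ?_ le_rfl le_rfl
  rintro x ⟨hxK, hxD⟩
  rcases le_or_gt (dist x z) η with hxz | hxz
  · exact Or.inl hxz
  have hxK' : ∀ i, |x i - z i| ≤ K' := fun i => by
    refine (Euc.abs_apply_sub_le x z i).trans ?_
    rw [dist_eq_norm]
    refine (norm_sub_le x z).trans ?_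
    have := hK₁ z hz
    linarith [le_abs_self K]
  have hr2 : r ≤ η / 2 := by nlinarith
  rcases le_total |x 1 - z 1| |x 0 - z 0| with h | h
  · exact Or.inr (Or.inl (mem_sector_of_assouadBound (by decide) hSF hxD ht1.le (by linarith) hη0
      hxz.le h (hxK' 0) hr0 hr2 hδ₀0 hr))
  · exact Or.inr (Or.inr (mem_sector_of_assouadBound (by decide) hSF hxD ht1.le (by linarith) hη0
      hxz.le h (hxK' 1) hr0 hr2 hδ₀0 hr))

theorem dimH_exceptional_pins_le {F : Set (Euc 2)} (hbd : Bornology.IsBounded F) :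
    dimH {x : Euc 2 | ¬ min (assouadDim F) 1 ≤ assouadDim (pinnedDistSet x F)} ≤ 1 := by
  refine ENNReal.le_of_forall_pos_le_add fun κ hκ _ => ?_
  have hsub : {x : Euc 2 | ¬ min (assouadDim F) 1 ≤ assouadDim (pinnedDistSet x F)} ⊆
      ⋃ q : {t : ℚ // 0 ≤ t ∧ (t : ℝ) < min (assouadDim F) 1} × {C : ℕ // 1 ≤ C} × ℕ,
        {x : Euc 2 | ‖x‖ ≤ q.2.2 ∧ AssouadBound (pinnedDistSet x F) (q.1.1 : ℝ) (q.2.1.1 : ℝ)} := by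
    intro x hx
    obtain ⟨t, C, ht0, ht, hC, hD⟩ := exists_assouadBound_of_lt (not_le.1 hx)
    obtain ⟨K, hK⟩ := exists_nat_ge ‖x‖
    exact mem_iUnion.2 ⟨(⟨t, ht0, ht⟩, ⟨C, hC⟩, K), hK, hD⟩
  refine (dimH_mono hsub).trans ?_
  rw [dimH_iUnion]
  refine iSup_le fun ⟨⟨t, ht0, ht⟩, ⟨C, hC⟩, K⟩ => ?_
  refine (dimH_pins_le hbd (by exact_mod_cast ht0) (ht.trans_le (min_le_right _ _))
    (ht.trans_le (min_le_left _ _)) (by exact_mod_cast hC) hκ).trans (le_of_eq ?_)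
  push_cast
  rfl

theorem AssouadBound.dimH_le {X : Type*} [MetricSpace X] {F : Set X} (hne : F.Nonempty)
    (hbd : Bornology.IsBounded F) {α C : ℝ} (hα : 0 ≤ α) (h : AssouadBound F α C) :
    dimH F ≤ ENNReal.ofReal α := by
  obtain ⟨z, hz⟩ := hne
  obtain ⟨R, hR⟩ := hbd.subset_closedBall z
  lift α to ℝ≥0 using hα
  rw [ENNReal.ofReal_coe_nnreal]
  refine dimH_le_of_coverSum (ρ := fun k => (1 / 2) ^ k)
    (B := C * (|R| + 2) ^ (α : ℝ))
    (tendsto_pow_atTop_nhds_zero_of_lt_one (by norm_num) (by norm_num)) fun k => ?_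
  have hk : (0 : ℝ) < (1 / 2) ^ k := by positivity
  have hk1 : (1 / 2 : ℝ) ^ k ≤ 1 := pow_le_one₀ (by norm_num) (by norm_num)
  obtain ⟨𝒰, h1, h2, h3⟩ := h z hz ((1 / 2) ^ k) (|R| + 2) hk (by linarith [abs_nonneg R])
  refine (coverSum_of_card α.2 hk.le 𝒰 le_rfl ?_ h2).mono subset_rfl le_rfl ?_
  · refine (subset_inter subset_rfl (hR.trans (closedBall_subset_closedBall ?_))).trans h1
    linarith [le_abs_self R]
  · calc (𝒰.card : ℝ) * ((1 / 2) ^ k) ^ (α : ℝ)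
        ≤ C * ((|R| + 2) / (1 / 2) ^ k) ^ (α : ℝ) * ((1 / 2) ^ k) ^ (α : ℝ) := by gcongr
      _ = C * (|R| + 2) ^ (α : ℝ) := by
        rw [mul_assoc, ← Real.mul_rpow (by positivity) hk.le, div_mul_cancel₀ _ hk.ne']

theorem one_le_assouadDim {F : Set (Euc 2)} (hne : F.Nonempty) (hbd : Bornology.IsBounded F)
    (h : 1 < dimH F) : 1 ≤ assouadDim F := by
  rw [assouadDim_eq_sInf]
  refine le_csInf ⟨2, zero_le_two, 25, by norm_num, assouadBound_plane F⟩ ?_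
  rintro α ⟨hα, C, -, hb⟩
  have := h.le.trans (hb.dimH_le hne hbd hα)
  rwa [ENNReal.one_le_ofReal] at this

end Pins

/-- **Corollary 3.7**: for non-empty bounded `F ⊆ ℝ²`,
`dim_A D_x(F) ≥ min{dim_A F, 1}` for all `x` outside a set of Hausdorff dimension at most
`1`; hence if `dim_H F > 1` there is a pin `x ∈ F` with `dim_A D_x(F) = 1`. -/
theorem assouad_pinned_distance_planar (F : Set (Euc 2)) (hne : F.Nonempty)
    (hbd : Bornology.IsBounded F) :
    dimH {x : Euc 2 | ¬ min (assouadDim F) 1 ≤ assouadDim (pinnedDistSet x F)} ≤ 1 ∧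
    (1 < dimH F → ∃ x ∈ F, assouadDim (pinnedDistSet x F) = 1) := by
  refine ⟨dimH_exceptional_pins_le hbd, fun h => ?_⟩
  by_contra hcon
  push Not at hcon
  refine absurd (dimH_exceptional_pins_le hbd) (not_le.2 (h.trans_le (dimH_mono fun x hx => ?_)))
  intro hle
  rw [min_eq_right (one_le_assouadDim hne hbd h)] at hle
  exact hcon x hx (le_antisymm ((assouadBound_real _).assouadDim_le zero_le_one (by norm_num)) hle)

end
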